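/- (Siegel–Walfisz theorem) Let A > 0 be fixed. There exists a constant C(A) > 0 such that for all integers q ≥ 1 and a with gcd(a,q) = 1 and all real x ≥ 2, |π(x;q,a) − (1/φ(q))·∫₂ˣ du/log u| ≤ C(A)·x/(log x)^A. -/

import Mathlib

section Part1
open Finset Complex Filter Topology MeasureTheory

namespace SW

/-- partial sums of a character -/
noncomputable def S {q : ℕ} (χ : DirichletCharacter ℂ q) (u : ℝ) : ℂ :=
  ∑ n ∈ Icc 1 ⌊u⌋₊, χ (n : ZMod q)

/-- mean value of a character -/
noncomputable def dl {q : ℕ} [NeZero q] (χ : DirichletCharacter ℂ q) : ℂ :=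
  (∑ a : ZMod q, χ a) / q

noncomputable def RR {q : ℕ} [NeZero q] (χ : DirichletCharacter ℂ q) (u : ℝ) : ℂ :=
  S χ u - dl χ * u

lemma dl_of_ne_one {q : ℕ} [NeZero q] {χ : DirichletCharacter ℂ q} (h : χ ≠ 1) : dl χ = 0 := by
  simp [dl, MulChar.sum_eq_zero_of_ne_one h]

lemma norm_dl_le {q : ℕ} [NeZero q] (χ : DirichletCharacter ℂ q) : ‖dl χ‖ ≤ 1 := by
  have hq : (0:ℝ) < q := by exact_mod_cast NeZero.pos q
  rw [dl, norm_div, Complex.norm_natCast, div_le_one hq]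
  refine (norm_sum_le _ _).trans ?_
  refine (sum_le_sum fun a _ => χ.norm_le_one a).trans ?_
  simp [ZMod.card]

lemma sum_range_period {q : ℕ} [NeZero q] (χ : DirichletCharacter ℂ q) :
    ∑ n ∈ range q, χ (n : ZMod q) = ∑ a : ZMod q, χ a := by
  refine Finset.sum_bij (fun n _ => (n : ZMod q)) (by simp) ?_ ?_ (by simp)
  · intro a ha b hb h
    have := (ZMod.natCast_eq_natCast_iff' a b q).1 h
    rwa [Nat.mod_eq_of_lt (mem_range.1 ha), Nat.mod_eq_of_lt (mem_range.1 hb)] at this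
  · intro b _
    exact ⟨b.val, mem_range.2 (ZMod.val_lt b), by simp⟩

lemma sum_range_mul_period {q : ℕ} [NeZero q] (χ : DirichletCharacter ℂ q) (m : ℕ) :
    ∑ n ∈ range (q * m), χ (n : ZMod q) = m * ∑ a : ZMod q, χ a := by
  induction m with
  | zero => simp
  | succ k ih =>
    rw [Nat.mul_succ, sum_range_add, ih]
    have : ∀ x ∈ range q, χ ((q * k + x : ℕ) : ZMod q) = χ (x : ZMod q) := by
      intro x _; push_cast; simp
    rw [sum_congr rfl this, sum_range_period]
    push_cast; ring

lemma sum_range_bound {q : ℕ} [NeZero q] (χ : DirichletCharacter ℂ q) (M : ℕ) :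
    ‖∑ n ∈ range M, χ (n : ZMod q) - dl χ * M‖ ≤ 2 * q := by
  have hq : (0:ℝ) < q := by exact_mod_cast NeZero.pos q
  have hq' : (q:ℂ) ≠ 0 := by exact_mod_cast NeZero.ne q
  have hM : M = q * (M / q) + M % q := (Nat.div_add_mod M q).symm
  have hr : ((M % q : ℕ) : ℝ) ≤ q := by exact_mod_cast (Nat.mod_lt M (NeZero.pos q)).le
  have e : ∑ n ∈ range M, χ (n : ZMod q) - dl χ * M =
      ∑ x ∈ range (M % q), χ ((q * (M / q) + x : ℕ) : ZMod q) - dl χ * (M % q : ℕ) := by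
    conv_lhs => rw [hM]
    rw [sum_range_add, sum_range_mul_period, dl]
    push_cast
    field_simp
    ring
  rw [e]
  refine (norm_sub_le _ _).trans ?_
  have h1 : ‖∑ x ∈ range (M % q), χ ((q * (M / q) + x : ℕ) : ZMod q)‖ ≤ q := by
    refine (norm_sum_le _ _).trans ((sum_le_sum fun a _ => χ.norm_le_one _).trans ?_)
    simpa using hr
  have h2 : ‖dl χ * (M % q : ℕ)‖ ≤ q := by
    rw [norm_mul, Complex.norm_natCast]
    calc _ ≤ 1 * ((M % q : ℕ) : ℝ) := by gcongr; exact norm_dl_le χ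
      _ ≤ q := by simpa using hr
  linarith

lemma RR_bound {q : ℕ} [NeZero q] (χ : DirichletCharacter ℂ q) {u : ℝ} (hu : 0 ≤ u) :
    ‖RR χ u‖ ≤ 4 * q := by
  have hq : (1:ℝ) ≤ q := by exact_mod_cast NeZero.one_le
  have e : S χ u = ∑ n ∈ range (⌊u⌋₊ + 1), χ (n : ZMod q) - χ ((0:ℕ) : ZMod q) := by
    rw [S]
    generalize ⌊u⌋₊ = M
    induction M with
    | zero => simp
    | succ k ih => rw [Finset.sum_Icc_succ_top (by omega), ih, Finset.sum_range_succ _ (k + 1)]; ring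
  have h1 := sum_range_bound χ (⌊u⌋₊ + 1)
  have e2 : RR χ u = (∑ n ∈ range (⌊u⌋₊ + 1), χ (n : ZMod q) - dl χ * (⌊u⌋₊ + 1 : ℕ))
      - χ ((0:ℕ) : ZMod q) + dl χ * ((⌊u⌋₊ + 1 - u : ℝ) : ℂ) := by
    rw [RR, e]; push_cast; ring
  rw [e2]
  have h2 : ‖χ ((0:ℕ) : ZMod q)‖ ≤ 1 := χ.norm_le_one _
  have h3 : ‖dl χ * ((⌊u⌋₊ + 1 - u : ℝ) : ℂ)‖ ≤ 1 := by
    rw [norm_mul, Complex.norm_real, Real.norm_of_nonneg (by linarith [Nat.lt_floor_add_one u])]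
    have := Nat.floor_le hu
    have h4 := Nat.lt_floor_add_one u
    exact mul_le_one₀ (norm_dl_le χ) (by linarith) (by linarith)
  calc _ ≤ 2 * (q:ℝ) + 1 + 1 := (norm_add_le _ _).trans (add_le_add ((norm_sub_le _ _).trans (add_le_add h1 h2)) h3)
    _ ≤ _ := by linarith

lemma measurable_S {q : ℕ} (χ : DirichletCharacter ℂ q) : Measurable (S χ) :=
  (measurable_from_nat (f := fun m : ℕ => ∑ n ∈ Icc 1 m, χ (n : ZMod q))).comp Nat.measurable_floor

lemma measurable_RR {q : ℕ} [NeZero q] (χ : DirichletCharacter ℂ q) : Measurable (RR χ) :=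
  (measurable_S χ).sub (measurable_const.mul Complex.measurable_ofReal)

lemma norm_RR_mul {q : ℕ} [NeZero q] (χ : DirichletCharacter ℂ q) (s : ℂ) {u : ℝ} (hu : 0 < u) :
    ‖RR χ u * (u : ℂ) ^ (-(s + 1))‖ ≤ 4 * q * u ^ (-(s.re + 1)) := by
  rw [norm_mul, Complex.norm_cpow_eq_rpow_re_of_pos hu]
  simp only [neg_re, add_re, one_re]
  gcongr
  exact RR_bound χ hu.le

lemma integrableOn_RR {q : ℕ} [NeZero q] (χ : DirichletCharacter ℂ q) {s : ℂ} (hs : 0 < s.re)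
    {a : ℝ} (ha : 0 < a) :
    IntegrableOn (fun u : ℝ => RR χ u * (u : ℂ) ^ (-(s + 1))) (Set.Ioi a) := by
  refine Integrable.mono' (g := fun u => 4 * q * u ^ (-(s.re + 1))) ?_ ?_ ?_
  · exact (integrableOn_Ioi_rpow_of_lt (by linarith) ha).const_mul _
  · refine AEStronglyMeasurable.mul (measurable_RR χ).aestronglyMeasurable ?_
    refine ContinuousOn.aestronglyMeasurable ?_ measurableSet_Ioi
    intro u hu
    refine ContinuousAt.continuousWithinAt ?_
    exact Complex.continuousAt_ofReal_cpow_const u _ (Or.inr (ha.trans hu).ne')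
  · filter_upwards [ae_restrict_mem measurableSet_Ioi] with u hu
    exact norm_RR_mul χ s (ha.trans hu)

/-- regular part of the L-function -/
noncomputable def J {q : ℕ} [NeZero q] (χ : DirichletCharacter ℂ q) (s : ℂ) : ℂ :=
  dl χ + s * ∫ u in Set.Ioi (1:ℝ), RR χ u * (u : ℂ) ^ (-(s + 1))

lemma LFunction_eq_J_of_one_lt {q : ℕ} [NeZero q] (χ : DirichletCharacter ℂ q) {s : ℂ}
    (hs : 1 < s.re) : χ.LFunction s = J χ s + dl χ / (s - 1) := by
  have hs1 : s - 1 ≠ 0 := by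
    intro h; have := congrArg Complex.re h; simp at this; linarith
  rw [DirichletCharacter.LFunction_eq_LSeries χ hs]
  rw [LSeries_eq_mul_integral (fun n => χ (n : ZMod q)) zero_le_one hs
    (DirichletCharacter.LSeriesSummable_of_one_lt_re χ hs)]
  · have h1 : ∀ u ∈ Set.Ioi (1:ℝ), (∑ k ∈ Icc 1 ⌊u⌋₊, χ (k : ZMod q)) * (u:ℂ) ^ (-(s + 1)) =
        RR χ u * (u : ℂ) ^ (-(s + 1)) + dl χ * (u : ℂ) ^ (-s) := by
      intro u hu
      have hu0 : (u:ℂ) ≠ 0 := by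
        exact_mod_cast (zero_lt_one.trans hu).ne'
      have : (u:ℂ) ^ (-s) = u * (u:ℂ) ^ (-(s+1)) := by
        rw [show -s = 1 + (-(s+1)) by ring, Complex.cpow_add _ _ hu0, Complex.cpow_one]
      rw [RR, S, this]; ring
    rw [setIntegral_congr_fun measurableSet_Ioi h1]
    have hi := integrableOn_Ioi_cpow_of_lt (a := -s) (c := 1) (by simpa using hs) one_pos
    rw [integral_add (integrableOn_RR χ (by linarith) one_pos) (hi.const_mul _),
      integral_const_mul, integral_Ioi_cpow_of_lt (by simpa using hs) one_pos, J]
    have : -s + 1 ≠ 0 := by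
      intro h; apply hs1; linear_combination -h
    simp only [ofReal_one, one_cpow]
    field_simp
    ring
  · refine Asymptotics.isBigO_of_le _ fun n => ?_
    refine (norm_sum_le _ _).trans ((sum_le_sum fun a _ => χ.norm_le_one _).trans ?_)
    simp

lemma differentiableAt_J {q : ℕ} [NeZero q] (χ : DirichletCharacter ℂ q) {s : ℂ}
    (hs : 0 < s.re) : DifferentiableAt ℂ (J χ) s := by
  have e : J χ = fun s => dl χ + s * mellin (Set.indicator (Set.Ioi 1) (RR χ)) (-s) := by
    funext s
    rw [J, mellin]
    congr 2
    have : ∀ u ∈ Set.Ioi (0:ℝ), (u:ℂ) ^ (-s - 1) • Set.indicator (Set.Ioi 1) (RR χ) u =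
        Set.indicator (Set.Ioi 1) (fun u : ℝ => RR χ u * (u:ℂ) ^ (-(s+1))) u := by
      intro u _
      by_cases h : u ∈ Set.Ioi (1:ℝ)
      · simp only [Set.indicator_of_mem h, smul_eq_mul]; rw [mul_comm]; congr 2; ring
      · simp only [Set.indicator_of_notMem h, smul_zero]
    rw [setIntegral_congr_fun measurableSet_Ioi this, setIntegral_indicator measurableSet_Ioi]
    congr 2
    ext u; simp only [Set.mem_inter_iff, Set.mem_Ioi]
    constructor
    · intro h; exact ⟨by linarith, h⟩
    · exact fun h => h.2
  rw [e]
  have key : DifferentiableAt ℂ (mellin (Set.indicator (Set.Ioi 1) (RR χ))) (-s) := by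
    refine mellin_differentiableAt_of_isBigO_rpow (a := 0) (b := -s.re - 1) ?_ ?_ ?_ ?_ ?_
    · refine LocallyIntegrable.locallyIntegrableOn ?_ _
      refine LocallyIntegrable.mono (locallyIntegrable_const (4 * (q:ℝ)))
        ((measurable_RR χ).indicator measurableSet_Ioi).aestronglyMeasurable ?_
      refine Filter.Eventually.of_forall fun u => ?_
      rw [Real.norm_of_nonneg (by positivity)]
      by_cases h : u ∈ Set.Ioi (1:ℝ)
      · simp only [Set.indicator_of_mem h]; exact RR_bound χ (zero_le_one.trans (le_of_lt h))
      · simp only [Set.indicator_of_notMem h, norm_zero]; positivity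
    · refine Asymptotics.IsBigO.of_bound (4 * q) ?_
      filter_upwards with u
      simp only [neg_zero, Real.rpow_zero, norm_one, mul_one]
      by_cases h : u ∈ Set.Ioi (1:ℝ)
      · simp only [Set.indicator_of_mem h]; exact RR_bound χ (zero_le_one.trans (le_of_lt h))
      · simp only [Set.indicator_of_notMem h, norm_zero]; positivity
    · simpa using hs
    · refine Asymptotics.IsBigO.of_bound 1 ?_
      have : Set.Iio (1:ℝ) ∈ 𝓝[>] (0:ℝ) := mem_nhdsWithin_of_mem_nhds (Iio_mem_nhds one_pos)
      filter_upwards [this] with u hu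
      have h : u ∉ Set.Ioi (1:ℝ) := by simpa using (le_of_lt hu)
      simp only [Set.indicator_of_notMem h, norm_zero]; positivity
    · simp
  have k2 : DifferentiableAt ℂ (fun s => mellin (Set.indicator (Set.Ioi 1) (RR χ)) (-s)) s :=
    DifferentiableAt.comp (g := mellin (Set.indicator (Set.Ioi 1) (RR χ))) s key
      differentiableAt_id.neg
  exact (differentiableAt_const _).add (differentiableAt_id.mul k2)

lemma isPreconnected_re : IsPreconnected {s : ℂ | 0 < s.re} :=
  (convex_halfSpace_re_gt 0).isPreconnected

lemma eqOn_re {f g : ℂ → ℂ} (hf : DifferentiableOn ℂ f {s | 0 < s.re})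
    (hg : DifferentiableOn ℂ g {s | 0 < s.re}) (h : ∀ s : ℂ, 1 < s.re → f s = g s) :
    ∀ s : ℂ, 0 < s.re → f s = g s := by
  have ho : IsOpen {s : ℂ | 0 < s.re} := isOpen_lt continuous_const continuous_re
  have ho1 : IsOpen {s : ℂ | 1 < s.re} := isOpen_lt continuous_const continuous_re
  have := (hf.analyticOnNhd ho).eqOn_of_preconnected_of_eventuallyEq (hg.analyticOnNhd ho)
    isPreconnected_re (z₀ := 2) (by simp)
    (by filter_upwards [ho1.mem_nhds (x := (2:ℂ)) (by simp)] with s hs using h s hs)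
  exact fun s hs => this hs

lemma LFunction_eq_J {q : ℕ} [NeZero q] (χ : DirichletCharacter ℂ q) {s : ℂ}
    (hs : 0 < s.re) (h : s ≠ 1 ∨ χ ≠ 1) : χ.LFunction s = J χ s + dl χ / (s - 1) := by
  by_cases hχ : χ = 1
  · have hs1 : s ≠ 1 := by rcases h with h | h; exact h; exact absurd hχ h
    have hs2 : s - 1 ≠ 0 := sub_ne_zero.2 hs1
    have := eqOn_re (f := DirichletCharacter.LFunctionTrivChar₁ q)
      (g := fun s => (s - 1) * J χ s + dl χ)
      (DirichletCharacter.differentiable_LFunctionTrivChar₁ q).differentiableOn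
      (fun z hz => (((differentiableAt_id.sub_const 1).mul (differentiableAt_J χ hz)).add_const
        _).differentiableWithinAt) ?_ s hs
    · rw [DirichletCharacter.LFunctionTrivChar₁, Function.update_of_ne hs1] at this
      subst hχ
      change DirichletCharacter.LFunctionTrivChar q s = _
      field_simp
      linear_combination this
    · intro z hz
      have hz1 : z ≠ 1 := by rintro rfl; simp at hz
      have hz2 : z - 1 ≠ 0 := sub_ne_zero.2 hz1
      have e := LFunction_eq_J_of_one_lt χ hz
      rw [DirichletCharacter.LFunctionTrivChar₁, Function.update_of_ne hz1]
      subst hχ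
      change DirichletCharacter.LFunctionTrivChar q z = _ at e
      rw [e]; field_simp
  · rw [dl_of_ne_one hχ, zero_div, add_zero]
    refine eqOn_re (DirichletCharacter.differentiable_LFunction hχ).differentiableOn
      (fun z hz => (differentiableAt_J χ hz).differentiableWithinAt) ?_ s hs
    intro z hz
    rw [LFunction_eq_J_of_one_lt χ hz, dl_of_ne_one hχ, zero_div, add_zero]

/-- crude bound -/
lemma norm_J_le {q : ℕ} [NeZero q] (χ : DirichletCharacter ℂ q) {s : ℂ} (hs : 1 / 2 ≤ s.re) :
    ‖J χ s‖ ≤ 1 + 8 * ‖s‖ * q := by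
  have hs0 : 0 < s.re := by linarith
  have h1 : ‖∫ u in Set.Ioi (1:ℝ), RR χ u * (u : ℂ) ^ (-(s + 1))‖ ≤ 8 * q := by
    calc _ ≤ ∫ u in Set.Ioi (1:ℝ), 4 * q * u ^ (-(s.re + 1)) := by
            refine norm_integral_le_of_norm_le
              ((integrableOn_Ioi_rpow_of_lt (by linarith) one_pos).const_mul _) ?_
            filter_upwards [ae_restrict_mem measurableSet_Ioi] with u hu
            exact norm_RR_mul χ s (one_pos.trans hu)
      _ = 4 * q * (1 / s.re) := by
            rw [integral_const_mul, integral_Ioi_rpow_of_lt (by linarith) one_pos]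
            simp
      _ ≤ 4 * q * 2 := by
            gcongr
            rw [div_le_iff₀ hs0]; linarith
      _ = _ := by ring
  calc ‖J χ s‖ ≤ ‖dl χ‖ + ‖s‖ * ‖∫ u in Set.Ioi (1:ℝ), RR χ u * (u : ℂ) ^ (-(s + 1))‖ := by
        rw [J, ← norm_mul]; exact norm_add_le _ _
    _ ≤ 1 + ‖s‖ * (8 * q) := by gcongr; exact norm_dl_le χ
    _ = _ := by ring

end SW
end Part1

section Part2
open Finset Complex Filter Topology MeasureTheory

namespace SW

lemma integral_S_eq {q : ℕ} (χ : DirichletCharacter ℂ q) {s : ℂ} (hs : 0 < s.re)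
    {N : ℝ} (hN : 1 ≤ N) :
    s * ∫ u in Set.Ioc (1:ℝ) N, S χ u * (u : ℂ) ^ (-(s + 1)) =
      ∑ n ∈ Icc 1 ⌊N⌋₊, (n : ℂ) ^ (-s) * χ (n : ZMod q) - (N : ℂ) ^ (-s) * S χ N := by
  have hs0 : s ≠ 0 := by rintro rfl; simp at hs
  set c : ℕ → ℂ := fun n => if n = 0 then 0 else χ (n : ZMod q) with hc
  have hsum : ∀ (M : ℕ) (g : ℕ → ℂ), ∑ k ∈ Icc 0 M, g k * c k = ∑ k ∈ Icc 1 M, g k * χ (k : ZMod q) := by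
    intro M g
    rw [Icc_eq_cons_Ioc (Nat.zero_le _), sum_cons]
    simp only [hc, if_true, mul_zero, zero_add]
    refine sum_congr rfl fun k hk => ?_
    rw [if_neg (by have := (mem_Ioc.1 hk).1; omega)]
  have hsum1 : ∀ (M : ℕ), ∑ k ∈ Icc 0 M, c k = ∑ k ∈ Icc 1 M, χ (k : ZMod q) := by
    intro M; simpa using hsum M (fun _ => 1)
  have hd : ∀ t : ℝ, 0 < t → HasDerivAt (fun t : ℝ => (t:ℂ) ^ (-s)) (-s * (t:ℂ) ^ (-(s+1))) t := by
    intro t ht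
    have := hasDerivAt_ofReal_cpow_const' ht.ne' (r := -s - 1) (by
      intro h; apply hs0; linear_combination -h)
    have h2 := this.const_mul (-s)
    have e1 : (fun t : ℝ => (t:ℂ) ^ (-s)) = fun y : ℝ => -s * ((y:ℂ) ^ (-s - 1 + 1) / (-s - 1 + 1)) := by
      funext y; have : -s - 1 + 1 = -s := by ring
      rw [this]; field_simp
    have e2 : -(s + 1) = -s - 1 := by ring
    rw [e1, e2]; exact h2
  have hdd : ∀ t ∈ Set.Icc 1 N, deriv (fun t : ℝ => (t:ℂ) ^ (-s)) t = -s * (t:ℂ) ^ (-(s+1)) :=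
    fun t ht => (hd t (by linarith [ht.1])).deriv
  have key := sum_mul_eq_sub_integral_mul₀ (f := fun t : ℝ => (t:ℂ) ^ (-s)) c (by simp [hc]) N
    (fun t ht => (hd t (by linarith [ht.1])).differentiableAt) (by
      refine IntegrableOn.congr_fun (f := fun t : ℝ => -s * (t:ℂ) ^ (-(s+1))) ?_
        (fun t ht => (hdd t ht).symm) measurableSet_Icc
      refine ContinuousOn.integrableOn_Icc ?_
      intro u hu
      refine ContinuousAt.continuousWithinAt (continuousAt_const.mul ?_)
      exact Complex.continuousAt_ofReal_cpow_const u _ (Or.inr (by linarith [hu.1])))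
  simp only [ofReal_natCast] at key
  rw [hsum, hsum1] at key
  rw [key, S]
  have e : ∫ t in Set.Ioc 1 N, deriv (fun t : ℝ => (t:ℂ) ^ (-s)) t * ∑ k ∈ Icc 0 ⌊t⌋₊, c k =
      -s * ∫ u in Set.Ioc (1:ℝ) N, S χ u * (u : ℂ) ^ (-(s + 1)) := by
    rw [← integral_const_mul]
    refine setIntegral_congr_fun measurableSet_Ioc fun t ht => ?_
    rw [hdd t ⟨ht.1.le, ht.2⟩, hsum1, S]; ring
  rw [e]; simp only [S]; ring

lemma norm_S_le {q : ℕ} (χ : DirichletCharacter ℂ q) {u : ℝ} (hu : 0 ≤ u) : ‖S χ u‖ ≤ u := by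
  refine (norm_sum_le _ _).trans ((sum_le_sum fun a _ => χ.norm_le_one _).trans ?_)
  simpa using Nat.floor_le hu

lemma J_bound {ε : ℝ} (hε : 0 < ε) (hε2 : ε ≤ 1 / 2) : ∃ C : ℝ, 1 ≤ C ∧
    ∀ (q : ℕ) [NeZero q] (χ : DirichletCharacter ℂ q) (s : ℂ), 1 - ε ≤ s.re → s.re ≤ 3 →
      ‖J χ s‖ ≤ C * (q * (|s.im| + 2)) ^ (2 * ε) := by
  have hsm : Summable (fun n : ℕ => (n:ℝ) ^ (-(1 + ε))) := by
    rw [Real.summable_nat_rpow]; linarith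
  set Z := ∑' n : ℕ, (n:ℝ) ^ (-(1 + ε)) with hZ
  have hZ0 : 0 ≤ Z := tsum_nonneg fun n => by positivity
  refine ⟨1 + 24 + Z + 1 + (4 / ε + 4), by have : 0 < 4 / ε := by positivity
                                           linarith, ?_⟩
  intro q _ χ s h1 h3
  set N : ℝ := q * (|s.im| + 2) with hN
  have hq : (1:ℝ) ≤ q := by exact_mod_cast NeZero.one_le
  have ht := abs_nonneg s.im
  have hN2 : 2 ≤ N := by nlinarith
  have hN0 : 0 < N := by linarith
  have hN1 : 1 ≤ N := by linarith
  have hs0 : 0 < s.re := by linarith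
  have hsn : s ≠ 0 := by rintro rfl; simp at hs0
  have hNp : 1 ≤ N ^ (2 * ε) := Real.one_le_rpow hN1 (by linarith)
  have hNe : N ^ (1 - s.re) ≤ N ^ (2 * ε) := Real.rpow_le_rpow_of_exponent_le hN1 (by linarith)
  have hns : ‖s‖ ≤ 3 + |s.im| := by
    refine (Complex.norm_le_abs_re_add_abs_im s).trans ?_
    rw [abs_of_pos hs0]; linarith
  have hI := integrableOn_RR χ hs0 one_pos
  have split : ∫ u in Set.Ioi (1:ℝ), RR χ u * (u : ℂ) ^ (-(s + 1)) =
      (∫ u in Set.Ioc (1:ℝ) N, RR χ u * (u : ℂ) ^ (-(s + 1))) +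
      ∫ u in Set.Ioi N, RR χ u * (u : ℂ) ^ (-(s + 1)) := by
    rw [← setIntegral_union (Set.Ioc_disjoint_Ioi le_rfl) measurableSet_Ioi
      (hI.mono_set Set.Ioc_subset_Ioi_self) (hI.mono_set (Set.Ioi_subset_Ioi hN1)),
      Set.Ioc_union_Ioi_eq_Ioi hN1]
  -- the power function
  have hcu : ∀ z : ℂ, IntegrableOn (fun u : ℝ => (u:ℂ) ^ z) (Set.Ioc 1 N) := by
    intro z
    refine (ContinuousOn.integrableOn_Icc ?_).mono_set Set.Ioc_subset_Icc_self
    intro u hu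
    refine ContinuousAt.continuousWithinAt ?_
    exact Complex.continuousAt_ofReal_cpow_const u _ (Or.inr (by linarith [hu.1]))
  have hu1 : ∀ u ∈ Set.Ioc (1:ℝ) N, RR χ u * (u : ℂ) ^ (-(s + 1)) + dl χ * (u:ℂ) ^ (-s) =
      S χ u * (u : ℂ) ^ (-(s + 1)) := by
    intro u hu
    have hu0 : (u:ℂ) ≠ 0 := by exact_mod_cast (zero_lt_one.trans hu.1).ne'
    have : (u:ℂ) ^ (-s) = u * (u:ℂ) ^ (-(s+1)) := by
      rw [show -s = 1 + (-(s+1)) by ring, Complex.cpow_add _ _ hu0, Complex.cpow_one]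
    rw [RR, this]; ring
  have split2 : ∫ u in Set.Ioc (1:ℝ) N, RR χ u * (u : ℂ) ^ (-(s + 1)) =
      (∫ u in Set.Ioc (1:ℝ) N, S χ u * (u : ℂ) ^ (-(s + 1))) -
      dl χ * ∫ u in Set.Ioc (1:ℝ) N, (u : ℂ) ^ (-s) := by
    rw [← setIntegral_congr_fun measurableSet_Ioc hu1,
      integral_add (hI.mono_set Set.Ioc_subset_Ioi_self) ((hcu _).const_mul _),
      integral_const_mul]
    ring
  have tail : ‖s * ∫ u in Set.Ioi N, RR χ u * (u : ℂ) ^ (-(s + 1))‖ ≤ 24 * N ^ (2 * ε) := by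
    have : ‖∫ u in Set.Ioi N, RR χ u * (u : ℂ) ^ (-(s + 1))‖ ≤ 4 * q * (N ^ (-s.re) / s.re) := by
      calc _ ≤ ∫ u in Set.Ioi N, 4 * q * u ^ (-(s.re + 1)) := by
            refine norm_integral_le_of_norm_le
              ((integrableOn_Ioi_rpow_of_lt (by linarith) hN0).const_mul _) ?_
            filter_upwards [ae_restrict_mem measurableSet_Ioi] with u hu
            exact norm_RR_mul χ s (hN0.trans hu)
        _ = _ := by
            rw [integral_const_mul, integral_Ioi_rpow_of_lt (by linarith) hN0]
            have : -(s.re + 1) + 1 = -s.re := by ring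
            rw [this]; congr 1; field_simp
    rw [norm_mul]
    have h5 : N ^ (-s.re) / s.re ≤ 2 * N ^ (-s.re) := by
      rw [div_le_iff₀ hs0]
      have : 0 < N ^ (-s.re) := by positivity
      nlinarith
    have h6 : ‖s‖ * q ≤ 3 * N := by
      rw [hN]
      have : ‖s‖ ≤ 3 * (|s.im| + 2) := by linarith
      nlinarith
    calc _ ≤ ‖s‖ * (4 * q * (2 * N ^ (-s.re))) := by gcongr; exact this.trans (by gcongr)
      _ = 8 * (‖s‖ * q) * N ^ (-s.re) := by ring
      _ ≤ 8 * (3 * N) * N ^ (-s.re) := by gcongr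
      _ = 24 * (N ^ (1:ℝ) * N ^ (-s.re)) := by rw [Real.rpow_one]; ring
      _ = 24 * N ^ (1 - s.re) := by rw [← Real.rpow_add hN0]; rfl
      _ ≤ _ := by gcongr
  have main1 : ‖s * ∫ u in Set.Ioc (1:ℝ) N, S χ u * (u : ℂ) ^ (-(s + 1))‖ ≤ (Z + 1) * N ^ (2 * ε) := by
    rw [integral_S_eq χ hs0 hN1]
    refine (norm_sub_le _ _).trans ?_
    have a1 : ‖∑ n ∈ Icc 1 ⌊N⌋₊, (n : ℂ) ^ (-s) * χ (n : ZMod q)‖ ≤ Z * N ^ (2 * ε) := by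
      calc _ ≤ ∑ n ∈ Icc 1 ⌊N⌋₊, (n:ℝ) ^ (-(1 + ε)) * N ^ (2 * ε) := by
            refine (norm_sum_le _ _).trans (sum_le_sum fun n hn => ?_)
            have hn1 : 1 ≤ n := (mem_Icc.1 hn).1
            have hn1' : (1:ℝ) ≤ n := by exact_mod_cast hn1
            have hn0 : (0:ℝ) < n := by linarith
            have hnN : (n:ℝ) ≤ N := (Nat.cast_le.2 (mem_Icc.1 hn).2).trans (Nat.floor_le hN0.le)
            rw [norm_mul, ← ofReal_natCast, Complex.norm_cpow_eq_rpow_re_of_pos hn0]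
            calc (n:ℝ) ^ (-s).re * ‖χ (n : ZMod q)‖ ≤ (n:ℝ) ^ (-(1+ε) + 2 * ε) * 1 := by
                  gcongr
                  · simp; linarith
                  · exact χ.norm_le_one _
              _ = (n:ℝ) ^ (-(1 + ε)) * (n:ℝ) ^ (2 * ε) := by rw [mul_one, Real.rpow_add hn0]
              _ ≤ _ := by gcongr
        _ = (∑ n ∈ Icc 1 ⌊N⌋₊, (n:ℝ) ^ (-(1 + ε))) * N ^ (2 * ε) := by rw [sum_mul]
        _ ≤ _ := by
            gcongr
            exact hsm.sum_le_tsum _ (fun n _ => by positivity)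
    have a2 : ‖(N : ℂ) ^ (-s) * S χ N‖ ≤ N ^ (2 * ε) := by
      rw [norm_mul, Complex.norm_cpow_eq_rpow_re_of_pos hN0]
      calc _ ≤ N ^ (-s).re * N := by gcongr; exact norm_S_le χ hN0.le
        _ = N ^ (-s.re) * N ^ (1:ℝ) := by simp
        _ = N ^ (1 - s.re) := by rw [← Real.rpow_add hN0]; congr 1; ring
        _ ≤ _ := hNe
    linarith
  have main2 : ‖s * ∫ u in Set.Ioc (1:ℝ) N, (u : ℂ) ^ (-s)‖ ≤ (4 / ε + 4) * N ^ (2 * ε) := by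
    rcases le_total |s.im| 1 with h | h
    · have b1 : ‖∫ u in Set.Ioc (1:ℝ) N, (u : ℂ) ^ (-s)‖ ≤ N ^ (2 * ε) * (1 / ε) := by
        have hint : IntegrableOn (fun u : ℝ => u ^ (-(1 + ε))) (Set.Ioi 1) :=
          integrableOn_Ioi_rpow_of_lt (by linarith) one_pos
        calc _ ≤ ∫ u in Set.Ioc (1:ℝ) N, N ^ (2 * ε) * u ^ (-(1 + ε)) := by
              refine norm_integral_le_of_norm_le
                ((hint.mono_set Set.Ioc_subset_Ioi_self).const_mul _) ?_
              filter_upwards [ae_restrict_mem measurableSet_Ioc] with u hu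
              have hu0 : 0 < u := by linarith [hu.1]
              rw [Complex.norm_cpow_eq_rpow_re_of_pos hu0]
              calc u ^ (-s).re ≤ u ^ (2 * ε + (-(1 + ε))) := by
                    gcongr
                    · exact hu.1.le
                    · simp; linarith
                _ = u ^ (2 * ε) * u ^ (-(1 + ε)) := Real.rpow_add hu0 _ _
                _ ≤ _ := by gcongr; exact hu.2
          _ = N ^ (2 * ε) * ∫ u in Set.Ioc (1:ℝ) N, u ^ (-(1 + ε)) := by rw [integral_const_mul]
          _ ≤ N ^ (2 * ε) * ∫ u in Set.Ioi (1:ℝ), u ^ (-(1 + ε)) := by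
              refine mul_le_mul_of_nonneg_left ?_ (by positivity)
              refine setIntegral_mono_set hint ?_ (Eventually.of_forall Set.Ioc_subset_Ioi_self)
              filter_upwards [ae_restrict_mem measurableSet_Ioi] with u hu
              have : (0:ℝ) < u := one_pos.trans hu
              simp only [Pi.zero_apply]; positivity
          _ = _ := by
              rw [integral_Ioi_rpow_of_lt (by linarith) one_pos]
              simp
      rw [norm_mul]
      calc _ ≤ 4 * (N ^ (2 * ε) * (1 / ε)) := by gcongr; linarith
        _ = (4 / ε) * N ^ (2 * ε) := by ring
        _ ≤ _ := by gcongr; linarith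
    · have hs1 : 1 ≤ ‖1 - s‖ := by
        refine h.trans ?_
        have := Complex.abs_im_le_norm (1 - s)
        simpa using this
      have hs1' : (1 - s) ≠ 0 := by intro h0; rw [h0] at hs1; simp at hs1; linarith
      rw [← intervalIntegral.integral_of_le hN1, integral_cpow (Or.inr ⟨by
        intro h0; apply hs1'; rw [neg_inj] at h0; simp [h0], by
        rw [Set.uIcc_of_le hN1]; simp⟩)]
      have e : -s + 1 = 1 - s := by ring
      rw [e, norm_mul, norm_div]
      have b2 : ‖s‖ ≤ 2 * ‖1 - s‖ := by
        have : ‖s‖ ≤ ‖(1:ℂ)‖ + ‖1 - s‖ := by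
          have := norm_sub_le (1:ℂ) (1 - s)
          simpa using this
        simp at this; linarith
      have b3 : ‖(N:ℂ) ^ (1 - s) - ((1:ℝ):ℂ) ^ (1 - s)‖ ≤ 2 * N ^ (2 * ε) := by
        refine (norm_sub_le _ _).trans ?_
        rw [Complex.norm_cpow_eq_rpow_re_of_pos hN0]
        simp only [sub_re, one_re, ofReal_one, one_cpow, norm_one]
        linarith
      have hpos : 0 < ‖1 - s‖ := by linarith
      calc _ ≤ 2 * ‖1 - s‖ * (2 * N ^ (2 * ε) / ‖1 - s‖) := by gcongr
        _ = 4 * N ^ (2 * ε) := by field_simp; ring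
        _ ≤ _ := by
          gcongr
          have : 0 < 4 / ε := by positivity
          linarith
  have e : J χ s = dl χ + (s * ∫ u in Set.Ioc (1:ℝ) N, S χ u * (u : ℂ) ^ (-(s + 1)))
      - dl χ * (s * ∫ u in Set.Ioc (1:ℝ) N, (u : ℂ) ^ (-s))
      + s * ∫ u in Set.Ioi N, RR χ u * (u : ℂ) ^ (-(s + 1)) := by
    rw [J, split, split2]; ring
  rw [e]
  have hd := norm_dl_le χ
  have main2' : ‖dl χ * (s * ∫ u in Set.Ioc (1:ℝ) N, (u : ℂ) ^ (-s))‖ ≤ (4 / ε + 4) * N ^ (2 * ε) := by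
    rw [norm_mul]
    calc _ ≤ 1 * ((4 / ε + 4) * N ^ (2 * ε)) := by gcongr
      _ = _ := one_mul _
  calc _ ≤ 1 + (Z + 1) * N ^ (2 * ε) + (4 / ε + 4) * N ^ (2 * ε) + 24 * N ^ (2 * ε) :=
        (norm_add_le _ _).trans (add_le_add ((norm_sub_le _ _).trans (add_le_add
          ((norm_add_le _ _).trans (add_le_add hd main1)) main2')) tail)
    _ ≤ _ := by nlinarith

end SW
end Part2

section Part3
open Finset Complex Filter Topology MeasureTheory

namespace SW

open scoped ComplexOrder in
lemma one_le_LSeries_two {f : ℕ → ℂ} (hf : 0 ≤ f) (h1 : f 1 = 1)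
    (hab : LSeries.abscissaOfAbsConv f ≤ 1) : 1 ≤ (LSeries f 2).re := by
  have hs : LSeriesSummable f 2 := by
    apply LSeriesSummable_of_abscissaOfAbsConv_lt_re
    refine lt_of_le_of_lt hab ?_
    norm_num
    exact_mod_cast (by norm_num : (1:ℝ) < 2)
  have h2 := Complex.hasSum_re hs.hasSum
  have h3 : ∀ n, 0 ≤ (LSeries.term f 2 n).re := by
    intro n
    rw [LSeries.term_def]
    split
    · simp
    · rename_i hn
      have : 0 ≤ f n / (n:ℂ)^(2:ℂ) := by
        have h4 : (n:ℂ)^(2:ℂ) = ((n^2 : ℕ) : ℂ) := by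
          push_cast
          exact_mod_cast Complex.cpow_natCast (n:ℂ) 2
        rw [h4]
        have := hf n
        rw [div_eq_mul_inv]
        refine mul_nonneg this ?_
        have h5 : ((((n^2:ℕ):ℝ)⁻¹ : ℝ) : ℂ) = (((n^2:ℕ)):ℂ)⁻¹ := by push_cast; rfl
        rw [← h5]
        exact_mod_cast (by positivity : (0:ℝ) ≤ ((n^2:ℕ):ℝ)⁻¹)
      exact (Complex.le_def.1 this).1
  have h4 := le_hasSum h2 1 (fun n _ => h3 n)
  have h5 : (LSeries.term f 2 1).re = 1 := by
    rw [LSeries.term_def]; simp [h1]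
  rw [h5] at h4
  exact h4

lemma seq_bound {a : ℕ → ℝ} {l w B X : ℝ} (hw : 1 < w) (hw2 : w ≤ 5/4) (hB : 1 ≤ B)
    (h0 : 1 - l ≤ a 0) (hn : ∀ n, -l ≤ a n) (hb : ∀ n, |a n| ≤ 4*B*(2/3)^n)
    (hsum : HasSum (fun n => a n * w^n) X) (hX : X ≤ l/(w-1)) :
    (w-1)/2 ≤ l * (Real.exp 1 * (48*B)^(6*(w-1))) := by
  obtain ⟨M, hM⟩ : ∃ M : ℕ, M = ⌈6 * Real.log (48*B)⌉₊ := ⟨_, rfl⟩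
  have hlogpos : 0 < Real.log (48*B) := Real.log_pos (by linarith)
  have hM1 : 6 * Real.log (48*B) ≤ M := by rw [hM]; exact Nat.le_ceil _
  have hM2 : (M:ℝ) ≤ 6 * Real.log (48*B) + 1 := by
    rw [hM]; exact (Nat.ceil_lt_add_one (by positivity)).le
  have hMpos : 1 ≤ M := by
    rw [hM]; exact Nat.one_le_ceil_iff.2 (by positivity)
  have h56 : (5/6:ℝ)^M ≤ 1/(48*B) := by
    have : (5/6:ℝ) ≤ Real.exp (-(1/6)) := by
      have := Real.add_one_le_exp (-(1/6):ℝ)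
      linarith
    calc (5/6:ℝ)^M ≤ (Real.exp (-(1/6)))^M := by gcongr
      _ = Real.exp (-(M/6)) := by rw [← Real.exp_nat_mul]; congr 1; ring
      _ ≤ Real.exp (-Real.log (48*B)) := by
        apply Real.exp_le_exp.2; linarith
      _ = 1/(48*B) := by rw [Real.exp_neg, Real.exp_log (by linarith)]; simp
  have hsplit := hsum.summable.sum_add_tsum_nat_add M
  rw [hsum.tsum_eq] at hsplit
  have hgeo : HasSum (fun n : ℕ => 4*B*(5/6:ℝ)^(n+M)) (24*B*(5/6)^M) := by
    have := (hasSum_geometric_of_lt_one (r := (5/6:ℝ)) (by norm_num) (by norm_num)).mul_left (4*B*(5/6)^M)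
    have e1 : (fun n : ℕ => 4*B*(5/6:ℝ)^(n+M)) = fun n : ℕ => 4*B*(5/6:ℝ)^M * (5/6)^n := by
      funext n; rw [pow_add]; ring
    have e2 : 24*B*(5/6:ℝ)^M = 4*B*(5/6)^M * (1-5/6)⁻¹ := by
      rw [show (1 - 5/6 : ℝ)⁻¹ = 6 by norm_num]; ring
    rw [e1, e2]
    exact this
  have htail : -(24*B*(5/6)^M) ≤ ∑' i, a (i+M) * w^(i+M) := by
    have h1 : HasSum (fun n : ℕ => -(4*B*(5/6:ℝ)^(n+M))) (-(24*B*(5/6)^M)) := hgeo.neg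
    rw [← h1.tsum_eq]
    apply h1.summable.tsum_le_tsum _ ((summable_nat_add_iff M).2 hsum.summable)
    intro n
    have h2 := hb (n+M)
    have h3 : |a (n+M) * w^(n+M)| ≤ 4*B*(5/6:ℝ)^(n+M) := by
      rw [abs_mul, abs_of_pos (by positivity : 0 < w^(n+M))]
      calc |a (n+M)| * w^(n+M) ≤ 4*B*(2/3)^(n+M) * (5/4)^(n+M) := by gcongr
        _ = 4*B*(5/6:ℝ)^(n+M) := by rw [mul_assoc, ← mul_pow]; norm_num
    linarith [neg_abs_le (a (n+M) * w^(n+M))]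
  have htail2 : 24*B*(5/6:ℝ)^M ≤ 1/2 := by
    calc 24*B*(5/6:ℝ)^M ≤ 24*B*(1/(48*B)) := by gcongr
      _ = 1/2 := by field_simp; norm_num
  have hhead : 1 - l * ((w^M - 1)/(w-1)) ≤ ∑ i ∈ range M, a i * w^i := by
    rw [← geom_sum_eq hw.ne']
    obtain ⟨m, rfl⟩ : ∃ m, M = m+1 := ⟨M-1, by omega⟩
    rw [Finset.sum_range_succ', Finset.sum_range_succ', mul_add, mul_sum]
    have : ∑ i ∈ range m, (-(l * w^(i+1))) ≤ ∑ i ∈ range m, a (i+1) * w^(i+1) := by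
      apply sum_le_sum
      intro i _
      have := hn (i+1)
      have h2 : 0 < w^(i+1) := by positivity
      nlinarith
    rw [sum_neg_distrib] at this
    simp
    linarith
  have hw1 : 0 < w - 1 := by linarith
  have key : (w-1)/2 ≤ l * w^M := by
    have h1 : 1/2 - l * ((w^M - 1)/(w-1)) ≤ l/(w-1) := by linarith
    have h2 : l * ((w^M - 1)/(w-1)) = l * (w^M-1)/(w-1) := by ring
    rw [h2, sub_le_iff_le_add, ← add_div, le_div_iff₀ hw1] at h1
    linarith
  have hl : 0 < l := by
    have : 0 < w^M := by positivity
    by_contra h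
    push Not at h
    nlinarith
  refine key.trans ?_
  gcongr
  calc w^M ≤ (Real.exp (w-1))^M := by
        gcongr
        linarith [Real.add_one_le_exp (w-1)]
    _ = Real.exp (M*(w-1)) := by rw [← Real.exp_nat_mul]
    _ ≤ Real.exp (1 + Real.log (48*B) * (6*(w-1))) := by
        apply Real.exp_le_exp.2
        nlinarith
    _ = Real.exp 1 * (48*B)^(6*(w-1)) := by
        rw [Real.exp_add, Real.rpow_def_of_pos (by linarith)]

open scoped ComplexOrder in
lemma siegel_core {P : ℂ → ℂ} {f : ℕ → ℂ} {B σ : ℝ}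
    (hP : DifferentiableOn ℂ P {s | 0 < s.re}) (hf : 0 ≤ f) (h1 : f 1 = 1)
    (hab : LSeries.abscissaOfAbsConv f ≤ 1)
    (hPf : ∀ s : ℂ, 1 < s.re → P s = (s-1) * LSeries f s)
    (hB : 1 ≤ B) (hPB : ∀ s ∈ Metric.closedBall (2:ℂ) (3/2), ‖P s‖ ≤ B)
    (hσ : 3/4 ≤ σ) (hσ1 : σ < 1) (hPσ : 0 ≤ (P σ).re) :
    (1-σ)/2 ≤ (P 1).re * (Real.exp 1 * (48*B)^(6*(1-σ))) := by
  have hopen : IsOpen {s : ℂ | 0 < s.re} := isOpen_lt continuous_const continuous_re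
  have hab2 : LSeries.abscissaOfAbsConv f < (2:ℝ) :=
    lt_of_le_of_lt hab (by exact_mod_cast (by norm_num : (1:ℝ) < 2))
  set E : ℂ → ℂ := dslope P 1 with hE
  have hEd : DifferentiableOn ℂ E {s | 0 < s.re} :=
    (Complex.differentiableOn_dslope (hopen.mem_nhds (by simp))).2 hP
  have hball : Metric.closedBall (2:ℂ) (3/2) ⊆ {s | 0 < s.re} := by
    intro s hs
    have h2 := (abs_re_le_norm (s-2)).trans (mem_closedBall_iff_norm.1 hs)
    have := abs_le.1 h2
    simp at this ⊢
    linarith [this.1]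
  have hEne : ∀ s, s ≠ 1 → E s = (s-1)⁻¹ * (P s - P 1) := by
    intro s hs
    rw [hE, dslope_of_ne _ hs, slope_def_module, smul_eq_mul]
  have hEB : ∀ s ∈ Metric.sphere (2:ℂ) (3/2), ‖E s‖ ≤ 4*B := by
    intro s hs
    have hs' : ‖s - 2‖ = 3/2 := by simpa using mem_sphere_iff_norm.1 hs
    have h3 : 1/2 ≤ ‖s-1‖ := by
      have : ‖s-2‖ ≤ ‖s-1‖ + ‖(1:ℂ)‖ := by
        rw [show s - 2 = (s-1) - 1 by ring]; exact norm_sub_le _ _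
      rw [hs'] at this; simp at this; linarith
    have hne : s ≠ 1 := by rintro rfl; norm_num at h3
    rw [hEne s hne, norm_mul, norm_inv]
    have h4 : ‖P s - P 1‖ ≤ B + B := (norm_sub_le _ _).trans (add_le_add
      (hPB s (Metric.sphere_subset_closedBall hs)) (hPB 1 (by rw [mem_closedBall_iff_norm]; norm_num)))
    have h5 : ‖s-1‖⁻¹ ≤ 2 := by
      rw [inv_le_comm₀ (by linarith) (by norm_num)]; linarith
    calc ‖s-1‖⁻¹ * ‖P s - P 1‖ ≤ 2 * (B+B) := by gcongr
      _ = 4*B := by ring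
  have hcoef : ∀ n, ‖iteratedDeriv n E 2‖ ≤ n.factorial * (4*B) / (3/2)^n := fun n =>
    Complex.norm_iteratedDeriv_le_of_forall_mem_sphere_norm_le n (by norm_num)
      (hEd.diffContOnCl_ball hball) hEB
  -- compute the derivatives near 2
  have hev : E =ᶠ[𝓝 2] (LSeries f - fun s => P 1 * (1 * s - 1)⁻¹) := by
    have : {s : ℂ | 1 < s.re} ∈ 𝓝 (2:ℂ) :=
      (isOpen_lt continuous_const continuous_re).mem_nhds (by simp)
    filter_upwards [this] with s hs
    have hne : s ≠ 1 := by rintro rfl; simp at hs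
    have hne' : s - 1 ≠ 0 := sub_ne_zero.2 hne
    simp only [Pi.sub_apply]
    rw [hEne s hne, hPf s hs, one_mul]
    field_simp
  have hLan : AnalyticAt ℂ (LSeries f) 2 := by
    have := LSeries_analyticOnNhd f
    exact this 2 (by simpa using hab2)
  have hinv : ∀ n : ℕ, iteratedDeriv n (fun s : ℂ => P 1 * (1 * s - 1)⁻¹) 2
      = P 1 * ((-1)^n * n.factorial) := by
    intro n
    rw [iteratedDeriv_const_mul_field, iteratedDeriv_eq_iterate, iter_deriv_inv_linear_sub]
    norm_num
  have hder : ∀ n : ℕ, iteratedDeriv n E 2 = iteratedDeriv n (LSeries f) 2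
      - P 1 * ((-1)^n * n.factorial) := by
    intro n
    rw [hev.iteratedDeriv_eq, iteratedDeriv_sub hLan.contDiffAt, hinv]
    have : AnalyticAt ℂ (fun s : ℂ => P 1 * (1 * s - 1)⁻¹) 2 := by
      apply AnalyticAt.mul analyticAt_const
      apply AnalyticAt.inv
      · fun_prop
      · norm_num
    exact this.contDiffAt
  set a : ℕ → ℝ := fun n => ((-1)^n * iteratedDeriv n E 2 / n.factorial).re with ha
  have hpm : ∀ n : ℕ, ((-1:ℂ)^n) * (-1)^n = 1 := by
    intro n; rw [← mul_pow]; norm_num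
  have haeq : ∀ n : ℕ, a n = ((-1)^n * iteratedDeriv n (LSeries f) 2).re / n.factorial - (P 1).re := by
    intro n
    have h3 : (n.factorial : ℂ) ≠ 0 := by exact_mod_cast n.factorial_ne_zero
    have : (-1)^n * iteratedDeriv n E 2 / n.factorial =
      (-1)^n * iteratedDeriv n (LSeries f) 2 / n.factorial - P 1 := by
      rw [hder, mul_sub, sub_div]
      congr 1
      field_simp
      linear_combination (P 1) * hpm n
    simp only [ha]
    rw [this, sub_re]
    congr 1
    rw [show (n.factorial : ℂ) = ((n.factorial : ℝ) : ℂ) by simp, div_ofReal_re]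
  have hnn : ∀ n : ℕ, 0 ≤ ((-1)^n * iteratedDeriv n (LSeries f) 2).re := by
    intro n
    have := LSeries.iteratedDeriv_alternating hf hab2 n
    simpa using (Complex.le_def.1 this).1
  have hw : (1:ℝ) < 2 - σ := by linarith
  have hmain := seq_bound (a := a) (l := (P 1).re) (w := 2 - σ) (B := B) (X := (E σ).re)
    hw (by linarith) hB ?_ ?_ ?_ ?_ ?_
  · rw [show 2 - σ - 1 = 1 - σ by ring] at hmain
    exact hmain
  · rw [haeq]
    have := one_le_LSeries_two hf h1 hab
    simp
    exact this
  · intro n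
    rw [haeq]
    have := hnn n
    have : 0 ≤ ((-1)^n * iteratedDeriv n (LSeries f) 2).re / n.factorial := by positivity
    linarith
  · intro n
    refine (abs_re_le_norm _).trans ?_
    have h3 : (0:ℝ) < n.factorial := by exact_mod_cast n.factorial_pos
    rw [norm_div, norm_mul, norm_pow, norm_neg, norm_one, one_pow, one_mul, norm_natCast,
      div_le_iff₀ h3]
    refine (hcoef n).trans (le_of_eq ?_)
    rw [div_eq_mul_inv, ← inv_pow]
    norm_num
    ring
  · have hz : (σ:ℂ) ∈ Metric.ball (2:ℂ) (3/2) := by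
      rw [mem_ball_iff_norm]
      have : (σ:ℂ) - 2 = ((σ - 2 : ℝ) : ℂ) := by push_cast; ring
      rw [this, norm_real, Real.norm_eq_abs, abs_lt]
      constructor <;> linarith
    have h3 := Complex.hasSum_taylorSeries_on_ball
      (hEd.mono (Metric.ball_subset_closedBall.trans hball)) hz
    have h4 := Complex.hasSum_re h3
    convert h4 using 1
    funext n
    simp only [ha, smul_eq_mul]
    have : (n.factorial:ℂ)⁻¹ * ((σ - 2)^n * iteratedDeriv n E 2) =
       ((-1)^n * iteratedDeriv n E 2 / n.factorial) * (((2-σ)^n : ℝ) : ℂ) := by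
      push_cast
      rw [show (σ - 2 : ℂ) = (-1) * (2 - σ) by ring, mul_pow]
      ring
    rw [this, re_mul_ofReal]
  · have hne : (σ:ℂ) ≠ 1 := by
      intro h
      have : σ = 1 := by exact_mod_cast h
      linarith
    rw [hEne _ hne]
    have : ((σ:ℂ) - 1)⁻¹ = (((σ - 1)⁻¹ : ℝ) : ℂ) := by push_cast; rfl
    rw [this, re_ofReal_mul, sub_re]
    have h1 : 0 < 1 - σ := by linarith
    have h5 : (σ - 1)⁻¹ = -(1-σ)⁻¹ := by rw [← inv_neg]; congr 1; ring
    rw [h5, show 2 - σ - 1 = 1 - σ by ring, div_eq_mul_inv]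
    have : 0 ≤ (P σ).re * (1-σ)⁻¹ := by positivity
    linarith

end SW
end Part3

section Part4
open Finset Complex Filter Topology MeasureTheory

namespace SW

open scoped ComplexOrder in
structure Good (P : ℂ → ℂ) (f : ℕ → ℂ) : Prop where
  hP : DifferentiableOn ℂ P {s | 0 < s.re}
  hf : 0 ≤ f
  h1 : f 1 = 1
  hsum : ∀ s : ℂ, 1 < s.re → LSeriesSummable f s
  hPf : ∀ s : ℂ, 1 < s.re → P s = (s-1) * LSeries f s

lemma Good.hab {P : ℂ → ℂ} {f : ℕ → ℂ} (h : Good P f) : LSeries.abscissaOfAbsConv f ≤ 1 := by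
  have := LSeries.abscissaOfAbsConv_le_of_forall_lt_LSeriesSummable' (f := f) (x := 1) ?_
  · simpa using this
  · intro y hy
    exact h.hsum y (by simpa using (by exact_mod_cast hy : (1:ℝ) < y))

lemma isOpen_re : IsOpen {s : ℂ | 0 < s.re} := isOpen_lt continuous_const continuous_re

open scoped ComplexOrder in
lemma Good.conj {P : ℂ → ℂ} {f : ℕ → ℂ} (h : Good P f) (s : ℂ) (hs : 0 < s.re) :
    (starRingEnd ℂ) (P ((starRingEnd ℂ) s)) = P s := by
  refine eqOn_re (f := fun s => (starRingEnd ℂ) (P ((starRingEnd ℂ) s))) (g := P) ?_ h.hP ?_ s hs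
  · intro z hz
    have h1 : DifferentiableAt ℂ P ((starRingEnd ℂ) z) :=
      h.hP.differentiableAt (isOpen_re.mem_nhds (by simpa using hz))
    have := h1.conj_conj
    simp only [Complex.conj_conj] at this
    exact this.differentiableWithinAt
  · intro z hz
    have h2 : 1 < ((starRingEnd ℂ) z).re := by simpa using hz
    show (starRingEnd ℂ) (P ((starRingEnd ℂ) z)) = P z
    rw [h.hPf _ h2, h.hPf _ hz, map_mul, map_sub, Complex.conj_conj, map_one]
    congr 1
    rw [LSeries, Complex.conj_tsum, LSeries]
    congr 1
    funext n
    rw [LSeries.term_def, LSeries.term_def]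
    split
    · simp
    · rw [map_div₀]
      congr 1
      · have := h.hf n
        have h3 := (Complex.le_def.1 this).2
        simp at h3
        exact Complex.conj_eq_iff_im.2 h3.symm
      · have h4 := Complex.cpow_conj (n:ℂ) ((starRingEnd ℂ) z) (by
          have : (n:ℂ) = ((n:ℝ):ℂ) := by simp
          rw [this, Complex.arg_ofReal_of_nonneg (by positivity)]
          exact Real.pi_pos.ne)
        rw [Complex.conj_conj] at h4
        simpa using h4.symm

lemma Good.im_eq {P : ℂ → ℂ} {f : ℕ → ℂ} (h : Good P f) {σ : ℝ} (hs : 0 < σ) :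
    (P σ).im = 0 := by
  have := h.conj σ (by simpa using hs)
  rw [Complex.conj_ofReal] at this
  exact Complex.conj_eq_iff_im.1 this

open scoped ComplexOrder in
lemma Good.one_nonneg {P : ℂ → ℂ} {f : ℕ → ℂ} (h : Good P f) : 0 ≤ (P 1).re := by
  have hc : ContinuousAt P 1 := (h.hP.differentiableAt (isOpen_re.mem_nhds (by simp))).continuousAt
  have h1 : Tendsto (fun x : ℝ => (P x).re) (𝓝[>] 1) (𝓝 (P 1).re) := by
    have h2 : ContinuousAt (fun x : ℝ => (P x).re) 1 := by
      have h3 : ContinuousAt (fun x : ℝ => (x:ℂ)) 1 := continuous_ofReal.continuousAt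
      have h4 : ContinuousAt P (((1:ℝ)):ℂ) := by simpa using hc
      exact continuous_re.continuousAt.comp (ContinuousAt.comp (f := fun x : ℝ => (x:ℂ)) (x := 1) h4 h3)
    have := h2.tendsto.mono_left (nhdsWithin_le_nhds (s := Set.Ioi 1))
    simpa using this
  refine ge_of_tendsto h1 ?_
  filter_upwards [self_mem_nhdsWithin] with x hx
  have hx : 1 < x := hx
  have hp := LSeries.positive h.hf (by rw [h.h1]; exact zero_lt_one)
    (lt_of_le_of_lt h.hab (by exact_mod_cast hx) : _ < ((x:ℝ):EReal))
  rw [h.hPf _ (by simpa using hx)]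
  have e : ((x:ℂ) - 1) = ((x-1:ℝ):ℂ) := by push_cast; ring
  rw [e, re_ofReal_mul]
  have := (Complex.lt_def.1 hp).1
  simp at this
  have h5 : 0 < x - 1 := by linarith
  positivity

lemma Good.exists_zero {P : ℂ → ℂ} {f : ℕ → ℂ} (h : Good P f) {σ : ℝ} (hσ : 0 < σ) (hσ1 : σ < 1)
    (hneg : (P σ).re < 0) (hP1 : P 1 ≠ 0) : ∃ β : ℝ, σ < β ∧ β < 1 ∧ P β = 0 := by
  have hcont : ContinuousOn (fun x : ℝ => (P x).re) (Set.Icc σ 1) := by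
    apply continuous_re.comp_continuousOn
    apply h.hP.continuousOn.comp continuous_ofReal.continuousOn
    intro x hx
    simp
    linarith [hx.1]
  have := intermediate_value_Icc hσ1.le hcont
  obtain ⟨β, hβ, hβ0⟩ := this (show (0:ℝ) ∈ Set.Icc _ _ from
    ⟨hneg.le, by simpa using h.one_nonneg⟩)
  have hz : P β = 0 := Complex.ext hβ0 (h.im_eq (by linarith [hβ.1]))
  refine ⟨β, lt_of_le_of_ne hβ.1 ?_, lt_of_le_of_ne hβ.2 ?_, hz⟩
  · rintro rfl
    have : (P σ).re = 0 := hβ0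
    linarith
  · rintro rfl
    apply hP1
    simpa using hz

lemma dl_mod_one : dl (1 : DirichletCharacter ℂ 1) = 1 := by
  simp [dl]
  exact map_one (1 : DirichletCharacter ℂ 1)

noncomputable def Zf (s : ℂ) : ℂ := (s-1) * J (1 : DirichletCharacter ℂ 1) s + 1

lemma Zf_one : Zf 1 = 1 := by simp [Zf]

lemma Zf_eq {s : ℂ} (hs : 0 < s.re) (h1 : s ≠ 1) : Zf s = (s-1) * riemannZeta s := by
  have := LFunction_eq_J (1 : DirichletCharacter ℂ 1) hs (Or.inl h1)
  rw [DirichletCharacter.LFunction_modOne_eq, dl_mod_one] at this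
  have h2 : s - 1 ≠ 0 := sub_ne_zero.2 h1
  rw [Zf, this]
  field_simp

lemma differentiableAt_Zf {s : ℂ} (hs : 0 < s.re) : DifferentiableAt ℂ Zf s := by
  have := differentiableAt_J (1 : DirichletCharacter ℂ 1) hs
  unfold Zf
  fun_prop

lemma ball_facts {s : ℂ} (hs : s ∈ Metric.closedBall (2:ℂ) (3/2)) :
    1/2 ≤ s.re ∧ ‖s‖ ≤ 7/2 ∧ ‖s-1‖ ≤ 5/2 := by
  have h0 : ‖s-2‖ ≤ 3/2 := mem_closedBall_iff_norm.1 hs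
  have h2 := (abs_re_le_norm (s-2)).trans h0
  have := abs_le.1 h2
  simp at this
  refine ⟨by linarith [this.1], ?_, ?_⟩
  · have : ‖s‖ ≤ ‖s-2‖ + ‖(2:ℂ)‖ := by
      simpa using norm_add_le (s-2) 2
    rw [Complex.norm_ofNat] at this
    linarith
  · have : ‖s-1‖ ≤ ‖s-2‖ + ‖(1:ℂ)‖ := by
      rw [show s - 1 = (s-2) + 1 by ring]; exact norm_add_le _ _
    simp at this
    linarith

lemma Zf_ball {s : ℂ} (hs : s ∈ Metric.closedBall (2:ℂ) (3/2)) : ‖Zf s‖ ≤ 74 := by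
  obtain ⟨h1, h2, h3⟩ := ball_facts hs
  have h4 := norm_J_le (1 : DirichletCharacter ℂ 1) h1
  have h5 : ‖J (1 : DirichletCharacter ℂ 1) s‖ ≤ 29 := by
    refine h4.trans ?_
    push_cast
    linarith
  calc ‖Zf s‖ ≤ ‖s-1‖ * ‖J (1 : DirichletCharacter ℂ 1) s‖ + 1 := by
        unfold Zf
        refine (norm_add_le _ _).trans ?_
        rw [norm_mul]; simp
    _ ≤ 5/2 * 29 + 1 := by gcongr
    _ ≤ 74 := by norm_num

lemma L_ball {q : ℕ} [NeZero q] {χ : DirichletCharacter ℂ q} (hχ : χ ≠ 1) {s : ℂ}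
    (hs : s ∈ Metric.closedBall (2:ℂ) (3/2)) : ‖χ.LFunction s‖ ≤ 29 * q := by
  obtain ⟨h1, h2, h3⟩ := ball_facts hs
  rw [LFunction_eq_J χ (by linarith) (Or.inr hχ), dl_of_ne_one hχ]
  simp only [zero_div, add_zero]
  refine (norm_J_le χ h1).trans ?_
  have : (1:ℝ) ≤ q := by exact_mod_cast Nat.one_le_iff_ne_zero.2 (NeZero.ne q)
  nlinarith [norm_nonneg s]

/-- Dirichlet characters as arithmetic functions -/
noncomputable def XX {q : ℕ} (χ : DirichletCharacter ℂ q) : ArithmeticFunction ℂ :=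
  toArithmeticFunction (fun n => χ (n : ZMod q))

lemma XX_apply {q : ℕ} (χ : DirichletCharacter ℂ q) {n : ℕ} (hn : n ≠ 0) : XX χ n = χ (n : ZMod q) := by
  simp [XX, toArithmeticFunction, hn]

lemma XX_summable {q : ℕ} [NeZero q] (χ : DirichletCharacter ℂ q) {s : ℂ} (hs : 1 < s.re) :
    LSeriesSummable (XX χ) s :=
  LSeriesSummable_of_bounded_of_one_lt_re (m := 1) (fun n hn ↦ by
    rw [XX_apply χ hn]; exact χ.norm_le_one _) hs

lemma XX_LSeries {q : ℕ} [NeZero q] (χ : DirichletCharacter ℂ q) {s : ℂ} (hs : 1 < s.re) :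
    LSeries (XX χ) s = χ.LFunction s := by
  rw [DirichletCharacter.LFunction_eq_LSeries _ hs]
  exact LSeries_congr (fun {n} hn => XX_apply χ hn) s

/-- multiplication by log -/
noncomputable def DD (f : ArithmeticFunction ℂ) : ArithmeticFunction ℂ :=
  ⟨fun n => f n * (Real.log n : ℂ), by simp⟩

lemma DD_apply (f : ArithmeticFunction ℂ) (n : ℕ) : DD f n = f n * (Real.log n : ℂ) := rfl

lemma DD_mul (f g : ArithmeticFunction ℂ) : DD (f * g) = DD f * g + f * DD g := by
  ext n
  rw [DD_apply, ArithmeticFunction.add_apply, ArithmeticFunction.mul_apply,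
    ArithmeticFunction.mul_apply, ArithmeticFunction.mul_apply, sum_mul, ← sum_add_distrib]
  refine sum_congr rfl fun x hx => ?_
  have h := Nat.mem_divisorsAntidiagonal.1 hx
  have h1 : x.1 ≠ 0 := by rintro h0; rw [h0] at h; simp at h; exact h.2 h.1.symm
  have h2 : x.2 ≠ 0 := by rintro h0; rw [h0] at h; simp at h; exact h.2 h.1.symm
  rw [← h.1, DD_apply, DD_apply]
  push_cast
  rw [Real.log_mul (by exact_mod_cast h1) (by exact_mod_cast h2)]
  push_cast
  ring

/-- twisted von Mangoldt -/
noncomputable def LX {q : ℕ} (χ : DirichletCharacter ℂ q) : ArithmeticFunction ℂ :=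
  ⟨fun n => χ (n : ZMod q) * (ArithmeticFunction.vonMangoldt n : ℂ), by simp⟩

lemma LX_apply {q : ℕ} (χ : DirichletCharacter ℂ q) (n : ℕ) :
  LX χ n = χ (n : ZMod q) * (ArithmeticFunction.vonMangoldt n : ℂ) := rfl

lemma DD_XX {q : ℕ} (χ : DirichletCharacter ℂ q) : DD (XX χ) = XX χ * LX χ := by
  ext n
  rcases eq_or_ne n 0 with rfl | hn
  · simp
  rw [DD_apply, XX_apply χ hn, ArithmeticFunction.mul_apply]
  have h0 := congrArg (fun f : ArithmeticFunction ℝ => f n)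
    ArithmeticFunction.zeta_mul_vonMangoldt
  simp only [ArithmeticFunction.coe_zeta_mul_apply, ArithmeticFunction.log_apply] at h0
  rw [← h0]
  push_cast
  rw [mul_sum, ← Nat.sum_divisorsAntidiagonal' (n := n)
    (f := fun _ j => χ (n : ZMod q) * (ArithmeticFunction.vonMangoldt j : ℂ))]
  refine sum_congr rfl fun x hx => ?_
  have h := Nat.mem_divisorsAntidiagonal.1 hx
  have h1 : x.1 ≠ 0 := by rintro h0; rw [h0] at h; simp at h; exact h.2 h.1.symm
  rw [XX_apply χ h1, LX_apply, ← h.1]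
  push_cast
  rw [map_mul]
  ring

lemma nonneg_aux {f g : ArithmeticFunction ℂ} (h : DD f = f * g) (h1 : f 1 = 1)
    (hg : ∀ n, ∃ r : ℝ, 0 ≤ r ∧ g n = r) (hg1 : g 1 = 0) (n : ℕ) : ∃ r : ℝ, 0 ≤ r ∧ f n = r := by
  induction n using Nat.strong_induction_on with
  | _ n ih =>
  rcases Nat.lt_trichotomy n 1 with hn | hn | hn
  · exact ⟨0, le_rfl, by rw [show n = 0 by omega]; simp⟩
  · exact ⟨1, zero_le_one, by rw [hn, h1]; simp⟩
  · have h2 := congrArg (fun f : ArithmeticFunction ℂ => f n) h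
    simp only [DD_apply, ArithmeticFunction.mul_apply] at h2
    have hlog : 0 < Real.log n := Real.log_pos (by exact_mod_cast hn)
    choose G hG0 hG using hg
    have h3 : ∀ x ∈ n.divisorsAntidiagonal, ∃ r : ℝ, 0 ≤ r ∧ f x.1 * g x.2 = r := by
      intro x hx
      have hx' := Nat.mem_divisorsAntidiagonal.1 hx
      rcases eq_or_ne x.2 1 with h5 | h5
      · exact ⟨0, le_rfl, by rw [h5, hg1]; simp⟩
      · obtain ⟨r, hr, hr'⟩ := ih x.1 (by
          have h6 : x.1 ≠ 0 := by intro h0; rw [h0] at hx'; simp at hx'; omega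
          have h7 : x.2 ≠ 0 := by intro h0; rw [h0] at hx'; simp at hx'; omega
          have : 2 ≤ x.2 := by omega
          rw [← hx'.1]
          nlinarith [Nat.pos_of_ne_zero h6])
        exact ⟨r * G x.2, mul_nonneg hr (hG0 _), by rw [hr', hG]; push_cast; rfl⟩
    choose! R hR0 hR using h3
    rw [sum_congr rfl hR] at h2
    refine ⟨(∑ x ∈ n.divisorsAntidiagonal, R x) / Real.log n,
      div_nonneg (sum_nonneg hR0) hlog.le, ?_⟩
    rw [ofReal_div, ofReal_sum, eq_div_iff (by exact_mod_cast hlog.ne')]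
    exact h2

lemma one_apply_mod_one (n : ZMod 1) : (1 : DirichletCharacter ℂ 1) n = 1 := by
  rw [show n = 1 from Subsingleton.elim _ _]
  exact map_one _

lemma quad_values {q : ℕ} {χ : DirichletCharacter ℂ q} (h2 : χ^2 = 1) (n : ZMod q) :
    ∃ r : ℝ, -1 ≤ r ∧ χ n = r := by
  rcases MulChar.isQuadratic_iff_sq_eq_one.mpr h2 n with h | h | h
  · exact ⟨0, by norm_num, by simp [h]⟩
  · exact ⟨1, by norm_num, by simp [h]⟩
  · exact ⟨-1, by norm_num, by simp [h]⟩

lemma XX_one {q : ℕ} (χ : DirichletCharacter ℂ q) : XX χ 1 = 1 := by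
  rw [XX_apply χ one_ne_zero]; simp

lemma LX_one {q : ℕ} (χ : DirichletCharacter ℂ q) : LX χ 1 = 0 := by
  rw [LX_apply]; simp

lemma mul_one_apply {f g : ArithmeticFunction ℂ} (hf : f 1 = 1) (hg : g 1 = 1) : (f*g) 1 = 1 := by
  simp [hf, hg]

lemma nonneg_of_ex {f : ArithmeticFunction ℂ} (h : ∀ n, ∃ r : ℝ, 0 ≤ r ∧ f n = r) (n : ℕ) :
    0 ≤ (f n).re ∧ 0 = (f n).im := by
  obtain ⟨r, hr, h⟩ := h n
  rw [h]; simp [hr]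

open scoped ComplexOrder in
lemma good_two {q : ℕ} [NeZero q] {χ : DirichletCharacter ℂ q} (hχ : χ ≠ 1) (h2 : χ^2 = 1) :
    Good (fun s => Zf s * χ.LFunction s) (XX (1 : DirichletCharacter ℂ 1) * XX χ :
      ArithmeticFunction ℂ) where
  hP := fun s hs => ((differentiableAt_Zf hs).mul
    (DirichletCharacter.differentiable_LFunction hχ s)).differentiableWithinAt
  hf := by
    intro n
    have := nonneg_aux (f := XX (1 : DirichletCharacter ℂ 1) * XX χ)
      (g := LX (1 : DirichletCharacter ℂ 1) + LX χ) ?_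
      (mul_one_apply (XX_one _) (XX_one _)) ?_ (by simp [LX_one])
    · exact Complex.le_def.2 (nonneg_of_ex this n)
    · rw [DD_mul, DD_XX, DD_XX]; ring
    · intro m
      obtain ⟨r, hr, h⟩ := quad_values h2 m
      refine ⟨(1 + r) * ArithmeticFunction.vonMangoldt m, mul_nonneg (by linarith)
        ArithmeticFunction.vonMangoldt_nonneg, ?_⟩
      rw [ArithmeticFunction.add_apply, LX_apply, LX_apply, one_apply_mod_one, h]
      push_cast; ring
  h1 := mul_one_apply (XX_one _) (XX_one _)
  hsum := fun s hs => ArithmeticFunction.LSeriesSummable_mul (XX_summable _ hs) (XX_summable _ hs)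
  hPf := by
    intro s hs
    have hne : s ≠ 1 := by rintro rfl; simp at hs
    rw [ArithmeticFunction.LSeries_mul' (XX_summable _ hs) (XX_summable _ hs), XX_LSeries _ hs,
      XX_LSeries _ hs, Zf_eq (by linarith) hne, DirichletCharacter.LFunction_modOne_eq, mul_assoc]

/-- the product character -/
noncomputable def prodChar {q r : ℕ} (χ : DirichletCharacter ℂ q) (ψ : DirichletCharacter ℂ r) :
    DirichletCharacter ℂ (q * r) :=
  DirichletCharacter.changeLevel (dvd_mul_right q r) χ *
    DirichletCharacter.changeLevel (dvd_mul_left r q) ψ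

lemma prodChar_apply {q r : ℕ} (χ : DirichletCharacter ℂ q) (ψ : DirichletCharacter ℂ r) (n : ℕ) :
    prodChar χ ψ (n : ZMod (q*r)) = χ (n : ZMod q) * ψ (n : ZMod r) := by
  by_cases h : IsUnit (n : ZMod (q*r))
  · rw [prodChar, MulChar.mul_apply]
    have h1 := DirichletCharacter.changeLevel_eq_cast_of_dvd χ (dvd_mul_right q r) h.unit
    have h2 := DirichletCharacter.changeLevel_eq_cast_of_dvd ψ (dvd_mul_left r q) h.unit
    rw [IsUnit.unit_spec] at h1 h2
    rw [h1, h2]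
    congr 2
    · exact ZMod.cast_natCast (dvd_mul_right q r) n
    · exact ZMod.cast_natCast (dvd_mul_left r q) n
  · rw [MulChar.map_nonunit _ h]
    rw [ZMod.isUnit_iff_coprime, Nat.coprime_mul_iff_right, not_and_or] at h
    rcases h with h | h
    · rw [MulChar.map_nonunit χ (by rwa [ZMod.isUnit_iff_coprime]), zero_mul]
    · rw [MulChar.map_nonunit ψ (by rwa [ZMod.isUnit_iff_coprime]), mul_zero]

open scoped ComplexOrder in
lemma good_four {q r : ℕ} [NeZero q] [NeZero r] {χ : DirichletCharacter ℂ q}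
    {ψ : DirichletCharacter ℂ r} (hχ : χ ≠ 1) (h2 : χ^2 = 1) (hψ : ψ ≠ 1) (hψ2 : ψ^2 = 1)
    (hne : prodChar χ ψ ≠ 1) :
    Good (fun s => Zf s * χ.LFunction s * (ψ.LFunction s * (prodChar χ ψ).LFunction s))
      ((XX (1 : DirichletCharacter ℂ 1) * XX χ) * (XX ψ * XX (prodChar χ ψ)) :
      ArithmeticFunction ℂ) where
  hP := fun s hs => (((differentiableAt_Zf hs).mul
    (DirichletCharacter.differentiable_LFunction hχ s)).mul
    ((DirichletCharacter.differentiable_LFunction hψ s).mul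
    (DirichletCharacter.differentiable_LFunction hne s))).differentiableWithinAt
  hf := by
    intro n
    have := nonneg_aux (f := (XX (1 : DirichletCharacter ℂ 1) * XX χ) * (XX ψ * XX (prodChar χ ψ)))
      (g := LX (1 : DirichletCharacter ℂ 1) + LX χ + (LX ψ + LX (prodChar χ ψ))) ?_
      (mul_one_apply (mul_one_apply (XX_one _) (XX_one _))
        (mul_one_apply (XX_one _) (XX_one _))) ?_ (by simp [LX_one])
    · exact Complex.le_def.2 (nonneg_of_ex this n)
    · rw [DD_mul, DD_mul, DD_mul, DD_XX, DD_XX, DD_XX, DD_XX]; ring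
    · intro m
      obtain ⟨x, hx, h⟩ := quad_values h2 m
      obtain ⟨y, hy, h'⟩ := quad_values hψ2 m
      refine ⟨(1 + x) * (1 + y) * ArithmeticFunction.vonMangoldt m,
        mul_nonneg (mul_nonneg (by linarith) (by linarith))
        ArithmeticFunction.vonMangoldt_nonneg, ?_⟩
      simp only [ArithmeticFunction.add_apply]
      rw [LX_apply, LX_apply, LX_apply, LX_apply, one_apply_mod_one, prodChar_apply, h, h']
      push_cast; ring
  h1 := mul_one_apply (mul_one_apply (XX_one _) (XX_one _))
        (mul_one_apply (XX_one _) (XX_one _))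
  hsum := fun s hs => ArithmeticFunction.LSeriesSummable_mul
    (ArithmeticFunction.LSeriesSummable_mul (XX_summable _ hs) (XX_summable _ hs))
    (ArithmeticFunction.LSeriesSummable_mul (XX_summable _ hs) (XX_summable _ hs))
  hPf := by
    intro s hs
    have hne : s ≠ 1 := by rintro rfl; simp at hs
    rw [ArithmeticFunction.LSeries_mul'
      (ArithmeticFunction.LSeriesSummable_mul (XX_summable _ hs) (XX_summable _ hs))
      (ArithmeticFunction.LSeriesSummable_mul (XX_summable _ hs) (XX_summable _ hs)),
      ArithmeticFunction.LSeries_mul' (XX_summable _ hs) (XX_summable _ hs),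
      ArithmeticFunction.LSeries_mul' (XX_summable _ hs) (XX_summable _ hs), XX_LSeries _ hs,
      XX_LSeries _ hs, XX_LSeries _ hs, XX_LSeries _ hs, Zf_eq (by linarith) hne,
      DirichletCharacter.LFunction_modOne_eq]
    ring

end SW
end Part4

section Part5
open Finset Complex Filter Topology MeasureTheory

namespace SW

lemma siegel_two {q : ℕ} [NeZero q] {χ : DirichletCharacter ℂ q} (hχ : χ ≠ 1) (h2 : χ^2 = 1)
    {σ : ℝ} (hσ : 3/4 ≤ σ) (hσ1 : σ < 1) (hpos : 0 ≤ (Zf σ * χ.LFunction σ).re) :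
    (1-σ)/2 ≤ ‖χ.LFunction 1‖ * (Real.exp 1 * (48*(74*29*q))^(6*(1-σ))) := by
  have hg := good_two hχ h2
  have hq : (1:ℝ) ≤ q := by exact_mod_cast Nat.one_le_iff_ne_zero.2 (NeZero.ne q)
  have h := siegel_core hg.hP hg.hf hg.h1 hg.hab hg.hPf (B := 74*29*q) (by linarith)
    (fun s hs => by
      rw [norm_mul, mul_assoc]
      exact mul_le_mul (Zf_ball hs) (L_ball hχ hs) (norm_nonneg _) (by norm_num)) hσ hσ1 hpos
  refine h.trans ?_
  gcongr
  refine (re_le_norm _).trans ?_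
  simp [Zf_one]

lemma siegel_four {q r : ℕ} [NeZero q] [NeZero r] {χ : DirichletCharacter ℂ q}
    {ψ : DirichletCharacter ℂ r} (hχ : χ ≠ 1) (h2 : χ^2 = 1) (hψ : ψ ≠ 1) (hψ2 : ψ^2 = 1)
    (hne : prodChar χ ψ ≠ 1)
    {σ : ℝ} (hσ : 3/4 ≤ σ) (hσ1 : σ < 1) (hpos : Zf σ * χ.LFunction σ = 0) :
    (1-σ)/2 ≤ (‖χ.LFunction 1‖ * (‖ψ.LFunction 1‖ * ‖(prodChar χ ψ).LFunction 1‖)) *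
      (Real.exp 1 * (48*(74*29^3*(q*r)^2))^(6*(1-σ))) := by
  have hg := good_four hχ h2 hψ hψ2 hne
  have hq : (1:ℝ) ≤ q := by exact_mod_cast Nat.one_le_iff_ne_zero.2 (NeZero.ne q)
  have hr : (1:ℝ) ≤ r := by exact_mod_cast Nat.one_le_iff_ne_zero.2 (NeZero.ne r)
  have hqr : (1:ℝ) ≤ q * r := by nlinarith
  have h := siegel_core hg.hP hg.hf hg.h1 hg.hab hg.hPf (B := 74*29^3*(q*r)^2) (by nlinarith)
    (fun s hs => by
      rw [norm_mul, norm_mul, norm_mul]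
      calc ‖Zf s‖ * ‖χ.LFunction s‖ * (‖ψ.LFunction s‖ * ‖(prodChar χ ψ).LFunction s‖)
          ≤ 74 * (29 * q) * ((29 * r) * (29 * ((q * r : ℕ) : ℝ))) := by
            gcongr
            exacts [Zf_ball hs, L_ball hχ hs, L_ball hψ hs, L_ball hne hs]
        _ = 74*29^3*(q*r)^2 := by push_cast; ring) hσ hσ1 (by rw [hpos]; simp)
  refine h.trans ?_
  gcongr
  refine (re_le_norm _).trans ?_
  simp [Zf_one]

lemma euler_ne_zero {q : ℕ} (χ : DirichletCharacter ℂ q) (N : ℕ) {s : ℂ} (hs : 0 < s.re) :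
    ∏ p ∈ N.primeFactors, (1 - χ (p : ZMod q) * (p:ℂ) ^ (-s)) ≠ 0 := by
  rw [prod_ne_zero_iff]
  intro p hp h
  have hp := (Nat.prime_of_mem_primeFactors hp)
  have h1 : ‖χ (p : ZMod q) * (p:ℂ) ^ (-s)‖ < 1 := by
    rw [norm_mul, Complex.norm_natCast_cpow_of_pos hp.pos]
    have h2 := χ.norm_le_one (p : ZMod q)
    have h3 : (p:ℝ) ^ (-s).re < 1 := by
      apply Real.rpow_lt_one_of_one_lt_of_neg
      · exact_mod_cast hp.one_lt
      · simpa using hs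
    have h4 : 0 ≤ (p:ℝ) ^ (-s).re := by positivity
    nlinarith [norm_nonneg (χ (p : ZMod q))]
  rw [sub_eq_zero] at h
  rw [← h] at h1
  simp at h1

lemma zero_transfer {q r : ℕ} [NeZero q] [NeZero r] {χ : DirichletCharacter ℂ q}
    {ψ : DirichletCharacter ℂ r} (hχ : χ ≠ 1) (h2 : χ^2 = 1) (hψ : ψ ≠ 1)
    (he : prodChar χ ψ = 1) {σ : ℝ} (hσ : 0 < σ)
    (hz : Zf σ * χ.LFunction σ = 0) : Zf σ * ψ.LFunction σ = 0 := by
  rcases mul_eq_zero.1 hz with h | h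
  · rw [h, zero_mul]
  have h3 : DirichletCharacter.changeLevel (dvd_mul_right q r) χ =
      DirichletCharacter.changeLevel (dvd_mul_left r q) ψ := by
    have h4 : DirichletCharacter.changeLevel (dvd_mul_right q r) χ *
       DirichletCharacter.changeLevel (dvd_mul_right q r) χ = 1 := by
      rw [← map_mul, ← sq, h2, map_one]
    rw [prodChar] at he
    rw [← he] at h4
    exact mul_left_cancel h4
  have h5 := DirichletCharacter.LFunction_changeLevel (dvd_mul_right q r) χ (s := σ) (Or.inl hχ)
  have h6 := DirichletCharacter.LFunction_changeLevel (dvd_mul_left r q) ψ (s := σ) (Or.inl hψ)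
  rw [h3, h6, h, zero_mul] at h5
  rcases mul_eq_zero.1 h5 with h7 | h7
  · rw [h7, mul_zero]
  · exact absurd h7 (euler_ne_zero ψ _ (by simpa using hσ))

lemma exp_aux {L K c q δ δ' e : ℝ} (hq : 1 ≤ q) (hK : 1 ≤ K) (hδ : 0 < δ')
    (hδ' : δ' ≤ δ) (hL : 0 ≤ L) (he : 6*δ ≤ e)
    (h : c ≤ L * (Real.exp 1 * (K*q)^(6*δ'))) :
    c / (Real.exp 1 * K^(6*δ)) * q^(-e) ≤ L := by
  have h1 : (K*q)^(6*δ') ≤ K^(6*δ) * q^e := by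
    rw [Real.mul_rpow (by linarith) (by linarith)]
    gcongr <;> first | assumption | linarith
  have hKp : 0 < K^(6*δ) := Real.rpow_pos_of_pos (by linarith) _
  have hqp : 0 < q^e := Real.rpow_pos_of_pos (by linarith) _
  rw [Real.rpow_neg (by linarith), ← div_eq_mul_inv, div_div, div_le_iff₀ (by positivity)]
  refine h.trans ?_
  rw [mul_assoc (Real.exp 1)]
  gcongr

theorem siegel {ε : ℝ} (hε : 0 < ε) : ∃ c : ℝ, 0 < c ∧ ∀ (q : ℕ) [NeZero q]
    (χ : DirichletCharacter ℂ q), χ^2 = 1 → χ ≠ 1 → c * (q:ℝ)^(-ε) ≤ ‖χ.LFunction 1‖ := by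
  obtain ⟨δ, hδ0, hδ4, hδε⟩ : ∃ δ : ℝ, 0 < δ ∧ δ ≤ 1/4 ∧ 14*δ ≤ ε :=
    ⟨min (ε/14) (1/4), by positivity, min_le_right _ _, by
      have := min_le_left (ε/14) (1/4); linarith⟩
  have hq1 : ∀ (q : ℕ) [NeZero q], (1:ℝ) ≤ q := fun q _ => by
    exact_mod_cast Nat.one_le_iff_ne_zero.2 (NeZero.ne q)
  by_cases hall : ∀ (q : ℕ) [NeZero q] (χ : DirichletCharacter ℂ q), χ^2 = 1 → χ ≠ 1 →
      0 ≤ (Zf ((1-δ : ℝ):ℂ) * χ.LFunction ((1-δ:ℝ):ℂ)).re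
  · refine ⟨(δ/2) / (Real.exp 1 * (48*(74*29):ℝ)^(6*δ)), by positivity, ?_⟩
    intro q _ χ h2 hχ
    have h := siegel_two hχ h2 (by linarith) (by linarith) (hall q χ h2 hχ)
    refine exp_aux (hq1 q) (by norm_num) hδ0 le_rfl (norm_nonneg _) (by linarith) ?_
    rw [show 48 * (74*29*(q:ℝ)) = 48*(74*29)*q by ring, show 1 - (1-δ) = δ by ring] at h
    exact h
  · push Not at hall
    obtain ⟨q₁, _, χ₁, h2, hχ, hneg⟩ := hall
    have hP1 : Zf 1 * χ₁.LFunction 1 ≠ 0 := by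
      rw [Zf_one, one_mul]
      exact DirichletCharacter.LFunction_apply_one_ne_zero hχ
    obtain ⟨β, hβ0, hβ1, hβ⟩ := (good_two hχ h2).exists_zero (by linarith) (by linarith) hneg hP1
    obtain ⟨C, hC, hJ⟩ := J_bound hδ0 (by linarith)
    set L1 := ‖χ₁.LFunction 1‖
    have hL1 : 0 < L1 := norm_pos_iff.2 (DirichletCharacter.LFunction_apply_one_ne_zero hχ)
    set c₁ := ((1-β)/2) / (Real.exp 1 * (48*(74*29):ℝ)^(6*δ)) with hc₁
    set c₂ := ((1-β)/2) / (L1 * (C * (2*q₁)^(2*δ)) * (Real.exp 1 * (48*(74*29^3*q₁^2):ℝ)^(6*δ)))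
      with hc₂
    have hb : 0 < 1 - β := by linarith
    have hq1p : (1:ℝ) ≤ q₁ := hq1 q₁
    have hc₁p : 0 < c₁ := by positivity
    have hc₂p : 0 < c₂ := by positivity
    refine ⟨min c₁ c₂, lt_min hc₁p hc₂p, ?_⟩
    intro q _ ψ hψ2 hψ
    have hq := hq1 q
    by_cases he : prodChar χ₁ ψ = 1
    · have hz := zero_transfer hχ h2 hψ he (by linarith) hβ
      have h := siegel_two hψ hψ2 (σ := β) (by linarith) (by linarith) (by rw [hz]; simp)
      rw [show 48 * (74*29*(q:ℝ)) = 48*(74*29)*q by ring] at h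
      refine le_trans ?_ (exp_aux (hq1 q) (by norm_num) (by linarith) (δ := δ) (by linarith)
        (norm_nonneg _) (e := ε) (by linarith) h)
      gcongr
      exact min_le_left _ _
    · have h := siegel_four hχ h2 hψ hψ2 he (σ := β) (by linarith) (by linarith) hβ
      have h3 : ‖(prodChar χ₁ ψ).LFunction 1‖ ≤ C * (2*q₁)^(2*δ) * q^(2*δ) := by
        rw [LFunction_eq_J _ (by simp) (Or.inr he), dl_of_ne_one he]
        simp only [zero_div, add_zero]
        refine (hJ (q₁*q) (prodChar χ₁ ψ) 1 (by simp; linarith) (by norm_num)).trans (le_of_eq ?_)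
        rw [mul_assoc, ← Real.mul_rpow (by positivity) (by positivity)]
        simp
        left
        congr 1
        ring
      have h4 : (48*(74*29^3*((q₁:ℝ)*q)^2))^(6*(1-β)) ≤
          (48*(74*29^3*q₁^2):ℝ)^(6*δ) * q^(12*δ) := by
        have e1 : (q:ℝ)^(12*δ) = ((q:ℝ)^2)^(6*δ) := by
          rw [← Real.rpow_natCast, ← Real.rpow_mul (by linarith)]; congr 1; push_cast; ring
        rw [e1, ← Real.mul_rpow (by positivity) (by positivity)]
        rw [show 48*(74*29^3*((q₁:ℝ)*q)^2) = 48*(74*29^3*(q₁:ℝ)^2) * (q:ℝ)^2 by ring]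
        gcongr
        · have : (1:ℝ) ≤ (q₁:ℝ)^2 := one_le_pow₀ hq1p
          have : (1:ℝ) ≤ (q:ℝ)^2 := one_le_pow₀ hq
          nlinarith
        · linarith
      have h5 : (1-β)/2 ≤ (L1 * (C * (2*q₁)^(2*δ)) *
        (Real.exp 1 * (48*(74*29^3*q₁^2):ℝ)^(6*δ))) * (‖ψ.LFunction 1‖ * q^ε) := by
        calc (1-β)/2 ≤ _ := h
          _ ≤ (L1 * (‖ψ.LFunction 1‖ * (C * (2*q₁)^(2*δ) * q^(2*δ)))) *
             (Real.exp 1 * ((48*(74*29^3*q₁^2):ℝ)^(6*δ) * q^(12*δ))) := by gcongr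
          _ = (L1 * (C * (2*q₁)^(2*δ)) *
        (Real.exp 1 * (48*(74*29^3*q₁^2):ℝ)^(6*δ))) * (‖ψ.LFunction 1‖ * (q^(2*δ) * q^(12*δ))) := by
            ring
          _ ≤ _ := by
            rw [← Real.rpow_add (by linarith)]
            gcongr
            linarith
      have h6 : c₂ ≤ ‖ψ.LFunction 1‖ * q^ε := by
        rw [hc₂, div_le_iff₀ (by positivity), mul_comm]
        exact h5
      rw [Real.rpow_neg (by linarith), ← div_eq_mul_inv, div_le_iff₀ (by positivity)]
      exact (min_le_right _ _).trans h6

end SW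
end Part5

section Part6
open Finset Complex Filter Topology MeasureTheory

namespace SW

/-- the analytic conductor -/
noncomputable def NN (q : ℕ) (t : ℝ) : ℝ := (q:ℝ) * (|t| + 2)

lemma two_le_NN (q : ℕ) [NeZero q] (t : ℝ) : 2 ≤ NN q t := by
  have hq : (1:ℝ) ≤ q := by exact_mod_cast Nat.one_le_iff_ne_zero.2 (NeZero.ne q)
  have := abs_nonneg t
  unfold NN; nlinarith

lemma NN_mono (q : ℕ) {t u : ℝ} (h : |t| ≤ |u|) : NN q t ≤ NN q u := by
  unfold NN; gcongr

lemma q_le_NN (q : ℕ) (t : ℝ) : (q:ℝ) ≤ NN q t := by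
  have := abs_nonneg t
  have : (0:ℝ) ≤ q := by positivity
  unfold NN; nlinarith

/-- normalised L-function -/
noncomputable def FF {q : ℕ} [NeZero q] (χ : DirichletCharacter ℂ q) (s : ℂ) : ℂ :=
  open Classical in if χ = 1 then ((s-1) * J χ s + dl χ) / (s+1) else J χ s

lemma add_one_ne {s : ℂ} (hs : 0 < s.re) : s + 1 ≠ 0 := by
  intro h; have := congrArg Complex.re h; simp at this; linarith

lemma FF_of_ne {q : ℕ} [NeZero q] {χ : DirichletCharacter ℂ q} (h : χ ≠ 1) {s : ℂ}
    (hs : 0 < s.re) : FF χ s = χ.LFunction s := by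
  rw [FF, if_neg h, LFunction_eq_J χ hs (Or.inr h), dl_of_ne_one h]; simp

lemma FF_of_eq {q : ℕ} [NeZero q] {χ : DirichletCharacter ℂ q} (h : χ = 1) {s : ℂ}
    (hs : 0 < s.re) (h1 : s ≠ 1) : FF χ s = (s-1) / (s+1) * χ.LFunction s := by
  rw [FF, if_pos h, LFunction_eq_J χ hs (Or.inl h1)]
  have h2 : s - 1 ≠ 0 := sub_ne_zero.2 h1
  have h3 := add_one_ne hs
  field_simp

lemma differentiableAt_FF {q : ℕ} [NeZero q] (χ : DirichletCharacter ℂ q) {s : ℂ}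
    (hs : 0 < s.re) : DifferentiableAt ℂ (FF χ) s := by
  have h1 := differentiableAt_J χ hs
  have h2 := add_one_ne hs
  by_cases h : χ = 1
  · have : FF χ = fun s => ((s-1) * J χ s + dl χ) / (s+1) := by
      funext s; rw [FF, if_pos h]
    rw [this]
    fun_prop (disch := assumption)
  · have : FF χ = J χ := by
      funext s; rw [FF, if_neg h]
    rw [this]; exact h1

lemma FF_le {q : ℕ} [NeZero q] (χ : DirichletCharacter ℂ q) {s : ℂ}
    (hs : 0 < s.re) : ‖FF χ s‖ ≤ ‖J χ s‖ + 1 := by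
  unfold FF
  have h3 := norm_pos_iff.2 (add_one_ne hs)
  split
  · rw [norm_div, div_le_iff₀ h3]
    have h4 : ‖s-1‖ ≤ ‖s+1‖ := by
      rw [Complex.norm_def, Complex.norm_def]
      apply Real.sqrt_le_sqrt
      simp [normSq_apply]
      nlinarith
    have h5 : 1 ≤ ‖s+1‖ := by
      have := re_le_norm (s+1)
      simp at this
      linarith
    refine (norm_add_le _ _).trans ?_
    rw [norm_mul, add_mul, one_mul, mul_comm]
    have := norm_dl_le χ
    gcongr
    linarith
  · linarith

lemma FF_bound0 {ε : ℝ} (hε : 0 < ε) (hε2 : ε ≤ 1/2) : ∃ C : ℝ, 1 ≤ C ∧ ∀ (q : ℕ) [NeZero q]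
    (χ : DirichletCharacter ℂ q) (s : ℂ), 1 - ε ≤ s.re → s.re ≤ 3 →
    ‖FF χ s‖ ≤ C * (NN q s.im)^(2*ε) := by
  obtain ⟨C, hC, h⟩ := J_bound hε hε2
  refine ⟨C+1, by linarith, ?_⟩
  intro q _ χ s h1 h2
  have h3 := h q χ s h1 h2
  refine (FF_le χ (by linarith)).trans ?_
  have h4 : 1 ≤ (NN q s.im)^(2*ε) := Real.one_le_rpow (by linarith [two_le_NN q s.im]) (by linarith)
  change _ ≤ C * (NN q s.im)^(2*ε) at h3
  linarith

lemma FF_bound {ε : ℝ} (hε : 0 < ε) (hε2 : ε ≤ 1/2) : ∃ C : ℝ, 1 ≤ C ∧ ∀ (q : ℕ) [NeZero q]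
    (χ : DirichletCharacter ℂ q) (s : ℂ), 1 - ε/2 ≤ s.re → s.re ≤ 5/2 →
    ‖FF χ s‖ ≤ C * (NN q s.im)^(2*ε) ∧ ‖deriv (FF χ) s‖ ≤ C * (NN q s.im)^(2*ε) := by
  obtain ⟨C, hC, h⟩ := FF_bound0 hε hε2
  refine ⟨C * 2 / (ε/2), ?_, ?_⟩
  · rw [le_div_iff₀ (by linarith)]; nlinarith
  intro q _ χ s h1 h2
  have hNp : 0 < NN q s.im := by linarith [two_le_NN q s.im]
  constructor
  · refine (h q χ s (by linarith) (by linarith)).trans ?_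
    gcongr
    rw [le_div_iff₀ (by linarith)]; nlinarith
  · have hsub : Metric.closedBall s (ε/2) ⊆ {s | 0 < s.re} := by
      intro z hz
      have h3 := (abs_re_le_norm (z-s)).trans (mem_closedBall_iff_norm.1 hz)
      have := abs_le.1 h3
      simp at this ⊢
      linarith [this.1]
    have hd : DifferentiableOn ℂ (FF χ) {s | 0 < s.re} := fun z hz =>
      (differentiableAt_FF χ hz).differentiableWithinAt
    have := Complex.norm_deriv_le_of_forall_mem_sphere_norm_le (f := FF χ) (c := s) (R := ε/2)
      (C := C * (2 * (NN q s.im)^(2*ε))) (by linarith) (hd.diffContOnCl_ball hsub) ?_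
    · refine this.trans (le_of_eq ?_); ring
    · intro z hz
      have hz := mem_sphere_iff_norm.1 hz
      have h3 := (abs_re_le_norm (z-s)).trans hz.le
      have h4 := (abs_im_le_norm (z-s)).trans hz.le
      have h5 := abs_le.1 h3
      simp only [sub_re] at h5
      have h6 := h q χ z (by linarith [h5.1]) (by linarith [h5.2])
      refine h6.trans ?_
      gcongr
      have h7 : NN q z.im ≤ 2 * NN q s.im := by
        have : |z.im| ≤ |s.im| + ε/2 := by
          have := abs_sub_abs_le_abs_sub z.im s.im
          simp only [sub_im] at h4
          linarith
        unfold NN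
        have hq : (0:ℝ) ≤ q := by positivity
        have := abs_nonneg s.im
        nlinarith
      have hzp : 0 < NN q z.im := by linarith [two_le_NN q z.im]
      calc (NN q z.im)^(2*ε) ≤ (2 * NN q s.im)^(2*ε) := by gcongr
        _ = 2^(2*ε) * (NN q s.im)^(2*ε) := Real.mul_rpow (by norm_num) hNp.le
        _ ≤ 2^(1:ℝ) * (NN q s.im)^(2*ε) := by
          gcongr
          · norm_num
          · linarith
        _ = _ := by norm_num

lemma real_lemma {g : ℝ → ℝ} {a b : ℝ} (ha : 0 < a) (ha1 : a ≤ 1) (hb : 1 ≤ b)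
    (hg0 : ∀ y, 0 < y → y ≤ 1 → 0 ≤ g y)
    (hg : ∀ y, 0 < y → y ≤ 1 → a * y^3 ≤ (g y)^4)
    (hL : ∀ x y, 0 < x → x ≤ y → y ≤ 1 → g y ≤ g x + b * (y - x)) {x : ℝ} (hx : 0 < x)
    (hx1 : x ≤ 1) : a/(16*b^3) ≤ g x := by
  by_contra hcon
  push Not at hcon
  obtain ⟨d, hd⟩ : ∃ d, d = a/(16*b^4) := ⟨_, rfl⟩
  have hb4 : 1 ≤ b^4 := one_le_pow₀ hb
  have hd0 : 0 < d := by rw [hd]; positivity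
  have hd1 : d ≤ 1 := by rw [hd, div_le_one (by positivity)]; nlinarith
  have hbd : a/(16*b^3) = b*d := by rw [hd]; field_simp
  have ha2 : a = 16*b^4*d := by rw [hd]; field_simp
  rw [hbd] at hcon
  rcases le_total d x with h | h
  · have h1 := hg x hx hx1
    have h2 : (g x)^4 < (b*d)^4 := pow_lt_pow_left₀ hcon (hg0 x hx hx1) (by norm_num)
    have h3 : d^3 ≤ x^3 := pow_le_pow_left₀ hd0.le h 3
    have h4 : a * d^3 ≤ a * x^3 := by gcongr
    rw [ha2] at h4 h1
    have : 0 < b^4*d^4 := by positivity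
    have e : (b*d)^4 = b^4*d^4 := by ring
    have e2 : 16*b^4*d*d^3 = 16*(b^4*d^4) := by ring
    linarith
  · have h1 := hL x d hx h hd1
    have h2 := hg d hd0 hd1
    have h3 : g d < 2*b*d := by nlinarith
    have h4 : (g d)^4 < (2*b*d)^4 := pow_lt_pow_left₀ h3 (hg0 d hd0 hd1) (by norm_num)
    have e : (2*b*d)^4 = a*d^3 := by rw [ha2]; ring
    linarith

end SW
end Part6

section Part7
open Finset Complex Filter Topology MeasureTheory

namespace SW

lemma LF_le {q : ℕ} [NeZero q] (χ : DirichletCharacter ℂ q) {s : ℂ} (hs : 1 < s.re) {m : ℝ}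
    (hm : 0 < m) (hm1 : m ≤ 1) (h : χ ≠ 1 ∨ m ≤ ‖s-1‖) :
    ‖χ.LFunction s‖ ≤ ‖FF χ s‖ * (3/m) := by
  have h3 : 3 ≤ 3/m := by rw [le_div_iff₀ hm]; linarith
  by_cases hχ : χ = 1
  · have h' : m ≤ ‖s-1‖ := by rcases h with h | h; exact absurd hχ h; exact h
    have hne : s ≠ 1 := by rintro rfl; simp at hs
    have h2 : s - 1 ≠ 0 := sub_ne_zero.2 hne
    have h4 := add_one_ne (s := s) (by linarith)
    have h5 : χ.LFunction s = FF χ s * ((s+1)/(s-1)) := by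
      rw [FF_of_eq hχ (by linarith) hne]; field_simp
    rw [h5, norm_mul]
    gcongr
    rw [norm_div, div_le_div_iff₀ (by linarith) hm]
    have : ‖s+1‖ ≤ ‖s-1‖ + 2 := by
      rw [show s + 1 = (s-1) + 2 by ring]
      exact (norm_add_le _ _).trans (by simp)
    nlinarith
  · rw [FF_of_ne hχ (by linarith)]
    have := norm_nonneg (χ.LFunction s)
    nlinarith

lemma three_four_one {q : ℕ} [NeZero q] (χ : DirichletCharacter ℂ q) {x t m₁ m₂ : ℝ} (hx : 0 < x)
    (hx1 : x ≤ 1) (hm₁ : 0 < m₁) (hm₁' : m₁ ≤ 1) (hm₂ : 0 < m₂) (hm₂' : m₂ ≤ 1)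
    (h₁ : χ ≠ 1 ∨ m₁ ≤ |t|) (h₂ : χ^2 ≠ 1 ∨ m₂ ≤ |t| ∨ m₂ ≤ x) :
    1 ≤ (‖FF (1 : DirichletCharacter ℂ q) (1+x)‖ * (3/x))^3 *
      (‖FF χ (1 + x + I * t)‖ * (3/m₁))^4 * (‖FF (χ^2) (1 + x + 2 * I * t)‖ * (3/m₂)) := by
  refine (DirichletCharacter.norm_LFunction_product_ge_one χ hx t).trans ?_
  rw [norm_mul, norm_mul, norm_pow, norm_pow]
  gcongr
  · apply LF_le _ (by simpa using hx) hx hx1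
    right
    simp [abs_of_pos hx]
  · apply LF_le _ (by simpa using hx) hm₁ hm₁'
    refine h₁.imp id fun h => h.trans ?_
    refine le_trans ?_ (abs_im_le_norm _)
    simp
  · apply LF_le _ (by simpa using hx) hm₂ hm₂'
    refine h₂.imp id fun h => ?_
    rcases h with h | h
    · refine h.trans (le_trans ?_ (abs_im_le_norm _))
      simp [abs_mul]
      linarith [abs_nonneg t]
    · refine h.trans (le_trans ?_ (abs_re_le_norm _))
      simp [abs_of_pos hx]

lemma FF_lip {ε C : ℝ} (hε : 0 < ε) (hC0 : 0 ≤ C) {q : ℕ} [NeZero q]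
    {χ : DirichletCharacter ℂ q}
    (hC : ∀ s : ℂ, 1 - ε/2 ≤ s.re → s.re ≤ 5/2 → ‖deriv (FF χ) s‖ ≤ C * (NN q s.im)^(2*ε))
    (hε2 : ε ≤ 1/2) {T : ℝ} {z w : ℂ} (hz : 1 - ε/2 ≤ z.re) (hz2 : z.re ≤ 5/2)
    (hw : 1 - ε/2 ≤ w.re) (hw2 : w.re ≤ 5/2) (hzT : |z.im| ≤ T) (hwT : |w.im| ≤ T) :
    ‖FF χ w - FF χ z‖ ≤ C * (NN q T)^(2*ε) * ‖w - z‖ := by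
  have hcv : Convex ℝ {s : ℂ | s.re ∈ Set.Icc (1-ε/2) (5/2) ∧ s.im ∈ Set.Icc (-T) T} := by
    have h1 := (convex_Icc (1-ε/2) (5/2:ℝ)).linear_preimage Complex.reLm
    have h2 := (convex_Icc (-T) T).linear_preimage Complex.imLm
    exact h1.inter h2
  refine hcv.norm_image_sub_le_of_norm_deriv_le (𝕜 := ℂ) ?_ ?_ ⟨⟨hz, hz2⟩, abs_le.1 hzT⟩
    ⟨⟨hw, hw2⟩, abs_le.1 hwT⟩
  · intro s hs
    exact differentiableAt_FF χ (by linarith [hs.1.1])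
  · intro s hs
    refine (hC s hs.1.1 hs.1.2).trans ?_
    have := two_le_NN q s.im
    gcongr
    exact NN_mono q ((abs_le.2 hs.2).trans (le_abs_self T))

lemma FF_lower1 {ε : ℝ} (hε : 0 < ε) (hε2 : ε ≤ 1/2) : ∃ c : ℝ, 0 < c ∧ ∀ η : ℝ, 0 < η → η ≤ 1 →
    ∀ (q : ℕ) [NeZero q] (χ : DirichletCharacter ℂ q) (x t : ℝ), 0 < x → x ≤ 1 →
    (χ^2 ≠ 1 ∨ η ≤ |t|) → c * η^5 * (NN q t)^(-(14*ε)) ≤ ‖FF χ (1 + x + I * t)‖ := by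
  obtain ⟨C, hC, hF⟩ := FF_bound hε hε2
  refine ⟨1/(16*(2^2*3^8*C^7)), by positivity, ?_⟩
  intro η hη hη1 q _ χ x t hx hx1 hcond
  set M := (NN q t)^(2*ε) with hM
  have hN2 := two_le_NN q t
  have hM1 : 1 ≤ M := Real.one_le_rpow (by linarith) (by linarith)
  set a := η^5/(2^2*3^8*C^4*M^4) with ha
  have hden : 1 ≤ 2^2*3^8*C^4*M^4 := by
    have h1 : 1 ≤ C^4 := one_le_pow₀ hC
    have h2 : 1 ≤ M^4 := one_le_pow₀ hM1
    nlinarith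
  have hη5 : η^5 ≤ 1 := pow_le_one₀ hη.le hη1
  have hCM : 1 ≤ C * M := by nlinarith
  have key := real_lemma (g := fun y : ℝ => ‖FF χ (1 + y + I * t)‖) (a := a) (b := C*M)
    (by positivity) (by rw [ha, div_le_one (by positivity)]; linarith) hCM
    (fun _ _ _ => norm_nonneg _) ?_ ?_ hx hx1
  · refine le_trans (le_of_eq ?_) key
    have hM7 : (NN q t)^(-(14*ε)) = 1/M^7 := by
      rw [hM, ← Real.rpow_natCast, ← Real.rpow_mul (by linarith), Real.rpow_neg (by linarith),
        one_div]
      congr 2; push_cast; ring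
    rw [hM7, ha]
    field_simp
  · intro y hy hy1
    set g := ‖FF χ (1 + y + I * t)‖
    have h1χ : χ ≠ 1 ∨ η ≤ |t| := by
      rcases hcond with h | h
      · left; rintro rfl; simp at h
      · exact Or.inr h
    have h := three_four_one χ (t := t) hy hy1 hη hη1 hη hη1 h1χ (by tauto)
    have hF1 : ‖FF (1 : DirichletCharacter ℂ q) (1 + y)‖ ≤ C * M := by
      refine (hF q 1 (1+y) (by simp; linarith) (by simp; linarith)).1.trans ?_
      have := two_le_NN q (1 + (y:ℂ)).im
      rw [hM]
      gcongr
      apply NN_mono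
      simp
    have hF2 : ‖FF (χ^2) (1 + y + 2 * I * t)‖ ≤ C * (2^2 * M) := by
      refine (hF q (χ^2) (1+y+2*I*t) (by simp; linarith) (by simp; linarith)).1.trans ?_
      have h3 := two_le_NN q (1 + (y:ℂ) + 2 * I * t).im
      gcongr
      have h4 : NN q (1 + (y:ℂ) + 2 * I * t).im ≤ 2 * NN q t := by
        simp [NN, abs_mul]
        have : (0:ℝ) ≤ q := by positivity
        nlinarith
      calc (NN q (1 + (y:ℂ) + 2 * I * t).im)^(2*ε) ≤ (2 * NN q t)^(2*ε) := by gcongr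
        _ = 2^(2*ε) * M := Real.mul_rpow (by norm_num) (by linarith)
        _ ≤ 2^(2:ℝ) * M := by
          gcongr
          · norm_num
          · linarith
        _ = 2^2 * M := by norm_num
    have h5 : 1 ≤ (C*M*(3/y))^3 * (g * (3/η))^4 * (C*(2^2*M) * (3/η)) := by
      refine h.trans ?_
      gcongr
    have h6 : (C*M*(3/y))^3 * (g * (3/η))^4 * (C*(2^2*M) * (3/η)) =
        g^4 / (η^5/(2^2*3^8*C^4*M^4) * y^3) := by
      field_simp
    rw [h6, le_div_iff₀ (by positivity), one_mul] at h5
    exact h5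
  · intro x y hx hxy hy1
    have := FF_lip hε (by linarith) (fun s h1 h2 => (hF q χ s h1 h2).2) hε2 (T := |t|)
      (z := 1 + x + I * t) (w := 1 + y + I * t) (by simp; linarith) (by simp; linarith)
      (by simp; linarith) (by simp; linarith) (by simp) (by simp)
    have e1 : (1 + y + I * t) - (1 + x + I * t) = (((y - x : ℝ)) : ℂ) := by push_cast; ring
    rw [e1, norm_real, Real.norm_eq_abs, abs_of_nonneg (by linarith : 0 ≤ y - x)] at this
    have e2 : (NN q |t|)^(2*ε) = M := by rw [hM]; simp [NN]
    rw [e2] at this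
    have := norm_sub_norm_le (FF χ (1 + y + I * t)) (FF χ (1 + x + I * t))
    linarith

lemma phi_aux {ε : ℝ} (hε : 0 < ε) : ∃ c : ℝ, 0 < c ∧ ∀ q : ℕ, q ≠ 0 →
    c * (q:ℝ)^(-ε) ≤ ∏ p ∈ q.primeFactors, (1 - 1/(p:ℝ)) := by
  obtain ⟨P, hP⟩ : ∃ P : ℕ, (2:ℝ)^(1/ε) ≤ P := exists_nat_ge _
  refine ⟨(1/2)^P, by positivity, ?_⟩
  intro q hq
  have hfac : ∀ p ∈ q.primeFactors, (if p < P then (1/2:ℝ) else 1) * (p:ℝ)^(-ε) ≤ 1 - 1/(p:ℝ) := by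
    intro p hp
    have hp := Nat.prime_of_mem_primeFactors hp
    have h2 : (2:ℝ) ≤ p := by exact_mod_cast hp.two_le
    have h3 : 1/2 ≤ 1 - 1/(p:ℝ) := by
      have : 1/(p:ℝ) ≤ 1/2 := one_div_le_one_div_of_le (by norm_num) h2
      linarith
    refine le_trans ?_ h3
    split_ifs with h
    · have : (p:ℝ)^(-ε) ≤ 1 := Real.rpow_le_one_of_one_le_of_nonpos (by linarith) (by linarith)
      linarith
    · rw [one_mul, Real.rpow_neg (by linarith), ← one_div]
      apply one_div_le_one_div_of_le (by norm_num)
      have h4 : (2:ℝ)^(1/ε) ≤ p := hP.trans (by exact_mod_cast not_lt.1 h)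
      calc (2:ℝ) = ((2:ℝ)^(1/ε))^ε := by
            rw [← Real.rpow_mul (by norm_num), one_div_mul_cancel hε.ne', Real.rpow_one]
        _ ≤ _ := by gcongr
  refine le_trans ?_ (prod_le_prod (fun p _ => by positivity) hfac)
  rw [prod_mul_distrib]
  have hA : (1/2:ℝ)^P ≤ ∏ p ∈ q.primeFactors, (if p < P then (1/2:ℝ) else 1) := by
    rw [prod_ite, prod_const, prod_const_one, mul_one]
    apply pow_le_pow_of_le_one (by norm_num) (by norm_num)
    calc _ ≤ (range P).card := card_le_card (fun p hp => by simp at hp ⊢; exact hp.2)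
      _ = P := card_range P
  have hB : (q:ℝ)^(-ε) ≤ ∏ p ∈ q.primeFactors, (p:ℝ)^(-ε) := by
    rw [Real.finsetProd_rpow _ _ (fun p _ => by positivity)]
    apply Real.rpow_le_rpow_of_nonpos
    · apply prod_pos
      intro p hp
      exact_mod_cast (Nat.prime_of_mem_primeFactors hp).pos
    · rw [← Nat.cast_prod]
      exact Nat.cast_le.2 (Nat.le_of_dvd (Nat.pos_of_ne_zero hq) (Nat.prod_primeFactors_dvd q))
    · linarith
  have : (0:ℝ) ≤ (q:ℝ)^(-ε) := by positivity
  exact mul_le_mul hA hB this (by positivity)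

end SW
end Part7

section Part8
open Finset Complex Filter Topology MeasureTheory

namespace SW

lemma FF_lower_triv {ε : ℝ} (hε : 0 < ε) : ∃ c : ℝ, 0 < c ∧
    ∀ (q : ℕ) [NeZero q] (x t : ℝ), 0 < x → x ≤ 1 → |t| ≤ 1 →
    c * (NN q t)^(-ε) ≤ ‖FF (1 : DirichletCharacter ℂ q) (1 + x + I * t)‖ := by
  obtain ⟨c, hc, hphi⟩ := phi_aux hε
  obtain ⟨m, hm, hmZ⟩ : ∃ m : ℝ, 0 < m ∧ ∀ s ∈ (Set.Icc (1:ℝ) 2 ×ℂ Set.Icc (-1:ℝ) 1), m ≤ ‖Zf s‖ := by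
    have hK : IsCompact (Set.Icc (1:ℝ) 2 ×ℂ Set.Icc (-1:ℝ) 1) :=
      isCompact_Icc.reProdIm isCompact_Icc
    have hcont : ContinuousOn (fun s => ‖Zf s‖) (Set.Icc (1:ℝ) 2 ×ℂ Set.Icc (-1:ℝ) 1) := by
      intro s hs
      have : 0 < s.re := by have := hs.1.1; linarith
      exact (differentiableAt_Zf this).continuousAt.norm.continuousWithinAt
    obtain ⟨s₀, hs₀, hmin⟩ := hK.exists_isMinOn ⟨1, by constructor <;> simp⟩ hcont
    refine ⟨‖Zf s₀‖, ?_, fun s hs => hmin hs⟩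
    rw [norm_pos_iff]
    by_cases h1 : s₀ = 1
    · rw [h1, Zf_one]; exact one_ne_zero
    · have hre : 1 ≤ s₀.re := hs₀.1.1
      rw [Zf_eq (by linarith) h1]
      exact mul_ne_zero (sub_ne_zero.2 h1) (riemannZeta_ne_zero_of_one_le_re hre)
  refine ⟨c * m / 4, by positivity, ?_⟩
  intro q _ x t hx hx1 ht
  have hq0 : q ≠ 0 := NeZero.ne q
  set s : ℂ := 1 + x + I * t with hs
  have hre : s.re = 1 + x := by simp [hs]
  have him : s.im = t := by simp [hs]
  have hs1 : s ≠ 1 := by intro h; rw [h] at hre; simp at hre; linarith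
  have hL : (1 : DirichletCharacter ℂ q).LFunction s =
      (∏ p ∈ q.primeFactors, (1 - (p:ℂ)^(-s))) * riemannZeta s :=
    DirichletCharacter.LFunctionTrivChar_eq_mul_riemannZeta hs1
  have hF : FF (1 : DirichletCharacter ℂ q) s =
      (∏ p ∈ q.primeFactors, (1 - (p:ℂ)^(-s))) * Zf s / (s+1) := by
    rw [FF_of_eq rfl (by linarith) hs1, hL, Zf_eq (by linarith) hs1]
    ring
  have h1 : ∏ p ∈ q.primeFactors, (1 - 1/(p:ℝ)) ≤ ‖∏ p ∈ q.primeFactors, (1 - (p:ℂ)^(-s))‖ := by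
    rw [norm_prod]
    apply Finset.prod_le_prod
    · intro p hp
      have h2 : (1:ℝ) ≤ p := by exact_mod_cast (Nat.prime_of_mem_primeFactors hp).one_le
      have : 1/(p:ℝ) ≤ 1 := by rw [div_le_one (by linarith)]; exact h2
      linarith
    · intro p hp
      have hpp := Nat.prime_of_mem_primeFactors hp
      have h2 : (1:ℝ) ≤ p := by exact_mod_cast hpp.one_le
      have h3 : ‖(p:ℂ)^(-s)‖ ≤ 1/(p:ℝ) := by
        rw [Complex.norm_natCast_cpow_of_pos hpp.pos, one_div, ← Real.rpow_neg_one]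
        apply Real.rpow_le_rpow_of_exponent_le h2
        simp [hre]; linarith
      have h4 := norm_sub_norm_le (1:ℂ) ((p:ℂ)^(-s))
      simp only [norm_one] at h4
      linarith
  have h2 := hphi q hq0
  have h3 := hmZ s ⟨by simp [hre]; constructor <;> linarith, by simpa [him] using abs_le.1 ht⟩
  have h4 : ‖s+1‖ ≤ 4 := by
    refine (Complex.norm_le_abs_re_add_abs_im _).trans ?_
    simp only [add_re, one_re, add_im, one_im, hre, him, add_zero]
    rw [abs_of_nonneg (by linarith)]
    linarith
  have h5 : 0 < ‖s+1‖ := norm_pos_iff.2 (add_one_ne (by linarith))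
  have h6 : (NN q t)^(-ε) ≤ (q:ℝ)^(-ε) := by
    apply Real.rpow_le_rpow_of_nonpos
    · exact_mod_cast Nat.pos_of_ne_zero hq0
    · exact q_le_NN q t
    · linarith
  rw [hF, norm_div, norm_mul]
  calc c * m / 4 * (NN q t)^(-ε) ≤ c * m / 4 * (q:ℝ)^(-ε) := by gcongr
    _ = (c * (q:ℝ)^(-ε)) * m / 4 := by ring
    _ ≤ _ := by
      gcongr
      exact h2.trans h1

lemma FF_lower_quad {ε : ℝ} (hε : 0 < ε) (hε2 : ε ≤ 1/2) : ∃ c : ℝ, 0 < c ∧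
    ∀ (q : ℕ) [NeZero q] (χ : DirichletCharacter ℂ q) (x t : ℝ), χ^2 = 1 → χ ≠ 1 → 0 < x → x ≤ 1 →
    c * (NN q t)^(-(29*ε)) ≤ ‖FF χ (1 + x + I * t)‖ := by
  obtain ⟨C, hC, hF⟩ := FF_bound hε hε2
  obtain ⟨c₁, hc₁, hlow⟩ := FF_lower1 hε hε2
  obtain ⟨c₀, hc₀, hsieg0⟩ := siegel hε
  obtain ⟨cS, hcS, hcS1, hsieg⟩ : ∃ cS : ℝ, 0 < cS ∧ cS ≤ 1 ∧ ∀ (q : ℕ) [NeZero q]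
    (χ : DirichletCharacter ℂ q), χ^2 = 1 → χ ≠ 1 → cS * (q:ℝ)^(-ε) ≤ ‖χ.LFunction 1‖ := by
    refine ⟨min c₀ 1, by positivity, min_le_right _ _, fun q _ χ h1 h2 => le_trans ?_ (hsieg0 q χ h1 h2)⟩
    gcongr
    exact min_le_left _ _
  set κ := cS/(12*C) with hκ
  have hκ0 : 0 < κ := by positivity
  have hκ1 : κ ≤ 1 := by rw [hκ, div_le_one (by positivity)]; linarith
  refine ⟨min (c₁*κ^5) (min (cS/2) (κ/(20*C))), by positivity, ?_⟩
  intro q _ χ x t h2 hne hx hx1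
  have hq0 : q ≠ 0 := NeZero.ne q
  have hq1 : (1:ℝ) ≤ q := by exact_mod_cast Nat.one_le_iff_ne_zero.2 hq0
  have hN := two_le_NN q t
  have hqN := q_le_NN q t
  set N := NN q t with hNdef
  have hpw : ∀ a : ℝ, 0 ≤ a → N^(-a) ≤ (q:ℝ)^(-a) := fun a ha =>
    Real.rpow_le_rpow_of_nonpos (by linarith) hqN (by linarith)
  have hmono : ∀ a : ℝ, a ≤ 29*ε → N^(-(29*ε)) ≤ N^(-a) := fun a ha =>
    Real.rpow_le_rpow_of_exponent_le (by linarith) (by linarith)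
  set η := κ * (q:ℝ)^(-(3*ε)) with hη
  have hq3 : (q:ℝ)^(-(3*ε)) ≤ 1 := Real.rpow_le_one_of_one_le_of_nonpos hq1 (by linarith)
  have hq3' : 0 < (q:ℝ)^(-(3*ε)) := by positivity
  have hη0 : 0 < η := by positivity
  have hη1 : η ≤ 1 := by rw [hη]; nlinarith
  by_cases ht : η ≤ |t|
  · have h := hlow η hη0 hη1 q χ x t hx hx1 (Or.inr ht)
    refine le_trans ?_ h
    have e1 : N^(-(15*ε)) ≤ ((q:ℝ)^(-(3*ε)))^5 := by
      rw [← Real.rpow_natCast, ← Real.rpow_mul (by linarith)]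
      refine (hpw _ (by linarith)).trans (le_of_eq ?_)
      congr 1; push_cast; ring
    calc _ ≤ (c₁*κ^5) * N^(-(29*ε)) := by gcongr; exact min_le_left _ _
      _ = (c₁*κ^5) * (N^(-(15*ε)) * N^(-(14*ε))) := by
        rw [← Real.rpow_add (by linarith)]; congr 2; ring
      _ ≤ (c₁*κ^5) * (((q:ℝ)^(-(3*ε)))^5 * N^(-(14*ε))) := by gcongr
      _ = _ := by rw [hη]; ring
  · push Not at ht
    by_cases hxη : x ≤ η
    · have hl := FF_lip hε (by linarith) (fun s h1 h2 => (hF q χ s h1 h2).2) hε2 (T := 1)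
        (z := 1 + x + I * t) (w := 1) (by simp; linarith) (by simp; linarith)
        (by simp; linarith) (by simp; linarith) (by simp; linarith) (by simp)
      have h1 := hsieg q χ h2 hne
      rw [← FF_of_ne hne (by simp)] at h1
      have h3 : ‖(1:ℂ) - (1 + x + I * t)‖ ≤ 2 * η := by
        refine (Complex.norm_le_abs_re_add_abs_im _).trans ?_
        simp [abs_of_pos hx]
        linarith
      have h4 : (NN q 1)^(2*ε) ≤ 3 * (q:ℝ)^(2*ε) := by
        have : NN q 1 = 3 * q := by simp [NN]; ring
        rw [this, Real.mul_rpow (by norm_num) (by linarith)]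
        gcongr
        calc (3:ℝ)^(2*ε) ≤ 3^(1:ℝ) := by gcongr; norm_num; linarith
          _ = 3 := by norm_num
      have h5 : C * (NN q 1)^(2*ε) * ‖(1:ℂ) - (1 + x + I * t)‖ ≤ C * (3 * (q:ℝ)^(2*ε)) * (2*η) := by
        gcongr
      have h6 : C * (3 * (q:ℝ)^(2*ε)) * (2*η) = cS/2 * (q:ℝ)^(-ε) := by
        have : (q:ℝ)^(-ε) = (q:ℝ)^(2*ε) * (q:ℝ)^(-(3*ε)) := by
          rw [← Real.rpow_add (by linarith)]; congr 1; ring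
        rw [this, hη, hκ]; field_simp; ring
      have h7 := norm_sub_norm_le (FF χ 1) (FF χ (1 + x + I * t))
      have h8 : cS/2 * (q:ℝ)^(-ε) ≤ ‖FF χ (1 + x + I * t)‖ := by linarith
      refine le_trans ?_ h8
      calc _ ≤ (cS/2) * N^(-(29*ε)) := by
            gcongr; exact (min_le_right _ _).trans (min_le_left _ _)
        _ ≤ (cS/2) * (q:ℝ)^(-ε) := by
            gcongr
            exact (hmono ε (by linarith)).trans (hpw ε hε.le)
    · push Not at hxη
      have h := three_four_one χ (t := t) hx hx1 one_pos le_rfl hx hx1 (Or.inl hne)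
        (Or.inr (Or.inr le_rfl))
      set M := N^(2*ε) with hM
      have hM1 : 1 ≤ M := Real.one_le_rpow (by linarith) (by linarith)
      set g := ‖FF χ (1 + x + I * t)‖
      have hF1 : ‖FF (1 : DirichletCharacter ℂ q) (1 + x)‖ ≤ C * M := by
        refine (hF q 1 (1+x) (by simp; linarith) (by simp; linarith)).1.trans ?_
        have := two_le_NN q (1 + (x:ℂ)).im
        rw [hM]
        gcongr
        apply NN_mono
        simp
      have hF2 : ‖FF (χ^2) (1 + x + 2 * I * t)‖ ≤ C * (2^2 * M) := by
        refine (hF q (χ^2) (1+x+2*I*t) (by simp; linarith) (by simp; linarith)).1.trans ?_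
        have h3 := two_le_NN q (1 + (x:ℂ) + 2 * I * t).im
        gcongr
        have h4 : NN q (1 + (x:ℂ) + 2 * I * t).im ≤ 2 * NN q t := by
          simp [NN, abs_mul]
          nlinarith
        calc (NN q (1 + (x:ℂ) + 2 * I * t).im)^(2*ε) ≤ (2 * NN q t)^(2*ε) := by gcongr
          _ = 2^(2*ε) * M := Real.mul_rpow (by norm_num) (by linarith)
          _ ≤ 2^(2:ℝ) * M := by
            gcongr
            · norm_num
            · linarith
          _ = 2^2 * M := by norm_num
      have h5 : 1 ≤ (C*M*(3/x))^3 * (g * (3/1))^4 * (C*(2^2*M) * (3/x)) := by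
        refine h.trans ?_
        gcongr
      have h6 : (C*M*(3/x))^3 * (g * (3/1))^4 * (C*(2^2*M) * (3/x)) =
          26244 * (C * M * g)^4 / x^4 := by
        field_simp; ring
      rw [h6, le_div_iff₀ (by positivity), one_mul] at h5
      have hg0 : 0 ≤ g := norm_nonneg _
      have h7 : x ≤ 20 * (C * M * g) := by
        refine le_of_pow_le_pow_left₀ (n := 4) (by norm_num) (by positivity) ?_
        have : 0 ≤ (C*M*g)^4 := by positivity
        rw [mul_pow]; linarith
      have h8 : η/(20*C)/M ≤ g := by
        rw [div_div, div_le_iff₀ (by positivity)]; linarith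
      refine le_trans ?_ h8
      calc _ ≤ (κ/(20*C)) * N^(-(29*ε)) := by
            gcongr; exact (min_le_right _ _).trans (min_le_right _ _)
        _ ≤ (κ/(20*C)) * (N^(-(3*ε)) * N^(-(2*ε))) := by
            rw [← Real.rpow_add (show 0 < N by linarith)]
            gcongr
            · linarith
            · linarith
        _ ≤ (κ/(20*C)) * ((q:ℝ)^(-(3*ε)) * N^(-(2*ε))) := by
            have := hpw (3*ε) (by linarith); exact mul_le_mul_of_nonneg_left (mul_le_mul_of_nonneg_right this (by positivity)) (by positivity)
        _ = _ := by rw [hη, hM, Real.rpow_neg (show 0 ≤ N by linarith) (2*ε)]; ring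

lemma FF_lower {δ : ℝ} (hδ : 0 < δ) : ∃ c : ℝ, 0 < c ∧ c ≤ 1 ∧
    ∀ (q : ℕ) [NeZero q] (χ : DirichletCharacter ℂ q) (s : ℂ), 1 < s.re → s.re ≤ 2 →
    c * (NN q s.im)^(-δ) ≤ ‖FF χ s‖ := by
  set ε := min (δ/29) (1/2) with hε
  have hε0 : 0 < ε := by positivity
  have hε2 : ε ≤ 1/2 := min_le_right _ _
  have hεδ : 29*ε ≤ δ := by have := min_le_left (δ/29) (1/2); rw [hε]; linarith
  obtain ⟨c₁, hc₁, h₁⟩ := FF_lower1 hε0 hε2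
  obtain ⟨c₂, hc₂, h₂⟩ := FF_lower_triv hε0
  obtain ⟨c₃, hc₃, h₃⟩ := FF_lower_quad hε0 hε2
  set c := min (min c₁ c₂) (min c₃ 1) with hc
  have hc0 : 0 < c := by positivity
  refine ⟨c, hc0, (min_le_right _ _).trans (min_le_right _ _), ?_⟩
  intro q _ χ s hs1 hs2
  have hs : s = 1 + ((s.re - 1 : ℝ) : ℂ) + I * s.im := by
    apply Complex.ext <;> simp
  have hN := two_le_NN q s.im
  have key : ∀ c' a : ℝ, c ≤ c' → a ≤ 29*ε → c * (NN q s.im)^(-δ) ≤ c' * (NN q s.im)^(-a) := by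
    intro c' a hc' ha
    have : (NN q s.im)^(-δ) ≤ (NN q s.im)^(-a) :=
      Real.rpow_le_rpow_of_exponent_le (by linarith) (by linarith)
    have h0 : 0 ≤ (NN q s.im)^(-δ) := by positivity
    exact mul_le_mul hc' this h0 (by linarith)
  rw [hs]
  have hsim : (1 + ((s.re - 1 : ℝ) : ℂ) + I * s.im).im = s.im := by rw [← hs]
  rw [hsim]
  have hcc₁ : c ≤ c₁ := (min_le_left _ _).trans (min_le_left _ _)
  have hcc₂ : c ≤ c₂ := (min_le_left _ _).trans (min_le_right _ _)
  have hcc₃ : c ≤ c₃ := (min_le_right _ _).trans (min_le_left _ _)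
  have low1 : (χ^2 ≠ 1 ∨ 1 ≤ |s.im|) →
      c * (NN q s.im)^(-δ) ≤ ‖FF χ (1 + ((s.re - 1 : ℝ) : ℂ) + I * s.im)‖ := by
    intro h
    have := h₁ 1 one_pos le_rfl q χ (s.re-1) s.im (by linarith) (by linarith) h
    rw [one_pow, mul_one] at this
    exact (key c₁ _ hcc₁ (by linarith)).trans this
  by_cases hq : χ^2 = 1
  · by_cases h1 : χ = 1
    · by_cases ht : 1 ≤ |s.im|
      · exact low1 (Or.inr ht)
      · subst h1
        push Not at ht
        exact (key c₂ _ hcc₂ (by linarith)).trans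
          (h₂ q (s.re-1) s.im (by linarith) (by linarith) ht.le)
    · exact (key c₃ _ hcc₃ (by linarith)).trans
          (h₃ q χ (s.re-1) s.im hq h1 (by linarith) (by linarith))
  · exact low1 (Or.inl hq)

end SW
end Part8

section Part9
open Finset Complex Filter Topology MeasureTheory

namespace SW

lemma G_ball {ε : ℝ} (hε : 0 < ε) (hε2 : ε ≤ 1/2) : ∃ κ C : ℝ, 0 < κ ∧ κ ≤ ε/2 ∧ 1 ≤ C ∧
    ∀ (q : ℕ) [NeZero q] (χ : DirichletCharacter ℂ q) (s : ℂ), 1 < s.re → s.re ≤ 2 →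
    ∀ z ∈ Metric.closedBall s (κ * (NN q s.im)^(-(3*ε))),
      DifferentiableAt ℂ (logDeriv (FF χ)) z ∧ ‖logDeriv (FF χ) z‖ ≤ C * (NN q s.im)^(3*ε) := by
  obtain ⟨C, hC, hF⟩ := FF_bound hε hε2
  obtain ⟨c, hc, hc1, hlow⟩ := FF_lower hε
  have hκ2 : c*ε/(8*C) ≤ ε/2 := by
    rw [div_le_div_iff₀ (by positivity) (by norm_num)]; nlinarith
  refine ⟨c*ε/(8*C), 4*C/c, by positivity, hκ2, ?_, ?_⟩
  · rw [le_div_iff₀ hc]; linarith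
  intro q _ χ s hs1 hs2 z hz
  have hN := two_le_NN q s.im
  set N := NN q s.im with hNdef
  have hN3 : N^(-(3*ε)) ≤ 1 := Real.rpow_le_one_of_one_le_of_nonpos (by linarith) (by linarith)
  have hN3' : 0 < N^(-(3*ε)) := by positivity
  rw [Metric.mem_closedBall, dist_eq_norm] at hz
  have hr : c*ε/(8*C) * N^(-(3*ε)) ≤ ε/2 := by
    have : 0 < c*ε/(8*C) := by positivity
    nlinarith
  have hzs := hz.trans hr
  have hre := (abs_le.1 ((abs_re_le_norm (z - s)).trans hzs))
  have him := (abs_im_le_norm (z - s)).trans hzs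
  simp only [sub_re, sub_im] at hre him
  have hzim : |z.im| ≤ |s.im| + 1 := by
    have := abs_sub_abs_le_abs_sub z.im s.im
    linarith
  have hT : NN q (|s.im|+1) ≤ 2 * N := by
    rw [hNdef, NN, NN, abs_of_nonneg (by positivity)]
    have : (0:ℝ) ≤ q := by positivity
    have := abs_nonneg s.im
    nlinarith
  have hpw2 : (2*N)^(2*ε) ≤ 2 * N^(2*ε) := by
    rw [Real.mul_rpow (by norm_num) (by linarith)]
    gcongr
    calc (2:ℝ)^(2*ε) ≤ 2^(1:ℝ) := by gcongr; norm_num; linarith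
      _ = 2 := by norm_num
  have hTT : (NN q (|s.im|+1))^(2*ε) ≤ 2 * N^(2*ε) := by
    refine le_trans ?_ hpw2
    have := two_le_NN q (|s.im|+1)
    gcongr
  have hz1 : 1 - ε/2 ≤ z.re := by linarith [hre.1]
  have hz2 : z.re ≤ 5/2 := by linarith [hre.2]
  have hl := FF_lip hε (by linarith) (fun s h1 h2 => (hF q χ s h1 h2).2) hε2 (T := |s.im|+1)
    (z := z) (w := s) hz1 hz2 (by linarith) (by linarith) hzim (by linarith)
  have h1 : C * (NN q (|s.im|+1))^(2*ε) * ‖s - z‖ ≤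
      C * (2 * N^(2*ε)) * (c*ε/(8*C) * N^(-(3*ε))) := by
    rw [norm_sub_rev]
    gcongr
  have hNe : N^(-ε) = N^(2*ε) * N^(-(3*ε)) := by
    rw [← Real.rpow_add (by linarith)]; congr 1; ring
  have h2 : C * (2 * N^(2*ε)) * (c*ε/(8*C) * N^(-(3*ε))) = (c * N^(-ε)) * (ε/4) := by
    rw [hNe]; field_simp; ring
  have h3 := hlow q χ s hs1 hs2
  have hpos : 0 < c * N^(-ε) := by positivity
  have h4 := norm_sub_norm_le (FF χ s) (FF χ z)
  have h5 : c/2 * N^(-ε) ≤ ‖FF χ z‖ := by nlinarith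
  have hFz : FF χ z ≠ 0 := by
    rw [← norm_pos_iff]; exact lt_of_lt_of_le (by positivity) h5
  have hz0 : 0 < z.re := by linarith
  constructor
  · have hd : DifferentiableOn ℂ (FF χ) {s : ℂ | 0 < s.re} := fun w hw =>
      (differentiableAt_FF χ hw).differentiableWithinAt
    have hopen : IsOpen {s : ℂ | 0 < s.re} := isOpen_lt continuous_const Complex.continuous_re
    exact ((hd.deriv hopen).differentiableAt (hopen.mem_nhds hz0)).div
      (differentiableAt_FF χ hz0) hFz
  · rw [logDeriv_apply, norm_div]
    have h6 := (hF q χ z hz1 hz2).2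
    have h7 : (NN q z.im)^(2*ε) ≤ 2 * N^(2*ε) := by
      refine le_trans ?_ hTT
      have := two_le_NN q z.im
      gcongr
      apply NN_mono
      rw [abs_of_nonneg (by positivity : 0 ≤ |s.im|+1)]
      exact hzim
    have h8 : N^(3*ε) * N^(-ε) = N^(2*ε) := by
      rw [← Real.rpow_add (by linarith)]; congr 1; ring
    rw [div_le_iff₀ (norm_pos_iff.2 hFz)]
    calc ‖deriv (FF χ) z‖ ≤ C * (2 * N^(2*ε)) := h6.trans (by gcongr)
      _ = 4*C/c * N^(3*ε) * (c/2 * N^(-ε)) := by rw [← h8]; field_simp; ring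
      _ ≤ _ := by gcongr

/-- the coefficient sequence -/
noncomputable def rr {q : ℕ} (a : ZMod q) (n : ℕ) : ℝ :=
  ArithmeticFunction.vonMangoldt.residueClass a n - (q.totient : ℝ)⁻¹

lemma rr_abscissa {q : ℕ} (a : ZMod q) :
    LSeries.abscissaOfAbsConv (fun n => ((rr a n : ℝ) : ℂ)) ≤ 1 := by
  refine LSeries.abscissaOfAbsConv_le_of_forall_lt_LSeriesSummable fun y hy => ?_
  have h1 : LSeriesSummable (fun n => ((ArithmeticFunction.vonMangoldt.residueClass a n : ℝ) : ℂ)) y := by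
    apply LSeriesSummable_of_abscissaOfAbsConv_lt_re
    refine lt_of_le_of_lt (ArithmeticFunction.vonMangoldt.abscissaOfAbsConv_residueClass_le_one a) ?_
    simpa using (by exact_mod_cast hy : (1:EReal) < (y:EReal))
  have h2 : LSeriesSummable (fun n => ((q.totient : ℂ)⁻¹ • (1 : ℕ → ℂ)) n) y :=
    (LSeriesSummable_one_iff.2 (by simpa using hy)).smul _
  refine (h1.sub h2).congr' _ ?_
  filter_upwards with n
  simp [rr]

lemma rr_LSeries {q : ℕ} [NeZero q] {a : ZMod q} (ha : IsUnit a) {s : ℂ} (hs : 1 < s.re) :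
    LSeries (fun n => ((rr a n : ℝ) : ℂ)) s = -(q.totient : ℂ)⁻¹ *
      (∑ χ : DirichletCharacter ℂ q, χ a⁻¹ * logDeriv (FF χ) s + 1/(s+1) +
        J (1 : DirichletCharacter ℂ 1) s) := by
  classical
  have h1 : LSeriesSummable (fun n => ((ArithmeticFunction.vonMangoldt.residueClass a n : ℝ) : ℂ)) s := by
    apply LSeriesSummable_of_abscissaOfAbsConv_lt_re
    refine lt_of_le_of_lt (ArithmeticFunction.vonMangoldt.abscissaOfAbsConv_residueClass_le_one a) ?_
    exact_mod_cast hs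
  have h2 : LSeriesSummable (((q.totient : ℂ)⁻¹ • (1 : ℕ → ℂ))) s :=
    (LSeriesSummable_one_iff.2 hs).smul _
  have e : (fun n => ((rr a n : ℝ) : ℂ)) =
    (fun n => ((ArithmeticFunction.vonMangoldt.residueClass a n : ℝ) : ℂ)) -
      ((q.totient : ℂ)⁻¹ • (1 : ℕ → ℂ)) := by
    ext n; simp [rr]
  have hs1 : s ≠ 1 := by rintro rfl; simp at hs
  have hs1' : s - 1 ≠ 0 := sub_ne_zero.2 hs1
  have hsp : s + 1 ≠ 0 := add_one_ne (by linarith)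
  rw [e, LSeries_sub h1 h2, LSeries_smul, LSeries_one_eq_riemannZeta hs,
    ArithmeticFunction.vonMangoldt.LSeries_residueClass_eq ha hs]
  have hz := LFunction_eq_J (1 : DirichletCharacter ℂ 1) (s := s) (by linarith) (Or.inl hs1)
  rw [DirichletCharacter.LFunction_modOne_eq, dl_mod_one] at hz
  have hlog : ∀ χ : DirichletCharacter ℂ q, deriv χ.LFunction s / χ.LFunction s =
      logDeriv (FF χ) s + (if χ = 1 then 1/(s+1) - 1/(s-1) else 0) := by
    intro χ
    have hLne : χ.LFunction s ≠ 0 := χ.LFunction_ne_zero_of_one_le_re (Or.inr hs1) hs.le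
    have hLd : DifferentiableAt ℂ χ.LFunction s :=
      χ.differentiableAt_LFunction s (Or.inl hs1)
    have hev : ∀ᶠ w in 𝓝 s, 1 < w.re :=
      (isOpen_lt continuous_const Complex.continuous_re).mem_nhds hs
    split_ifs with hχ
    · have hE : FF χ =ᶠ[𝓝 s] fun w => (w-1)/(w+1) * χ.LFunction w := by
        filter_upwards [hev] with w hw
        exact FF_of_eq hχ (by linarith) (by rintro rfl; simp at hw)
      have hlg : logDeriv (FF χ) s = logDeriv (fun w => (w-1)/(w+1) * χ.LFunction w) s := by
        rw [logDeriv_apply, logDeriv_apply, hE.deriv_eq, hE.eq_of_nhds]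
      rw [hlg, logDeriv_mul (f := fun w => (w-1)/(w+1)) s (div_ne_zero hs1' hsp) hLne
        (by fun_prop (disch := exact hsp)) hLd,
        logDeriv_div (f := fun w => w-1) (g := fun w => w+1) s hs1' hsp (by fun_prop) (by fun_prop)]
      simp only [logDeriv_apply]
      have d1 : deriv (fun w : ℂ => w - 1) s = 1 := by simp
      have d2 : deriv (fun w : ℂ => w + 1) s = 1 := by simp
      rw [d1, d2]
      ring
    · have hE : FF χ =ᶠ[𝓝 s] χ.LFunction := by
        filter_upwards [hev] with w hw
        exact FF_of_ne hχ (by linarith)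
      rw [logDeriv_apply, hE.deriv_eq, hE.eq_of_nhds, add_zero]
  simp_rw [hlog, mul_add, sum_add_distrib, mul_ite, mul_zero]
  rw [Finset.sum_ite_eq' univ (1 : DirichletCharacter ℂ q)]
  have h1a : (1 : DirichletCharacter ℂ q) a⁻¹ = 1 := by
    apply MulChar.one_apply
    obtain ⟨u, rfl⟩ := ha
    rw [ZMod.inv_coe_unit]; exact u⁻¹.isUnit
  simp only [mem_univ, if_true, h1a, hz]
  ring

end SW
end Part9

section Part10
open Finset Complex Filter Topology MeasureTheory

namespace SW

lemma logMul_iter (f : ℕ → ℝ) (k : ℕ) : LSeries.logMul^[k] (fun n => ((f n : ℝ) : ℂ)) =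
    fun n : ℕ => (((Real.log n)^k * f n : ℝ) : ℂ) := by
  induction k with
  | zero => simp
  | succ k ih =>
    rw [Function.iterate_succ', Function.comp_apply, ih]
    ext n
    simp only [LSeries.logMul]
    rw [← natCast_log, ← ofReal_mul]
    congr 1; ring

lemma rr_log_abscissa {q : ℕ} (a : ZMod q) (k : ℕ) :
    LSeries.abscissaOfAbsConv (fun n : ℕ => (((Real.log n)^k * rr a n : ℝ) : ℂ)) ≤ 1 := by
  rw [← logMul_iter, LSeries.absicssaOfAbsConv_logPowMul]
  exact rr_abscissa a

lemma alg_aux {A B C D : ℝ} (hA : 1 ≤ A) (hB : 1 ≤ B) (hC : 0 ≤ C) (hD : 0 ≤ D) :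
    C * A + 1 + D * (2 * B) ≤ (C + 1 + 2 * D) * (A * B) := by
  have hAB : A ≤ A * B := by nlinarith
  have hAB2 : B ≤ A * B := by nlinarith
  have h1 := mul_le_mul_of_nonneg_left hAB hC
  have h2 := mul_le_mul_of_nonneg_left hAB2 hD
  linarith

set_option maxHeartbeats 1000000 in
lemma rr_bound (k : ℕ) {δ : ℝ} (hδ : 0 < δ) : ∃ C : ℝ, 0 < C ∧
    ∀ (q : ℕ) [NeZero q] (a : ZMod q) (s : ℂ), IsUnit a → 1 < s.re → s.re ≤ 2 →
    ‖LSeries (fun n : ℕ => (((Real.log n)^k * rr a n : ℝ) : ℂ)) s‖ ≤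
      C * (q:ℝ)^δ * (|s.im| + 2)^(1/2:ℝ) := by
  set ε := min δ (1/4) / (3*(k+1)) with hεdef
  have hε0 : 0 < ε := by positivity
  have hεk : 3*ε*(k+1) = min δ (1/4) := by rw [hεdef]; field_simp
  have hk0 : (0:ℝ) ≤ k := by positivity
  have hε4 : 3*ε ≤ 1/4 := by
    have := min_le_right δ (1/4)
    nlinarith
  obtain ⟨κ, C, hκ, hκ4, hC, hG⟩ := G_ball hε0 (by linarith)
  obtain ⟨CJ, hCJ, hJ⟩ := J_bound (ε := 1/8) (by norm_num) (by norm_num)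
  refine ⟨k.factorial * (C + 1 + 2*CJ) / κ^k, by positivity, ?_⟩
  intro q _ a s ha hs1 hs2
  have hq0 : q ≠ 0 := NeZero.ne q
  have hq1 : (1:ℝ) ≤ q := by exact_mod_cast Nat.one_le_iff_ne_zero.2 hq0
  have hN := two_le_NN q s.im
  set N := NN q s.im with hNdef
  set T := |s.im| + 2 with hT
  have hT2 : 2 ≤ T := by rw [hT]; linarith [abs_nonneg s.im]
  set r := κ * N^(-(3*ε)) with hr
  have hN3 : N^(-(3*ε)) ≤ 1 := Real.rpow_le_one_of_one_le_of_nonpos (by linarith) (by linarith)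
  have hN3' : 0 < N^(-(3*ε)) := by positivity
  have hr0 : 0 < r := by positivity
  have hr1 : r ≤ 1/8 := by rw [hr]; nlinarith
  set E : ℂ → ℂ := fun s => -(q.totient : ℂ)⁻¹ *
      (∑ χ : DirichletCharacter ℂ q, χ a⁻¹ * logDeriv (FF χ) s + 1/(s+1) +
        J (1 : DirichletCharacter ℂ 1) s) with hE
  have hev : (LSeries (fun n => ((rr a n : ℝ) : ℂ))) =ᶠ[𝓝 s] E := by
    filter_upwards [(isOpen_lt continuous_const Complex.continuous_re).mem_nhds hs1] with w hw
    exact rr_LSeries ha hw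
  have hzfacts : ∀ z ∈ Metric.closedBall s r, 7/8 ≤ z.re ∧ z.re ≤ 3 ∧ |z.im| + 2 ≤ 2 * T := by
    intro z hz
    rw [Metric.mem_closedBall, dist_eq_norm] at hz
    have h1 := abs_le.1 ((abs_re_le_norm (z - s)).trans hz)
    have h2 := (abs_im_le_norm (z - s)).trans hz
    simp only [sub_re, sub_im] at h1 h2
    have h3 := abs_sub_abs_le_abs_sub z.im s.im
    refine ⟨by linarith, by linarith, by linarith⟩
  have hdiff : ∀ z ∈ Metric.closedBall s r, DifferentiableAt ℂ E z := by
    intro z hz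
    have hre := (hzfacts z hz).1
    have h1 : ∀ χ : DirichletCharacter ℂ q, DifferentiableAt ℂ (logDeriv (FF χ)) z :=
      fun χ => (hG q χ s hs1 hs2 z hz).1
    have h2 := add_one_ne (s := z) (by linarith)
    have h3 := differentiableAt_J (1 : DirichletCharacter ℂ 1) (s := z) (by linarith)
    have h4 : DifferentiableAt ℂ
        (fun s => ∑ χ : DirichletCharacter ℂ q, χ a⁻¹ * logDeriv (FF χ) s) z :=
      DifferentiableAt.fun_sum fun χ _ => (h1 χ).const_mul _
    rw [hE]
    have h5 : DifferentiableAt ℂ (fun s : ℂ => 1/(s+1)) z := by fun_prop (disch := exact h2)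
    exact ((h4.add h5).add h3).const_mul _
  have hbd : ∀ z ∈ Metric.closedBall s r, ‖E z‖ ≤ (C + 1 + 2*CJ) * (N^(3*ε) * T^(1/4:ℝ)) := by
    intro z hz
    obtain ⟨hz1, hz2, hz3⟩ := hzfacts z hz
    set φ : ℝ := (q.totient : ℝ) with hφ
    have hφ1 : 1 ≤ φ := by
      rw [hφ]; exact_mod_cast Nat.totient_pos.2 (Nat.pos_of_ne_zero hq0)
    have hA : 1 ≤ N^(3*ε) := Real.one_le_rpow (by linarith) (by linarith)
    have hB : 1 ≤ T^(1/4:ℝ) := Real.one_le_rpow (by linarith) (by norm_num)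
    have hsum : ‖∑ χ : DirichletCharacter ℂ q, χ a⁻¹ * logDeriv (FF χ) z‖ ≤ φ * (C * N^(3*ε)) := by
      refine (norm_sum_le _ _).trans ?_
      have : ∀ χ ∈ (univ : Finset (DirichletCharacter ℂ q)),
          ‖χ a⁻¹ * logDeriv (FF χ) z‖ ≤ C * N^(3*ε) := by
        intro χ _
        rw [norm_mul]
        have h1 := χ.norm_le_one a⁻¹
        have h2 := (hG q χ s hs1 hs2 z hz).2
        have := norm_nonneg (logDeriv (FF χ) z)
        nlinarith
      refine (sum_le_card_nsmul _ _ _ this).trans (le_of_eq ?_)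
      rw [nsmul_eq_mul, hφ, card_univ, ← Nat.card_eq_fintype_card,
        DirichletCharacter.card_eq_totient_of_hasEnoughRootsOfUnity ℂ q]
    have h1 : ‖1/(z+1)‖ ≤ 1 := by
      rw [norm_div, norm_one, div_le_one (norm_pos_iff.2 (add_one_ne (by linarith)))]
      have := (le_abs_self _).trans (abs_re_le_norm (z+1))
      simp at this
      linarith
    have h2 : ‖J (1 : DirichletCharacter ℂ 1) z‖ ≤ CJ * (2 * T^(1/4:ℝ)) := by
      refine (hJ 1 1 z (by linarith) hz2).trans ?_
      gcongr
      rw [show (2:ℝ)*(1/8) = 1/4 by norm_num]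
      calc (((1:ℕ):ℝ) * (|z.im| + 2))^(1/4:ℝ) ≤ (2 * T)^(1/4:ℝ) := by
            apply Real.rpow_le_rpow (by positivity) _ (by norm_num)
            simpa using hz3
        _ = 2^(1/4:ℝ) * T^(1/4:ℝ) := Real.mul_rpow (by norm_num) (by linarith)
        _ ≤ 2^(1:ℝ) * T^(1/4:ℝ) := by gcongr <;> norm_num
        _ = _ := by norm_num
    have h3 : ‖E z‖ ≤ φ⁻¹ * (φ * (C * N^(3*ε)) + 1 + CJ * (2 * T^(1/4:ℝ))) := by
      rw [hE]
      simp only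
      rw [norm_mul, norm_neg, norm_inv, Complex.norm_natCast]
      gcongr
      exact (norm_add₃_le).trans (by gcongr)
    have h4 : φ⁻¹ * (φ * (C * N^(3*ε)) + 1 + CJ * (2 * T^(1/4:ℝ))) ≤
        C * N^(3*ε) + 1 + CJ * (2 * T^(1/4:ℝ)) := by
      have h5 : φ⁻¹ ≤ 1 := inv_le_one_of_one_le₀ hφ1
      have h6 : 0 ≤ 1 + CJ * (2 * T^(1/4:ℝ)) := by positivity
      have h7 : φ⁻¹ * (φ * (C * N^(3*ε)) + 1 + CJ * (2 * T^(1/4:ℝ))) =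
        C * N^(3*ε) + φ⁻¹ * (1 + CJ * (2 * T^(1/4:ℝ))) := by field_simp; ring
      rw [h7]
      nlinarith
    refine h3.trans (h4.trans ?_)
    exact alg_aux hA hB (by linarith) (by linarith)
  have hcau := Complex.norm_iteratedDeriv_le_of_forall_mem_sphere_norm_le (c := s) (f := E)
    k hr0 ⟨fun z hz => (hdiff z (Metric.ball_subset_closedBall hz)).differentiableWithinAt, ?_⟩
    (fun z hz => hbd z (Metric.sphere_subset_closedBall hz))
  swap
  · intro z hz
    have := Metric.closure_ball_subset_closedBall hz
    exact (hdiff z this).continuousAt.continuousWithinAt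
  have habs : LSeries.abscissaOfAbsConv (fun n => ((rr a n : ℝ) : ℂ)) < s.re :=
    lt_of_le_of_lt (rr_abscissa a) (by exact_mod_cast hs1)
  have hit := LSeries_iteratedDeriv k habs
  rw [logMul_iter, hev.iteratedDeriv_eq] at hit
  rw [hit, norm_mul, norm_pow, norm_neg, norm_one, one_pow, one_mul] at hcau
  refine hcau.trans ?_
  have e1 : (k.factorial:ℝ) * ((C + 1 + 2*CJ) * (N^(3*ε) * T^(1/4:ℝ))) / r^k =
      (k.factorial * (C + 1 + 2*CJ) / κ^k) * (N^(3*ε*(k+1)) * T^(1/4:ℝ)) := by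
    have : N^(3*ε*(k+1)) = N^(3*ε) * (N^(3*ε))^k := by
      rw [← Real.rpow_natCast, ← Real.rpow_mul (by linarith), ← Real.rpow_add (by linarith)]
      congr 1; ring
    rw [this, hr, Real.rpow_neg (by linarith)]
    have hpos : 0 < N^(3*ε) := by positivity
    rw [mul_pow, inv_pow]
    field_simp
  have e2 : N^(3*ε*(k+1)) ≤ (q:ℝ)^δ * T^(1/4:ℝ) := by
    rw [hεk, hNdef, NN, Real.mul_rpow (by linarith) (by linarith)]
    exact mul_le_mul (Real.rpow_le_rpow_of_exponent_le hq1 (min_le_left _ _))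
      (Real.rpow_le_rpow_of_exponent_le (by linarith) (min_le_right _ _)) (by positivity)
      (by positivity)
  have e3 : T^(1/2:ℝ) = T^(1/4:ℝ) * T^(1/4:ℝ) := by
    rw [← Real.rpow_add (by linarith)]; norm_num
  rw [e1, mul_assoc _ ((q:ℝ)^δ), e3, ← mul_assoc ((q:ℝ)^δ)]
  refine mul_le_mul_of_nonneg_left (mul_le_mul_of_nonneg_right e2 (by positivity)) ?_
  positivity

end SW
end Part10

section Part11
open Finset Complex Filter Topology MeasureTheory

namespace SW

/-- the tent function -/
noncomputable def tent (u : ℝ) : ℂ :=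
  Set.indicator (Set.Ioc (0:ℝ) 1) (fun _ => (1:ℂ)) u - Set.indicator (Set.Ioc (0:ℝ) 1) (fun t : ℝ => (t:ℂ)^(1:ℂ)) u

lemma tent_eq {u : ℝ} (hu : 0 < u) : tent u = ((max (1-u) 0 : ℝ) : ℂ) := by
  unfold tent
  by_cases h : u ≤ 1
  · rw [Set.indicator_of_mem (Set.mem_Ioc.2 ⟨hu, h⟩), Set.indicator_of_mem (Set.mem_Ioc.2 ⟨hu, h⟩),
      max_eq_left (by linarith)]
    simp
  · rw [Set.indicator_of_notMem (fun h' => h h'.2), Set.indicator_of_notMem (fun h' => h h'.2),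
      max_eq_right (by linarith)]
    simp

lemma tent_mellin {s : ℂ} (hs : 0 < s.re) : HasMellin tent s (1/(s*(s+1))) := by
  have h1 := hasMellin_one_Ioc hs
  have h2 := hasMellin_cpow_Ioc 1 (s := s) (by simp; linarith)
  have h := hasMellin_sub h1.1 h2.1
  refine ⟨h.1, ?_⟩
  have := h.2
  rw [h1.2, h2.2] at this
  have hs0 : s ≠ 0 := by rintro rfl; simp at hs
  have hs1 := add_one_ne hs
  refine Eq.trans this ?_
  field_simp; ring

lemma kernel_bound {c y : ℝ} (hc : 1 ≤ c) :
    ‖1/(((c:ℂ) + y * I) * ((c:ℂ) + y * I + 1))‖ ≤ 2 * (1 + ‖y‖)^(-2:ℝ) := by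
  have h1 : 1 + y^2 ≤ ‖((c:ℂ) + y * I) * ((c:ℂ) + y * I + 1)‖ := by
    have e1 : ‖(c:ℂ) + y * I‖^2 = c^2 + y^2 := by
      rw [Complex.sq_norm, Complex.normSq_add_mul_I]
    have e2 : ‖(c:ℂ) + y * I + 1‖^2 = (c+1)^2 + y^2 := by
      rw [show (c:ℂ) + y * I + 1 = ((c+1:ℝ):ℂ) + y * I by push_cast; ring,
        Complex.sq_norm, Complex.normSq_add_mul_I]
    rw [norm_mul]
    refine le_of_pow_le_pow_left₀ (n := 2) two_ne_zero (by positivity) ?_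
    rw [mul_pow, e1, e2]
    nlinarith [sq_nonneg y, mul_nonneg (sq_nonneg y) (sq_nonneg y)]
  rw [norm_div, norm_one, Real.rpow_neg (by positivity), ← div_eq_mul_inv, Real.norm_eq_abs]
  rw [div_le_div_iff₀ (by nlinarith [sq_nonneg y]) (by positivity)]
  rw [Real.rpow_two, one_mul]
  have := sq_abs y
  nlinarith [sq_nonneg (1 - |y|)]

lemma kernel_cont {c : ℝ} (hc : 1 ≤ c) :
    Continuous fun y : ℝ => 1/(((c:ℂ) + y * I) * ((c:ℂ) + y * I + 1)) := by
  refine Continuous.div continuous_const (by fun_prop) ?_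
  intro y
  have h : 0 < ((c:ℂ) + y * I).re := by simp; linarith
  refine mul_ne_zero ?_ (add_one_ne h)
  intro h0; rw [h0] at h; simp at h

lemma kernel_int {c : ℝ} (hc : 1 ≤ c) :
    Integrable fun y : ℝ => 1/(((c:ℂ) + y * I) * ((c:ℂ) + y * I + 1)) := by
  have h : Integrable fun y : ℝ => 2 * (1 + ‖y‖)^(-2:ℝ) :=
    (integrable_one_add_norm (by simp)).const_mul 2
  exact h.mono' (kernel_cont hc).aestronglyMeasurable
    (Eventually.of_forall fun y => kernel_bound hc)

lemma tent_inv {c u : ℝ} (hc : 1 ≤ c) (hu : 0 < u) :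
    ∫ y : ℝ, (u:ℂ)^(-((c:ℂ) + y * I)) * (1/(((c:ℂ) + y * I) * ((c:ℂ) + y * I + 1))) =
      2 * Real.pi * ((max (1-u) 0 : ℝ) : ℂ) := by
  have hm : ∀ y : ℝ, mellin tent ((c:ℂ) + y * I) = 1/(((c:ℂ) + y * I) * ((c:ℂ) + y * I + 1)) :=
    fun y => (tent_mellin (by simp; linarith)).2
  have h := mellinInv_mellin_eq c tent hu (tent_mellin (by simp; linarith)).1 ?_ ?_
  · rw [mellinInv] at h
    simp_rw [hm, smul_eq_mul] at h
    rw [tent_eq hu, real_smul] at h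
    rw [← h, ← mul_assoc]
    have hpi : (Real.pi:ℂ) ≠ 0 := ofReal_ne_zero.2 Real.pi_ne_zero
    have h1 : (2*(Real.pi:ℂ)) * ((1/(2*Real.pi) : ℝ):ℂ) = 1 := by push_cast; field_simp
    rw [h1, one_mul]
  · unfold VerticalIntegrable
    simp_rw [hm]
    exact kernel_int hc
  · have : tent =ᶠ[𝓝 u] fun u => ((max (1-u) 0 : ℝ) : ℂ) := by
      filter_upwards [lt_mem_nhds hu] with v hv
      exact tent_eq hv
    refine ContinuousAt.congr ?_ this.symm
    fun_prop

lemma perron_bound : ∃ K₀ : ℝ, 0 < K₀ ∧ ∀ (b : ℕ → ℂ) (c x K : ℝ), 1 ≤ c → 0 < x → 0 ≤ K →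
    LSeriesSummable b c → (∀ y : ℝ, ‖LSeries b ((c:ℂ) + y * I)‖ ≤ K * (|y| + 2)^(1/2:ℝ)) →
    ‖∑ n ∈ Icc 1 ⌊x⌋₊, b n * ((1 - n/x : ℝ) : ℂ)‖ ≤ K₀ * K * x^c := by
  have hint : Integrable fun y : ℝ => 4 * (1 + ‖y‖)^(-(3/2):ℝ) :=
    (integrable_one_add_norm (by norm_num)).const_mul 4
  refine ⟨(∫ y : ℝ, 4 * (1 + ‖y‖)^(-(3/2):ℝ)) + 1, ?_, ?_⟩
  · have : 0 ≤ ∫ y : ℝ, 4 * (1 + ‖y‖)^(-(3/2):ℝ) := integral_nonneg fun y => by positivity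
    linarith
  intro b c x K hc hx hK hsum hL
  set M : ℝ → ℂ := fun y => 1/(((c:ℂ) + y * I) * ((c:ℂ) + y * I + 1)) with hM
  set F : ℕ → ℝ → ℂ := fun n y => b n * (((n/x : ℝ) : ℂ)^(-((c:ℂ) + y * I)) * M y) with hF
  have hsne : ∀ y : ℝ, (c:ℂ) + y * I ≠ 0 := by
    intro y h
    have := congrArg Complex.re h
    simp at this
    linarith
  have hF0 : ∀ y, F 0 y = 0 := by
    intro y
    simp only [hF]
    rw [Nat.cast_zero, zero_div, ofReal_zero, zero_cpow (neg_ne_zero.2 (hsne y))]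
    ring
  have hFn : ∀ n y, F n y = LSeries.term b ((c:ℂ) + y * I) n * ((x:ℂ)^((c:ℂ) + y * I) * M y) := by
    intro n y
    by_cases hn : n = 0
    · subst hn; rw [hF0]; simp
    · have hn' : (0:ℝ) < n := by exact_mod_cast Nat.pos_of_ne_zero hn
      rw [LSeries.term_of_ne_zero hn]
      simp only [hF]
      have : ((n/x : ℝ) : ℂ)^(-((c:ℂ) + y * I)) =
          (x:ℂ)^((c:ℂ) + y * I) / (n:ℂ)^((c:ℂ) + y * I) := by
        rw [div_eq_mul_inv (n:ℝ) x, ofReal_mul, mul_cpow_ofReal_nonneg hn'.le (by positivity),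
          cpow_neg, cpow_neg, ofReal_inv, inv_cpow, inv_inv, ofReal_natCast]
        · ring
        · rw [arg_ofReal_of_nonneg hx.le]; exact Real.pi_pos.ne
      rw [this]; ring
  have hnorm : ∀ n y, ‖F n y‖ = ‖LSeries.term b c n‖ * (x^c * ‖M y‖) := by
    intro n y
    rw [hFn, norm_mul, norm_mul, norm_cpow_eq_rpow_re_of_pos hx, LSeries.norm_term_eq,
      LSeries.norm_term_eq]
    simp
  have hMint : Integrable M := kernel_int hc
  have hFint : ∀ n, Integrable (F n) := by
    intro n
    refine ((hMint.norm.const_mul (x^c)).const_mul ‖LSeries.term b c n‖).mono' ?_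
      (Eventually.of_forall fun y => (hnorm n y).le)
    by_cases hn : n = 0
    · subst hn
      have : F 0 = fun _ => 0 := funext hF0
      rw [this]; exact aestronglyMeasurable_const
    · have hn' : (n/x:ℝ) ≠ 0 := by
        have : (0:ℝ) < n := by exact_mod_cast Nat.pos_of_ne_zero hn
        positivity
      have hcp : Continuous fun y : ℝ => ((n/x : ℝ) : ℂ)^(-((c:ℂ) + y * I)) := by
        refine Continuous.const_cpow (by fun_prop) (Or.inl (ofReal_ne_zero.2 hn'))
      exact (continuous_const.mul (hcp.mul (kernel_cont hc))).aestronglyMeasurable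
  have hFsum : Summable fun n => ∫ y, ‖F n y‖ := by
    have : (fun n => ∫ y, ‖F n y‖) = fun n => ‖LSeries.term b c n‖ * ∫ y, (x^c * ‖M y‖) := by
      ext n
      rw [← integral_const_mul]
      exact integral_congr_ae (Eventually.of_forall fun y => hnorm n y)
    rw [this]
    exact hsum.norm.mul_right _
  have hs := hasSum_integral_of_summable_integral_norm hFint hFsum
  have hval : ∀ n, n ≠ 0 → ∫ y, F n y = 2 * Real.pi * (b n * ((max (1 - n/x) 0 : ℝ) : ℂ)) := by
    intro n hn
    have hn' : (0:ℝ) < n := by exact_mod_cast Nat.pos_of_ne_zero hn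
    simp only [hF]
    rw [integral_const_mul, hM, tent_inv hc (by positivity)]
    ring
  have hfin : ∑' n, ∫ y, F n y = ∑ n ∈ Icc 1 ⌊x⌋₊, ∫ y, F n y := by
    refine tsum_eq_sum fun n hn => ?_
    by_cases h0 : n = 0
    · subst h0; simp [hF0]
    · rw [hval n h0]
      have : ⌊x⌋₊ < n := by
        by_contra hcon
        exact hn (mem_Icc.2 ⟨Nat.one_le_iff_ne_zero.2 h0, not_lt.1 hcon⟩)
      have hxn : x < n := Nat.lt_of_floor_lt this
      rw [max_eq_right]
      · simp
      · have : 1 < n/x := by rw [lt_div_iff₀ hx]; linarith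
        linarith
  have hfin2 : ∑ n ∈ Icc 1 ⌊x⌋₊, ∫ y, F n y =
      2 * Real.pi * ∑ n ∈ Icc 1 ⌊x⌋₊, b n * ((1 - n/x : ℝ) : ℂ) := by
    rw [mul_sum]
    refine sum_congr rfl fun n hn => ?_
    obtain ⟨h1, h2⟩ := mem_Icc.1 hn
    rw [hval n (by omega), max_eq_left]
    have : (n:ℝ) ≤ x := (Nat.le_floor_iff hx.le).1 h2
    have : n/x ≤ 1 := by rw [div_le_one hx]; exact this
    linarith
  have heq := hs.tsum_eq
  rw [hfin, hfin2] at heq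
  have hpt : ∀ y, ∑' n, F n y = LSeries b ((c:ℂ) + y * I) * ((x:ℂ)^((c:ℂ) + y * I) * M y) := by
    intro y
    simp_rw [hFn]
    rw [tsum_mul_right]
    rfl
  have hbd : ‖∫ y, ∑' n, F n y‖ ≤ ∫ y : ℝ, (K * x^c) * (4 * (1 + ‖y‖)^(-(3/2):ℝ)) := by
    refine norm_integral_le_of_norm_le (hint.const_mul _) (Eventually.of_forall fun y => ?_)
    rw [hpt, norm_mul, norm_mul, norm_cpow_eq_rpow_re_of_pos hx]
    have hre : ((c:ℂ) + y * I).re = c := by simp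
    rw [hre]
    have h1 := hL y
    have h2 : ‖M y‖ ≤ 2 * (1 + ‖y‖)^(-2:ℝ) := kernel_bound hc
    have h3 : (|y| + 2)^(1/2:ℝ) ≤ 2 * (1 + ‖y‖)^(1/2:ℝ) := by
      calc (|y| + 2)^(1/2:ℝ) ≤ (2 * (1 + ‖y‖))^(1/2:ℝ) := by
            apply Real.rpow_le_rpow (by positivity) _ (by norm_num)
            rw [Real.norm_eq_abs]; linarith [abs_nonneg y]
        _ = 2^(1/2:ℝ) * (1 + ‖y‖)^(1/2:ℝ) := Real.mul_rpow (by norm_num) (by positivity)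
        _ ≤ 2^(1:ℝ) * (1 + ‖y‖)^(1/2:ℝ) := by gcongr <;> norm_num
        _ = _ := by norm_num
    have h4 : (1 + ‖y‖)^(-(3/2):ℝ) = (1 + ‖y‖)^(1/2:ℝ) * (1 + ‖y‖)^(-2:ℝ) := by
      rw [← Real.rpow_add (by positivity)]; norm_num
    calc ‖LSeries b ((c:ℂ) + y * I)‖ * (x^c * ‖M y‖)
        ≤ (K * (2 * (1 + ‖y‖)^(1/2:ℝ))) * (x^c * (2 * (1 + ‖y‖)^(-2:ℝ))) := by
          gcongr
          exact h1.trans (by gcongr)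
      _ = _ := by rw [h4]; ring
  rw [integral_const_mul] at hbd
  rw [← heq, norm_mul] at hbd
  have hpi : (1:ℝ) ≤ ‖(2 * Real.pi : ℂ)‖ := by
    have : (2 * Real.pi : ℂ) = ((2 * Real.pi : ℝ) : ℂ) := by push_cast; ring
    rw [this, norm_real, Real.norm_eq_abs, abs_of_pos (by positivity)]
    linarith [Real.pi_gt_three]
  have hn0 := norm_nonneg (∑ n ∈ Icc 1 ⌊x⌋₊, b n * ((1 - n/x : ℝ) : ℂ))
  have hKx : 0 ≤ K * x^c := by positivity
  nlinarith

end SW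
end Part11

section Part12
open Finset Complex Filter Topology MeasureTheory

namespace SW

lemma smooth_bound (k : ℕ) {δ : ℝ} (hδ : 0 < δ) : ∃ C : ℝ, 0 < C ∧ ∀ (q : ℕ) [NeZero q]
    (a : ZMod q) (x : ℝ), IsUnit a → 3 ≤ x →
    |∑ n ∈ Icc 1 ⌊x⌋₊, (Real.log n)^k * rr a n * (1 - n/x)| ≤ C * (q:ℝ)^δ * x := by
  obtain ⟨K₀, hK₀, hP⟩ := perron_bound
  obtain ⟨C, hC, hR⟩ := rr_bound k hδ
  refine ⟨K₀ * C * Real.exp 1, by positivity, ?_⟩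
  intro q _ a x ha hx
  have hlog : 1 ≤ Real.log x := by
    rw [Real.le_log_iff_exp_le (by linarith)]
    linarith [Real.exp_one_lt_d9]
  have hlp : 0 < Real.log x := by linarith
  have hinv : 1 / Real.log x ≤ 1 := by rw [div_le_one hlp]; exact hlog
  have hinv0 : 0 < 1 / Real.log x := by positivity
  have h := hP (fun n : ℕ => (((Real.log n)^k * rr a n : ℝ) : ℂ)) (1 + 1/Real.log x) x
    (C * (q:ℝ)^δ) (by linarith) (by linarith) (by positivity) ?_ ?_
  · have hxc : x^(1 + 1/Real.log x) = Real.exp 1 * x := by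
      rw [Real.rpow_add (by linarith), Real.rpow_one, Real.rpow_def_of_pos (by linarith),
        mul_one_div_cancel hlp.ne']
      ring
    rw [hxc] at h
    have h2 : ∑ n ∈ Icc 1 ⌊x⌋₊, (((Real.log n)^k * rr a n : ℝ) : ℂ) * ((1 - n/x : ℝ) : ℂ) =
        ((∑ n ∈ Icc 1 ⌊x⌋₊, (Real.log n)^k * rr a n * (1 - n/x) : ℝ) : ℂ) := by
      rw [ofReal_sum]
      refine sum_congr rfl fun n _ => ?_
      rw [← ofReal_mul]
    rw [h2, norm_real, Real.norm_eq_abs] at h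
    calc _ ≤ _ := h
      _ = _ := by ring
  · apply LSeriesSummable_of_abscissaOfAbsConv_lt_re
    refine (rr_log_abscissa a k).trans_lt ?_
    rw [ofReal_re]
    exact_mod_cast (by linarith : (1:ℝ) < 1 + 1/Real.log x)
  · intro y
    have := hR q a (((1 + 1/Real.log x : ℝ):ℂ) + y * I) ha (by simp only [add_re, ofReal_re, mul_re, I_re, I_im, ofReal_im]; linarith) (by simp only [add_re, ofReal_re, mul_re, I_re, I_im, ofReal_im]; linarith)
    have him : (((1 + 1/Real.log x : ℝ):ℂ) + y * I).im = y := by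
      simp only [add_im, ofReal_im, mul_im, I_re, I_im, ofReal_re]; ring
    rw [him] at this
    exact this

lemma T_eq (f : ℕ → ℝ) {y : ℝ} (hy : 0 ≤ y) {N : ℕ} (hN : ⌊y⌋₊ ≤ N) :
    ∑ n ∈ Icc 1 ⌊y⌋₊, f n * (y - n) = ∑ n ∈ Icc 1 N, f n * max (y - n) 0 := by
  rw [← sum_subset (Icc_subset_Icc_right hN)]
  · refine sum_congr rfl fun n hn => ?_
    rw [max_eq_left]
    have := (Nat.le_floor_iff hy).1 (mem_Icc.1 hn).2
    linarith
  · intro n hn hn2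
    have : ⌊y⌋₊ < n := by
      by_contra hcon
      exact hn2 (mem_Icc.2 ⟨(mem_Icc.1 hn).1, not_lt.1 hcon⟩)
    rw [max_eq_right, mul_zero]
    linarith [Nat.lt_of_floor_lt this]

lemma T_diff (f : ℕ → ℝ) (hf : ∀ n, 0 ≤ f n) {y z : ℝ} (hy : 0 ≤ y) (hyz : y ≤ z) :
    (z - y) * ∑ n ∈ Icc 1 ⌊y⌋₊, f n ≤
      ∑ n ∈ Icc 1 ⌊z⌋₊, f n * (z - n) - ∑ n ∈ Icc 1 ⌊y⌋₊, f n * (y - n) ∧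
    ∑ n ∈ Icc 1 ⌊z⌋₊, f n * (z - n) - ∑ n ∈ Icc 1 ⌊y⌋₊, f n * (y - n) ≤
      (z - y) * ∑ n ∈ Icc 1 ⌊z⌋₊, f n := by
  have hfl : ⌊y⌋₊ ≤ ⌊z⌋₊ := Nat.floor_mono hyz
  rw [T_eq f (hy.trans hyz) le_rfl, T_eq f hy hfl, ← sum_sub_distrib, mul_sum, mul_sum]
  constructor
  · refine (sum_le_sum fun n hn => ?_).trans
      (sum_le_sum_of_subset_of_nonneg (Icc_subset_Icc_right hfl) fun n _ _ => ?_)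
    · have h1 := (Nat.le_floor_iff hy).1 (mem_Icc.1 hn).2
      rw [max_eq_left (by linarith), max_eq_left (by linarith)]
      linarith
    · rw [← mul_sub]
      refine mul_nonneg (hf n) (sub_nonneg.2 (max_le_max (by linarith) le_rfl))
  · refine sum_le_sum fun n hn => ?_
    rw [← mul_sub, mul_comm]
    refine mul_le_mul_of_nonneg_right ?_ (hf n)
    have h1 := (Nat.le_floor_iff (hy.trans hyz)).1 (mem_Icc.1 hn).2
    rw [max_eq_left (by linarith : (0:ℝ) ≤ z - n)]
    linarith [le_max_left (y - n) 0]

lemma short_sum (g : ℕ → ℝ) {y z G : ℝ} (hy : 0 ≤ y) (hyz : y ≤ z) (hG : 0 ≤ G)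
    (hg : ∀ n : ℕ, 1 ≤ n → (n:ℝ) ≤ z → g n ≤ G) :
    ∑ n ∈ Icc 1 ⌊z⌋₊, g n ≤ ∑ n ∈ Icc 1 ⌊y⌋₊, g n + (z - y + 1) * G := by
  have hfl : ⌊y⌋₊ ≤ ⌊z⌋₊ := Nat.floor_mono hyz
  rw [← sum_sdiff (Icc_subset_Icc_right hfl : Icc 1 ⌊y⌋₊ ⊆ Icc 1 ⌊z⌋₊), add_comm]
  gcongr
  have hs : Icc 1 ⌊z⌋₊ \ Icc 1 ⌊y⌋₊ = Ioc ⌊y⌋₊ ⌊z⌋₊ := by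
    ext n; rw [Finset.mem_sdiff, Finset.mem_Icc, Finset.mem_Icc, Finset.mem_Ioc]; omega
  rw [hs]
  calc ∑ n ∈ Ioc ⌊y⌋₊ ⌊z⌋₊, g n ≤ ∑ n ∈ Ioc ⌊y⌋₊ ⌊z⌋₊, G := by
        refine sum_le_sum fun n hn => ?_
        have h1 := mem_Ioc.1 hn
        exact hg n (by omega) ((Nat.le_floor_iff (hy.trans hyz)).1 h1.2)
    _ = ((⌊z⌋₊:ℝ) - ⌊y⌋₊) * G := by
        rw [sum_const, Nat.card_Ioc, nsmul_eq_mul, Nat.cast_sub hfl]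
    _ ≤ _ := by
        gcongr
        have := Nat.floor_le (hy.trans hyz)
        have := Nat.lt_floor_add_one y
        linarith

lemma unsmooth (f g : ℕ → ℝ) (hf : ∀ n, 0 ≤ f n) (hg : ∀ n, 0 ≤ g n) {E G x h : ℝ}
    (hE : 0 ≤ E) (hG : 0 ≤ G) (hx : 3 ≤ x) (h0 : 0 < h) (hhx : h ≤ x)
    (hD : ∀ y : ℝ, 0 ≤ y → |∑ n ∈ Icc 1 ⌊y⌋₊, (f n - g n) * (y - n)| ≤ E * (y + 3)^2)
    (hgG : ∀ n : ℕ, 1 ≤ n → (n:ℝ) ≤ 2 * x → g n ≤ G) :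
    |∑ n ∈ Icc 1 ⌊x⌋₊, (f n - g n)| ≤ (h + 1) * G + 2 * E * (3 * x)^2 / h := by
  have hD' : ∀ y : ℝ, 0 ≤ y → y ≤ 2 * x → |∑ n ∈ Icc 1 ⌊y⌋₊, f n * (y - n) -
      ∑ n ∈ Icc 1 ⌊y⌋₊, g n * (y - n)| ≤ E * (3 * x)^2 := by
    intro y hy hy2
    rw [← sum_sub_distrib]
    simp_rw [← sub_mul]
    refine (hD y hy).trans ?_
    gcongr
    linarith
  rw [sum_sub_distrib, abs_le]
  have hxx := abs_le.1 (hD' x (by linarith) (by linarith))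
  have hxm := abs_le.1 (hD' (x - h) (by linarith) (by linarith))
  have hxp := abs_le.1 (hD' (x + h) (by linarith) (by linarith))
  have f1 := (T_diff f hf (by linarith : 0 ≤ x) (by linarith : x ≤ x + h)).1
  have g1 := (T_diff g hg (by linarith : 0 ≤ x) (by linarith : x ≤ x + h)).2
  have f2 := (T_diff f hf (by linarith : 0 ≤ x - h) (by linarith : x - h ≤ x)).2
  have g2 := (T_diff g hg (by linarith : 0 ≤ x - h) (by linarith : x - h ≤ x)).1
  have s1 := short_sum g (by linarith : 0 ≤ x) (by linarith : x ≤ x + h) hG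
    (fun n h1 h2 => hgG n h1 (by linarith))
  have s2 := short_sum g (by linarith : 0 ≤ x - h) (by linarith : x - h ≤ x) hG
    (fun n h1 h2 => hgG n h1 (by linarith))
  have e1 : x + h - x = h := by ring
  have e2 : x - (x - h) = h := by ring
  rw [e1] at f1 g1 s1
  rw [e2] at f2 g2 s2
  have s1' := mul_le_mul_of_nonneg_left s1 h0.le
  have s2' := mul_le_mul_of_nonneg_left s2 h0.le
  set R := E * (3 * x)^2
  have hR : 2 * E * (3 * x)^2 / h = 2 * R / h := by simp only [R]; ring
  rw [hR]
  have hRh : h * (2 * R / h) = 2 * R := by field_simp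
  constructor
  · refine le_of_mul_le_mul_left ?_ h0
    linarith
  · refine le_of_mul_le_mul_left ?_ h0
    linarith

lemma abel_bound (c w : ℕ → ℝ) (S : ℕ → ℝ) (hS : ∀ n, S (n+1) = S n + c (n+1)) {M : ℕ} {V : ℝ}
    (N : ℕ) (hN : M + 1 ≤ N) (hV : ∀ n, M ≤ n → n ≤ N → |S n| ≤ V)
    (hw : ∀ n, M + 1 ≤ n → w (n+1) ≤ w n) (hw0 : ∀ n, M + 1 ≤ n → 0 ≤ w n) :
    |∑ n ∈ Ioc M N, c n * w n| ≤ 2 * V * w (M+1) := by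
  have key : |∑ n ∈ Ioc M N, c n * w n - (S N - S M) * w N| ≤ 2 * V * (w (M+1) - w N) := by
    induction N, hN using Nat.le_induction with
    | base => 
      rw [Nat.Ioc_succ_singleton, sum_singleton, hS M]
      simp
    | succ N hN ih =>
      have ih' := ih (fun n h1 h2 => hV n h1 (by omega))
      rw [sum_Ioc_succ_top (by omega), hS N]
      have e : ∑ n ∈ Ioc M N, c n * w n + c (N+1) * w (N+1) - (S N + c (N+1) - S M) * w (N+1) =
        (∑ n ∈ Ioc M N, c n * w n - (S N - S M) * w N) + (S N - S M) * (w N - w (N+1)) := by ring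
      rw [e]
      refine (abs_add_le _ _).trans ?_
      have h1 : |(S N - S M) * (w N - w (N+1))| ≤ 2 * V * (w N - w (N+1)) := by
        rw [abs_mul, abs_of_nonneg (sub_nonneg.2 (hw N hN))]
        refine mul_le_mul_of_nonneg_right ?_ (sub_nonneg.2 (hw N hN))
        have a1 := hV N (by omega) (by omega)
        have a2 := hV M le_rfl (by omega)
        have := abs_sub (S N) (S M)
        linarith
      linarith
  have h2 : |(S N - S M) * w N| ≤ 2 * V * w N := by
    rw [abs_mul, abs_of_nonneg (hw0 N hN)]
    refine mul_le_mul_of_nonneg_right ?_ (hw0 N hN)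
    have a1 := hV N (by omega) le_rfl
    have a2 := hV M le_rfl (by omega)
    have := abs_sub (S N) (S M)
    linarith
  have h3 := abs_add_le (∑ n ∈ Ioc M N, c n * w n - (S N - S M) * w N) ((S N - S M) * w N)
  rw [sub_add_cancel] at h3
  linarith

end SW
end Part12

section Part13
open Finset Complex Filter Topology MeasureTheory

namespace SW

lemma residueClass_le {q : ℕ} (a : ZMod q) (n : ℕ) :
    0 ≤ ArithmeticFunction.vonMangoldt.residueClass a n ∧
    ArithmeticFunction.vonMangoldt.residueClass a n ≤ Real.log n := by
  refine ⟨ArithmeticFunction.vonMangoldt.residueClass_nonneg a n, ?_⟩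
  exact (ArithmeticFunction.vonMangoldt.residueClass_le a n).trans
    ArithmeticFunction.vonMangoldt_le_log

lemma tot_inv_le (q : ℕ) : 0 ≤ (q.totient:ℝ)⁻¹ ∧ (q.totient:ℝ)⁻¹ ≤ 1 := by
  refine ⟨by positivity, ?_⟩
  rcases Nat.eq_zero_or_pos q.totient with h | h
  · rw [h]; simp
  · exact inv_le_one_of_one_le₀ (by exact_mod_cast h)

lemma log_pow_le {x : ℝ} (m : ℕ) (hm : m ≠ 0) (hx : 1 ≤ x) :
    Real.log x ^ m ≤ (m:ℝ)^m * x := by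
  have hm' : (0:ℝ) < m := by exact_mod_cast Nat.pos_of_ne_zero hm
  have h := Real.log_le_rpow_div (by linarith : 0 ≤ x) (by positivity : 0 < 1/(m:ℝ))
  calc Real.log x ^ m ≤ (x^(1/(m:ℝ)) / (1/(m:ℝ)))^m := by
        gcongr
        exact Real.log_nonneg hx
    _ = (m:ℝ)^m * (x^(1/(m:ℝ)))^m := by rw [← mul_pow]; congr 1; field_simp
    _ = _ := by
      rw [← Real.rpow_natCast (x^(1/(m:ℝ))), ← Real.rpow_mul (by linarith),
        one_div_mul_cancel hm'.ne', Real.rpow_one]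

lemma one_le_log {x : ℝ} (hx : 3 ≤ x) : 1 ≤ Real.log x := by
  rw [Real.le_log_iff_exp_le (by linarith)]
  linarith [Real.exp_one_lt_d9]

lemma one_le_qpow {q : ℕ} [NeZero q] {δ : ℝ} (hδ : 0 < δ) : 1 ≤ (q:ℝ)^δ :=
  Real.one_le_rpow (by exact_mod_cast NeZero.one_le) hδ.le

lemma smooth_bound2 (k : ℕ) {δ : ℝ} (hδ : 0 < δ) : ∃ C : ℝ, 0 < C ∧ ∀ (q : ℕ) [NeZero q]
    (a : ZMod q) (y : ℝ), IsUnit a → 0 ≤ y →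
    |∑ n ∈ Icc 1 ⌊y⌋₊, (Real.log n)^k * rr a n * (y - n)| ≤ C * (q:ℝ)^δ * (y + 3)^2 := by
  obtain ⟨C, hC, h⟩ := smooth_bound k hδ
  refine ⟨C + 1, by positivity, ?_⟩
  intro q _ a y ha hy
  have hq : 1 ≤ (q:ℝ)^δ := one_le_qpow hδ
  by_cases hy3 : 3 ≤ y
  · have h1 := h q a y ha hy3
    have e : ∑ n ∈ Icc 1 ⌊y⌋₊, (Real.log n)^k * rr a n * (y - n) =
        y * ∑ n ∈ Icc 1 ⌊y⌋₊, (Real.log n)^k * rr a n * (1 - n/y) := by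
      rw [mul_sum]
      refine sum_congr rfl fun n _ => ?_
      field_simp
    rw [e, abs_mul, abs_of_nonneg hy]
    calc _ ≤ y * (C * (q:ℝ)^δ * y) := by gcongr
      _ = C * (q:ℝ)^δ * y^2 := by ring
      _ ≤ _ := by gcongr <;> linarith
  · push Not at hy3
    have hfl : ⌊y⌋₊ ≤ 2 := by
      have : ⌊y⌋₊ < 3 := (Nat.floor_lt hy).2 (by exact_mod_cast hy3)
      omega
    have hterm : ∀ n ∈ Icc 1 ⌊y⌋₊, |(Real.log n)^k * rr a n * (y - n)| ≤ 3 := by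
      intro n hn
      have hn1 := Finset.mem_Icc.1 hn
      have hny := (Nat.le_floor_iff hy).1 hn1.2
      have hn1' : (1:ℝ) ≤ n := by exact_mod_cast hn1.1
      have hn2' : (n:ℝ) ≤ 2 := by exact_mod_cast hn1.2.trans hfl
      have hl0 : 0 ≤ Real.log n := Real.log_nonneg hn1'
      have hl1 : Real.log n ≤ 1 :=
        (Real.log_le_log (by linarith) hn2').trans (by linarith [Real.log_two_lt_d9])
      have hp1 : (Real.log n)^k ≤ 1 := pow_le_one₀ hl0 hl1
      have hp0 : 0 ≤ (Real.log n)^k := by positivity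
      have hr : |rr a n| ≤ 1 := by
        have h1 := residueClass_le a n
        have h2 := tot_inv_le q
        rw [rr, abs_le]; constructor <;> linarith
      rw [abs_mul, abs_mul, abs_of_nonneg hp0, abs_of_nonneg (by linarith : 0 ≤ y - n)]
      calc _ ≤ (1:ℝ) * 1 * 3 := by gcongr; linarith
        _ = 3 := by norm_num
    calc _ ≤ ∑ n ∈ Icc 1 ⌊y⌋₊, |(Real.log n)^k * rr a n * (y - n)| := abs_sum_le_sum_abs _ _
      _ ≤ ∑ n ∈ Icc 1 ⌊y⌋₊, (3:ℝ) := sum_le_sum hterm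
      _ = ⌊y⌋₊ * 3 := by simp
      _ ≤ 2 * 3 := by gcongr; exact_mod_cast hfl
      _ ≤ 1 * 1 * (0 + 3)^2 := by norm_num
      _ ≤ _ := by gcongr; linarith

lemma sum_bound (m : ℕ) (hm : m ≠ 0) {δ : ℝ} (hδ : 0 < δ) : ∃ C : ℝ, 0 < C ∧ ∀ (q : ℕ) [NeZero q]
    (a : ZMod q) (x : ℝ), IsUnit a → 3 ≤ x →
    |∑ n ∈ Icc 1 ⌊x⌋₊, (Real.log n)^(2*m) * rr a n| ≤ C * (q:ℝ)^δ * (x * Real.log x ^ m) := by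
  obtain ⟨C, hC, h⟩ := smooth_bound2 (2*m) hδ
  refine ⟨(1 + (m:ℝ)^m) * 2^(2*m) + 18 * C, by positivity, ?_⟩
  intro q _ a x ha hx
  have hq : 1 ≤ (q:ℝ)^δ := one_le_qpow hδ
  have hl := one_le_log hx
  have hlm : 1 ≤ Real.log x ^ m := one_le_pow₀ hl
  set L := Real.log x ^ m with hL
  have hu := unsmooth (fun n => (Real.log n)^(2*m) * ArithmeticFunction.vonMangoldt.residueClass a n)
    (fun n => (Real.log n)^(2*m) * (q.totient:ℝ)⁻¹) (E := C * (q:ℝ)^δ)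
    (G := 2^(2*m) * L^2) (x := x) (h := x / L)
    (fun n => mul_nonneg (by rw [pow_mul]; positivity) (residueClass_le a n).1)
    (fun n => mul_nonneg (by rw [pow_mul]; positivity) (tot_inv_le q).1)
    (by positivity) (by positivity) hx (by positivity) (div_le_self (by linarith) hlm) ?_ ?_
  · have e : ∑ n ∈ Icc 1 ⌊x⌋₊, (Real.log n)^(2*m) * rr a n = ∑ n ∈ Icc 1 ⌊x⌋₊,
      ((Real.log n)^(2*m) * ArithmeticFunction.vonMangoldt.residueClass a n -
        (Real.log n)^(2*m) * (q.totient:ℝ)⁻¹) := by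
      refine sum_congr rfl fun n _ => ?_
      rw [rr]; ring
    rw [e]
    refine hu.trans ?_
    have h1 : L ≤ (m:ℝ)^m * x := log_pow_le m hm (by linarith)
    have h2 : (x / L + 1) * (2^(2*m) * L^2) ≤ (1 + (m:ℝ)^m) * 2^(2*m) * (1 * (x * L)) := by
      have : (x / L + 1) * (2^(2*m) * L^2) = 2^(2*m) * (L * (x + L)) := by field_simp
      rw [this]
      calc _ ≤ 2^(2*m) * (L * (x + (m:ℝ)^m * x)) := by gcongr
        _ = _ := by ring
    have h3 : 2 * (C * (q:ℝ)^δ) * (3 * x)^2 / (x / L) = 18 * C * (q:ℝ)^δ * (x * L) := by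
      field_simp; ring
    have h4 : (1 + (m:ℝ)^m) * 2^(2*m) * (1 * (x * L)) ≤
        (1 + (m:ℝ)^m) * 2^(2*m) * ((q:ℝ)^δ * (x * L)) := by gcongr
    rw [h3]
    linarith
  · intro y hy
    have e : ∀ n : ℕ, ((Real.log n)^(2*m) * ArithmeticFunction.vonMangoldt.residueClass a n -
        (Real.log n)^(2*m) * (q.totient:ℝ)⁻¹) = (Real.log n)^(2*m) * rr a n := by
      intro n; rw [rr]; ring
    simp_rw [e]
    exact h q a y ha hy
  · intro n hn hn2
    have hn' : (1:ℝ) ≤ n := by exact_mod_cast hn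
    have hlog : Real.log n ≤ 2 * Real.log x := by
      rw [← Real.log_rpow (by linarith)]
      apply Real.log_le_log (by linarith)
      rw [Real.rpow_two]; nlinarith
    calc _ ≤ (2 * Real.log x)^(2*m) * 1 := by
          gcongr
          exact (tot_inv_le q).2
      _ = _ := by rw [hL, mul_one, mul_pow, ← pow_mul, mul_comm m 2]

lemma sqrt_pow_le (m : ℕ) : ∃ C : ℝ, 0 < C ∧ ∀ x : ℝ, 1 ≤ x → Real.sqrt x * Real.log x ^ m ≤ C * x := by
  by_cases hm : m = 0
  · refine ⟨1, one_pos, fun x hx => ?_⟩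
    rw [hm, pow_zero, mul_one, one_mul]
    exact Real.sqrt_le_iff.2 ⟨by linarith, by nlinarith⟩
  refine ⟨(2:ℝ)^m * (m:ℝ)^m, by positivity, fun x hx => ?_⟩
  have h1 : 1 ≤ Real.sqrt x := Real.one_le_sqrt.2 hx
  have h := log_pow_le m hm h1
  have e : Real.log x = 2 * Real.log (Real.sqrt x) := by rw [Real.log_sqrt (by linarith)]; ring
  rw [e, mul_pow]
  calc _ ≤ Real.sqrt x * (2^m * ((m:ℝ)^m * Real.sqrt x)) := by gcongr
    _ = 2^m * (m:ℝ)^m * (Real.sqrt x * Real.sqrt x) := by ring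
    _ = _ := by rw [Real.mul_self_sqrt (by linarith)]

lemma rr_log_sum (m : ℕ) (hm : m ≠ 0) {δ : ℝ} (hδ : 0 < δ) : ∃ C : ℝ, 0 < C ∧ ∀ (q : ℕ) [NeZero q]
    (a : ZMod q) (x : ℝ), IsUnit a → 9 ≤ x →
    |∑ n ∈ Ioc 1 ⌊x⌋₊, rr a n / Real.log n| ≤ C * (q:ℝ)^δ * (x / Real.log x ^ m) := by
  obtain ⟨C, hC, h⟩ := sum_bound m hm hδ
  obtain ⟨D, hD, hsq⟩ := sqrt_pow_le m
  refine ⟨2 * C * 2^(2*m+1) + 3 * D, by positivity, ?_⟩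
  intro q _ a x ha hx
  have hq : 1 ≤ (q:ℝ)^δ := one_le_qpow hδ
  have hl := one_le_log (by linarith : 3 ≤ x)
  have hs3 : 3 ≤ Real.sqrt x := Real.le_sqrt_of_sq_le (by linarith)
  have hlm : 1 ≤ Real.log x ^ m := one_le_pow₀ hl
  set M := ⌊Real.sqrt x⌋₊ with hM
  have hM3 : 3 ≤ M := Nat.le_floor (by exact_mod_cast hs3)
  have hMx : (M:ℝ) ≤ Real.sqrt x := Nat.floor_le (by positivity)
  have hsx : Real.sqrt x * 3 ≤ x := by
    calc _ ≤ Real.sqrt x * Real.sqrt x := by gcongr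
      _ = x := Real.mul_self_sqrt (by linarith)
  have hMN : M + 1 ≤ ⌊x⌋₊ := Nat.le_floor (by push_cast; linarith)
  have hab := abel_bound (fun n : ℕ => (Real.log n)^(2*m) * rr a n)
    (fun n : ℕ => ((Real.log n)^(2*m+1))⁻¹)
    (fun N : ℕ => ∑ n ∈ Icc 1 N, (Real.log n)^(2*m) * rr a n)
    (fun n => by rw [sum_Icc_succ_top (by omega)]) (M := M)
    (V := C * (q:ℝ)^δ * (x * Real.log x ^ m)) ⌊x⌋₊ hMN ?_ ?_ ?_
  · have hw : ((Real.log ((M+1:ℕ):ℝ))^(2*m+1))⁻¹ ≤ 2^(2*m+1) * ((Real.log x)^(2*m+1))⁻¹ := by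
      have h1 : Real.log x / 2 ≤ Real.log ((M+1:ℕ):ℝ) := by
        rw [← Real.log_sqrt (by linarith)]
        apply Real.log_le_log (by linarith)
        push_cast
        exact (Nat.lt_floor_add_one _).le
      calc _ ≤ ((Real.log x / 2)^(2*m+1))⁻¹ := by gcongr
        _ = _ := by rw [div_pow, inv_div]; rfl
    have e1 : ∑ n ∈ Ioc M ⌊x⌋₊, (Real.log n)^(2*m) * rr a n * ((Real.log n)^(2*m+1))⁻¹ =
        ∑ n ∈ Ioc M ⌊x⌋₊, rr a n / Real.log n := by
      refine sum_congr rfl fun n hn => ?_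
      have : 0 < Real.log n := Real.log_pos (by
        have := Finset.mem_Ioc.1 hn
        exact_mod_cast (by omega : 1 < n))
      rw [pow_succ]; field_simp
    rw [e1] at hab
    have hsmall : |∑ n ∈ Ioc 1 M, rr a n / Real.log n| ≤ 3 * (D * (q:ℝ)^δ * (x / Real.log x ^ m)) := by
      calc _ ≤ ∑ n ∈ Ioc 1 M, |rr a n / Real.log n| := abs_sum_le_sum_abs _ _
        _ ≤ ∑ n ∈ Ioc 1 M, (3:ℝ) := by
          refine sum_le_sum fun n hn => ?_
          have hn2 : (2:ℝ) ≤ n := by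
            have := Finset.mem_Ioc.1 hn
            exact_mod_cast (by omega : 2 ≤ n)
          have hlog : Real.log 2 ≤ Real.log n := Real.log_le_log (by norm_num) hn2
          have hl2 := Real.log_two_gt_d9
          have hlpos : 0 < Real.log n := by linarith
          rw [abs_div, abs_of_pos hlpos, div_le_iff₀ hlpos]
          have h1 := residueClass_le a n
          have h2 := tot_inv_le q
          rw [rr, abs_le]; constructor <;> linarith
        _ ≤ M * 3 := by
          rw [sum_const, Nat.card_Ioc, nsmul_eq_mul]
          gcongr; omega
        _ ≤ 3 * Real.sqrt x := by linarith
        _ ≤ 3 * (D * 1 * (x / Real.log x ^ m)) := by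
          gcongr
          rw [mul_one, ← mul_div_assoc, le_div_iff₀ (by positivity)]
          exact hsq x (by linarith)
        _ ≤ _ := by gcongr
    have hsplit : ∑ n ∈ Ioc 1 ⌊x⌋₊, rr a n / Real.log n =
        ∑ n ∈ Ioc 1 M, rr a n / Real.log n + ∑ n ∈ Ioc M ⌊x⌋₊, rr a n / Real.log n :=
      (sum_Ioc_consecutive _ (by omega) (by omega)).symm
    rw [hsplit]
    refine (abs_add_le _ _).trans ?_
    have hbig : |∑ n ∈ Ioc M ⌊x⌋₊, rr a n / Real.log n| ≤
        2 * C * 2^(2*m+1) * ((q:ℝ)^δ * (x / Real.log x ^ m)) := by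
      calc _ ≤ _ := hab
        _ ≤ 2 * (C * (q:ℝ)^δ * (x * Real.log x ^ m)) *
            (2^(2*m+1) * ((Real.log x)^(2*m+1))⁻¹) := by gcongr
        _ = 2 * C * 2^(2*m+1) * ((q:ℝ)^δ * (x / Real.log x ^ m)) * (1 / Real.log x) := by
          have : Real.log x ^ (2*m+1) = Real.log x ^ m * Real.log x ^ m * Real.log x := by ring
          rw [this]; field_simp
        _ ≤ 2 * C * 2^(2*m+1) * ((q:ℝ)^δ * (x / Real.log x ^ m)) * 1 := by
          gcongr
          rw [div_le_one (by linarith)]; exact hl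
        _ = _ := mul_one _
    linarith
  · intro n hn1 hn2
    have hn3 : (3:ℝ) ≤ n := by exact_mod_cast hM3.trans hn1
    have hnx : (n:ℝ) ≤ x := (Nat.le_floor_iff (by linarith)).1 hn2
    have := h q a n ha hn3
    rw [Nat.floor_natCast] at this
    refine this.trans ?_
    gcongr
  · intro n hn
    have hn1 : (1:ℝ) < n := by exact_mod_cast (by omega : 1 < n)
    have := Real.log_pos hn1
    have h2 : Real.log n ≤ Real.log ((n+1:ℕ):ℝ) := Real.log_le_log (by linarith) (by push_cast; linarith)
    show (_)⁻¹ ≤ (_)⁻¹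
    gcongr
  · intro n hn
    have := Real.log_natCast_nonneg n
    positivity

end SW
end Part13

section Part14
open Finset Complex Filter Topology MeasureTheory

namespace SW

lemma anti_log (b : ℝ) : AntitoneOn (fun u : ℝ => 1 / Real.log u) (Set.Icc 2 b) := by
  intro u hu v hv huv
  have h2 : 0 < Real.log u := Real.log_pos (by linarith [hu.1])
  exact one_div_le_one_div_of_le h2 (Real.log_le_log (by linarith [hu.1]) huv)

lemma one_div_log_le {u : ℝ} (hu : 2 ≤ u) : 0 ≤ 1 / Real.log u ∧ 1 / Real.log u ≤ 2 := by
  have h := Real.log_two_gt_d9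
  have h2 : Real.log 2 ≤ Real.log u := Real.log_le_log (by norm_num) hu
  have h3 : 0 < Real.log u := by linarith
  refine ⟨by positivity, ?_⟩
  rw [div_le_iff₀ h3]; linarith

lemma int_log {b c : ℝ} (hb : 2 ≤ b) (hbc : b ≤ c) :
    IntervalIntegrable (fun u : ℝ => 1 / Real.log u) volume b c := by
  apply AntitoneOn.intervalIntegrable
  rw [Set.uIcc_of_le hbc]
  exact (anti_log c).mono (Set.Icc_subset_Icc_left hb)

lemma int_log_le {b c : ℝ} (hb : 2 ≤ b) (hbc : b ≤ c) :
    0 ≤ ∫ u in b..c, 1 / Real.log u ∧ ∫ u in b..c, 1 / Real.log u ≤ 2 * (c - b) := by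
  constructor
  · exact intervalIntegral.integral_nonneg hbc fun u hu => (one_div_log_le (by linarith [hu.1])).1
  · have : ∫ u in b..c, (2:ℝ) = 2 * (c - b) := by
      rw [intervalIntegral.integral_const, smul_eq_mul, mul_comm]
    rw [← this]
    exact intervalIntegral.integral_mono_on hbc (int_log hb hbc) intervalIntegrable_const
      fun u hu => (one_div_log_le (by linarith [hu.1])).2

lemma li_sum {x : ℝ} (hx : 2 ≤ x) :
    |∑ n ∈ Ioc 1 ⌊x⌋₊, 1 / Real.log n - ∫ u in (2:ℝ)..x, 1 / Real.log u| ≤ 2 := by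
  set N := ⌊x⌋₊ with hN
  have hN2 : 2 ≤ N := Nat.le_floor (by exact_mod_cast hx)
  have hN2' : (2:ℝ) ≤ N := by exact_mod_cast hN2
  have hNx : (N:ℝ) ≤ x := Nat.floor_le (by linarith)
  have hxN : x < N + 1 := Nat.lt_floor_add_one x
  have han : AntitoneOn (fun u : ℝ => 1 / Real.log u) (Set.Icc ((2:ℕ):ℝ) (N:ℝ)) := by
    exact_mod_cast anti_log N
  have h1 := AntitoneOn.sum_le_integral_Ico hN2 han
  have h2 := AntitoneOn.integral_le_sum_Ico hN2 han
  have h3 := intervalIntegral.integral_add_adjacent_intervals (int_log le_rfl hN2') (int_log hN2' hNx)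
  have h4 := int_log_le hN2' hNx
  rw [← h3]
  have e1 : ∑ n ∈ Ioc 1 N, 1 / Real.log n = 1 / Real.log 2 +
      ∑ i ∈ Ico 2 N, 1 / Real.log ((i+1:ℕ):ℝ) := by
    rw [Finset.sum_Ico_add' (fun n : ℕ => 1 / Real.log (n:ℝ)) 2 N 1]
    have : Ioc 1 N = Ico 2 (N+1) := by ext n; rw [Finset.mem_Ioc, Finset.mem_Ico]; omega
    rw [this, Finset.sum_eq_sum_Ico_succ_bot (by omega)]
    norm_cast
  have e2 : ∑ n ∈ Ioc 1 N, 1 / Real.log n = ∑ i ∈ Ico 2 N, 1 / Real.log (i:ℝ) + 1 / Real.log N := by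
    have : Ioc 1 N = Ico 2 (N+1) := by ext n; rw [Finset.mem_Ioc, Finset.mem_Ico]; omega
    rw [this, Finset.sum_Ico_succ_top (by omega)]
  have b1 := one_div_log_le (le_refl (2:ℝ))
  have b2 := one_div_log_le hN2'
  rw [Nat.cast_ofNat] at h1 h2
  rw [abs_le]; constructor <;> linarith

lemma prime_pow_part {q : ℕ} (a : ZMod q) {x : ℝ} (hx : 2 ≤ x) :
    |∑ n ∈ Ioc 1 ⌊x⌋₊, ArithmeticFunction.vonMangoldt.residueClass a n / Real.log n -
      (((Icc 1 ⌊x⌋₊).filter (fun p : ℕ => p.Prime ∧ (p : ZMod q) = a)).card : ℝ)| ≤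
    4 * Real.sqrt x * Real.log x := by
  have hps := Chebyshev.psi_sub_theta_le (by linarith : 1 ≤ x)
  have hN1 : 1 ≤ ⌊x⌋₊ := Nat.le_floor (by push_cast; linarith)
  rw [Chebyshev.psi, Chebyshev.theta, sum_filter, ← sum_sub_distrib] at hps
  have hs : Ioc 0 ⌊x⌋₊ = Icc 1 ⌊x⌋₊ := by ext n; rw [Finset.mem_Ioc, Finset.mem_Icc]; omega
  have hcard : (((Icc 1 ⌊x⌋₊).filter (fun p : ℕ => p.Prime ∧ (p : ZMod q) = a)).card : ℝ) =
      ∑ n ∈ Ioc 1 ⌊x⌋₊, if n.Prime ∧ (n : ZMod q) = a then (1:ℝ) else 0 := by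
    rw [card_filter, ← hs, ← Finset.sum_Ioc_consecutive _ (by omega : 0 ≤ 1) hN1]
    rw [Nat.Ioc_succ_singleton, sum_singleton, if_neg (fun h => Nat.not_prime_one h.1), zero_add]
    push_cast
    rfl
  rw [hcard, ← sum_sub_distrib]
  have hnn : ∀ n : ℕ, 0 ≤ ArithmeticFunction.vonMangoldt n - (if n.Prime then Real.log n else 0) := by
    intro n
    split_ifs with hp
    · rw [ArithmeticFunction.vonMangoldt_apply_prime hp]; simp
    · rw [sub_zero]; exact ArithmeticFunction.vonMangoldt_nonneg
  calc _ ≤ ∑ n ∈ Ioc 1 ⌊x⌋₊, |ArithmeticFunction.vonMangoldt.residueClass a n / Real.log n -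
        if n.Prime ∧ (n : ZMod q) = a then (1:ℝ) else 0| := abs_sum_le_sum_abs _ _
    _ ≤ ∑ n ∈ Ioc 1 ⌊x⌋₊, 2 * (ArithmeticFunction.vonMangoldt n -
        (if n.Prime then Real.log n else 0)) := by
      refine sum_le_sum fun n hn => ?_
      have hn2 : (2:ℝ) ≤ n := by
        have := Finset.mem_Ioc.1 hn
        exact_mod_cast (by omega : 2 ≤ n)
      have hl : 0 < Real.log n := Real.log_pos (by linarith)
      have hd := one_div_log_le hn2
      by_cases hp : n.Prime
      · rw [if_pos hp]
        have h0 : ArithmeticFunction.vonMangoldt.residueClass a n / Real.log n -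
            (if n.Prime ∧ (n : ZMod q) = a then (1:ℝ) else 0) = 0 := by
          by_cases hc : (n : ZMod q) = a
          · rw [if_pos ⟨hp, hc⟩, ArithmeticFunction.vonMangoldt.residueClass,
              Set.indicator_of_mem (by exact hc),
              ArithmeticFunction.vonMangoldt_apply_prime hp, div_self hl.ne', sub_self]
          · rw [if_neg (fun h => hc h.2), ArithmeticFunction.vonMangoldt.residueClass,
              Set.indicator_of_notMem (by exact hc)]
            simp
        rw [h0, ArithmeticFunction.vonMangoldt_apply_prime hp]; simp
      · rw [if_neg (fun h => hp h.1), if_neg hp, sub_zero, sub_zero]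
        have r0 := (residueClass_le a n).1
        have r1 := ArithmeticFunction.vonMangoldt.residueClass_le a n
        rw [abs_of_nonneg (by positivity)]
        calc _ = ArithmeticFunction.vonMangoldt.residueClass a n * (1 / Real.log n) := by ring
          _ ≤ ArithmeticFunction.vonMangoldt n * 2 := by
            apply mul_le_mul r1 hd.2 hd.1 (r0.trans r1)
          _ = _ := mul_comm _ _
    _ = 2 * ∑ n ∈ Ioc 1 ⌊x⌋₊, (ArithmeticFunction.vonMangoldt n -
        (if n.Prime then Real.log n else 0)) := by rw [mul_sum]
    _ ≤ 2 * ∑ n ∈ Ioc 0 ⌊x⌋₊, (ArithmeticFunction.vonMangoldt n -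
        (if n.Prime then Real.log n else 0)) := by
      refine mul_le_mul_of_nonneg_left ?_ (by norm_num)
      refine sum_le_sum_of_subset_of_nonneg ?_ fun n _ _ => hnn n
      exact Finset.Ioc_subset_Ioc_left (by omega)
    _ ≤ 2 * (2 * Real.sqrt x * Real.log x) := by gcongr
    _ = _ := by ring

lemma main_bound (m : ℕ) (hm : m ≠ 0) {δ : ℝ} (hδ : 0 < δ) : ∃ C : ℝ, 0 < C ∧ ∀ (q : ℕ) [NeZero q]
    (a : ZMod q) (x : ℝ), IsUnit a → 9 ≤ x →
    |(((Icc 1 ⌊x⌋₊).filter (fun p : ℕ => p.Prime ∧ (p : ZMod q) = a)).card : ℝ) -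
      (1 / (q.totient : ℝ)) * ∫ u in (2:ℝ)..x, 1 / Real.log u| ≤
      C * (q:ℝ)^δ * (x / Real.log x ^ m) := by
  obtain ⟨C, hC, h⟩ := rr_log_sum m hm hδ
  obtain ⟨D, hD, hsq⟩ := sqrt_pow_le (m+1)
  refine ⟨C + 6 * D, by positivity, ?_⟩
  intro q _ a x ha hx
  have h1 := h q a x ha hx
  have h2 := prime_pow_part a (by linarith : 2 ≤ x)
  have h3 := li_sum (by linarith : 2 ≤ x)
  have hq : 1 ≤ (q:ℝ)^δ := one_le_qpow hδ
  have hl := one_le_log (by linarith : 3 ≤ x)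
  have hlm : 1 ≤ Real.log x ^ m := one_le_pow₀ hl
  have ht := tot_inv_le q
  have e : ∑ n ∈ Ioc 1 ⌊x⌋₊, rr a n / Real.log n =
      ∑ n ∈ Ioc 1 ⌊x⌋₊, ArithmeticFunction.vonMangoldt.residueClass a n / Real.log n -
      (q.totient:ℝ)⁻¹ * ∑ n ∈ Ioc 1 ⌊x⌋₊, 1 / Real.log n := by
    rw [mul_sum, ← sum_sub_distrib]
    refine sum_congr rfl fun n _ => ?_
    rw [rr]; ring
  rw [e] at h1
  rw [one_div]
  set P := (((Icc 1 ⌊x⌋₊).filter (fun p : ℕ => p.Prime ∧ (p : ZMod q) = a)).card : ℝ)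
  set R := ∑ n ∈ Ioc 1 ⌊x⌋₊, ArithmeticFunction.vonMangoldt.residueClass a n / Real.log n
  set T := ∑ n ∈ Ioc 1 ⌊x⌋₊, 1 / Real.log n
  set Li := ∫ u in (2:ℝ)..x, 1 / Real.log u
  set t := (q.totient:ℝ)⁻¹
  have h4 : |t * (T - Li)| ≤ 2 := by
    rw [abs_mul, abs_of_nonneg ht.1]
    calc _ ≤ 1 * (2:ℝ) := mul_le_mul ht.2 h3 (abs_nonneg _) zero_le_one
      _ = 2 := by norm_num
  have hs1 : 1 ≤ Real.sqrt x := Real.one_le_sqrt.2 (by linarith)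
  have h5 : 4 * Real.sqrt x * Real.log x + 2 ≤ 6 * D * (q:ℝ)^δ * (x / Real.log x ^ m) := by
    calc 4 * Real.sqrt x * Real.log x + 2 ≤ 6 * (Real.sqrt x * Real.log x) := by nlinarith
      _ ≤ 6 * (D * 1 * (x / Real.log x ^ m)) := by
          refine mul_le_mul_of_nonneg_left ?_ (by norm_num)
          rw [mul_one, ← mul_div_assoc, le_div_iff₀ (by positivity)]
          calc _ = Real.sqrt x * Real.log x ^ (m+1) := by ring
            _ ≤ _ := hsq x (by linarith)
      _ ≤ 6 * (D * (q:ℝ)^δ * (x / Real.log x ^ m)) := by gcongr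
      _ = _ := by ring
  have e2 : P - t * Li = (R - t * T) + t * (T - Li) - (R - P) := by ring
  rw [e2]
  have := abs_sub ((R - t * T) + t * (T - Li)) (R - P)
  have := abs_add_le (R - t * T) (t * (T - Li))
  linarith

lemma count_le {q : ℕ} [NeZero q] (a : ZMod q) (N : ℕ) :
    (((Icc 1 N).filter (fun p : ℕ => p.Prime ∧ (p : ZMod q) = a)).card : ℝ) ≤ N / q + 1 := by
  have h : ((Icc 1 N).filter (fun p : ℕ => p.Prime ∧ (p : ZMod q) = a)).card ≤
      (range (N / q + 1)).card := by
    refine card_le_card_of_injOn (fun n => n / q) ?_ ?_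
    · intro n hn
      have hn := Finset.mem_filter.1 (Finset.mem_coe.1 hn)
      have := Nat.div_le_div_right (c := q) (Finset.mem_Icc.1 hn.1).2
      exact Finset.mem_coe.2 (Finset.mem_range.2 (by show n / q < _; omega))
    · intro n hn k hk hnk
      have hn := (Finset.mem_filter.1 (Finset.mem_coe.1 hn)).2.2
      have hk := (Finset.mem_filter.1 (Finset.mem_coe.1 hk)).2.2
      have hm : n % q = k % q := (ZMod.natCast_eq_natCast_iff' n k q).1 (hn.trans hk.symm)
      have hnk : n / q = k / q := hnk
      rw [← Nat.div_add_mod n q, ← Nat.div_add_mod k q, hm, hnk]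
  rw [card_range] at h
  calc _ ≤ ((N / q + 1 : ℕ) : ℝ) := by exact_mod_cast h
    _ ≤ _ := by push_cast; gcongr; exact Nat.cast_div_le

lemma totient_lower : ∃ c : ℝ, 0 < c ∧ ∀ q : ℕ, q ≠ 0 → c * (q:ℝ)^(1/2:ℝ) ≤ q.totient := by
  obtain ⟨c, hc, h⟩ := phi_aux (by norm_num : (0:ℝ) < 1/2)
  refine ⟨c, hc, fun q hq => ?_⟩
  have h1 := h q hq
  have hq0 : (0:ℝ) < q := by exact_mod_cast Nat.pos_of_ne_zero hq
  have e : (q.totient:ℝ) = q * ∏ p ∈ q.primeFactors, (1 - 1/(p:ℝ)) := by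
    have := congrArg (fun z : ℚ => (z:ℝ)) (Nat.totient_eq_mul_prod_factors q)
    push_cast at this
    simpa only [one_div] using this
  rw [e]
  calc _ = q * (c * (q:ℝ)^(-(1/2):ℝ)) := by
        have : (q:ℝ)^(1/2:ℝ) = q * (q:ℝ)^(-(1/2):ℝ) := by
          rw [← Real.rpow_one_add' hq0.le (by norm_num)]; norm_num
        rw [this]; ring
    _ ≤ _ := by gcongr

end SW
end Part14

section Part15
open Finset Complex Filter Topology MeasureTheory

namespace SW

lemma pi_cond {q : ℕ} (a : ℤ) (N : ℕ) :
    (Icc 1 N).filter (fun p : ℕ => p.Prime ∧ (p : ℤ) % (q : ℤ) = a % (q : ℤ)) =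
    (Icc 1 N).filter (fun p : ℕ => p.Prime ∧ (p : ZMod q) = (a : ZMod q)) := by
  refine Finset.filter_congr fun p _ => and_congr_right fun _ => ?_
  have h := ZMod.intCast_eq_intCast_iff' (p : ℤ) a q
  rw [Int.cast_natCast] at h
  exact h.symm

lemma final (A : ℝ) (hA : 0 < A) : ∃ C : ℝ, 0 < C ∧ ∀ (q : ℕ) [NeZero q]
    (a : ZMod q) (x : ℝ), IsUnit a → 2 ≤ x →
    |(((Icc 1 ⌊x⌋₊).filter (fun p : ℕ => p.Prime ∧ (p : ZMod q) = a)).card : ℝ) -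
      (1 / (q.totient : ℝ)) * ∫ u in (2:ℝ)..x, 1 / Real.log u| ≤ C * (x / Real.log x ^ A) := by
  obtain ⟨C₁, hC₁, h₁⟩ := main_bound (⌈A⌉₊ + 1) (by omega) (by positivity : 0 < 1/(2*A))
  obtain ⟨D, hD, hsq⟩ := sqrt_pow_le ⌈A⌉₊
  obtain ⟨c, hc, htot⟩ := totient_lower
  refine ⟨C₁ + (1 + D + 2/c) + 27 * 9^A, by positivity, ?_⟩
  intro q _ a x ha hx
  have hq1 : (1:ℝ) ≤ q := by exact_mod_cast NeZero.one_le
  have hlpos : 0 < Real.log x := Real.log_pos (by linarith)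
  have hlA : 0 < Real.log x ^ A := by positivity
  have hx0 : 0 < x / Real.log x ^ A := by positivity
  have hfl : (⌊x⌋₊:ℝ) ≤ x := Nat.floor_le (by linarith)
  have hcount := count_le a ⌊x⌋₊
  have hint := int_log_le (le_refl (2:ℝ)) hx
  set P := (((Icc 1 ⌊x⌋₊).filter (fun p : ℕ => p.Prime ∧ (p : ZMod q) = a)).card : ℝ) with hP
  set Li := ∫ u in (2:ℝ)..x, 1 / Real.log u with hLi
  have hP0 : 0 ≤ P := by positivity
  have ht := tot_inv_le q
  rw [one_div]
  have hP1 : P ≤ x / q + 1 := hcount.trans (by gcongr)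
  have hdiff : |P - (q.totient:ℝ)⁻¹ * Li| ≤ P + (q.totient:ℝ)⁻¹ * Li := by
    have : 0 ≤ (q.totient:ℝ)⁻¹ * Li := mul_nonneg ht.1 hint.1
    rw [abs_le]; constructor <;> linarith
  have key : |P - (q.totient:ℝ)⁻¹ * Li| ≤ C₁ * (x / Real.log x ^ A) ∨
      |P - (q.totient:ℝ)⁻¹ * Li| ≤ (1 + D + 2/c) * (x / Real.log x ^ A) ∨
      |P - (q.totient:ℝ)⁻¹ * Li| ≤ (27 * 9^A) * (x / Real.log x ^ A) := by
    by_cases hx9 : 9 ≤ x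
    · have hl := one_le_log (by linarith : 3 ≤ x)
      have hlAc : Real.log x ^ A ≤ Real.log x ^ ⌈A⌉₊ := by
        rw [← Real.rpow_natCast]
        exact Real.rpow_le_rpow_of_exponent_le hl (Nat.le_ceil A)
      by_cases hq : (q:ℝ) ≤ Real.log x ^ (2*A)
      · left
        have h2 := h₁ q a x ha hx9
        rw [one_div] at h2
        refine h2.trans ?_
        have hqd : (q:ℝ)^(1/(2*A)) ≤ Real.log x := by
          calc (q:ℝ)^(1/(2*A)) ≤ (Real.log x ^ (2*A))^(1/(2*A)) :=
                Real.rpow_le_rpow (by linarith) hq (by positivity)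
            _ = Real.log x := by
              rw [← Real.rpow_mul hlpos.le, mul_one_div_cancel (by positivity), Real.rpow_one]
        calc _ ≤ C₁ * Real.log x * (x / Real.log x ^ (⌈A⌉₊ + 1)) := by
              refine mul_le_mul_of_nonneg_right ?_ (by positivity)
              exact mul_le_mul_of_nonneg_left hqd hC₁.le
          _ = C₁ * (x / Real.log x ^ ⌈A⌉₊) := by rw [pow_succ]; field_simp
          _ ≤ _ := by
            refine mul_le_mul_of_nonneg_left ?_ hC₁.le
            exact div_le_div_of_nonneg_left (by linarith) hlA hlAc
      · right; left
        push Not at hq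
        refine hdiff.trans ?_
        have hsqrt : Real.log x ^ A ≤ (q:ℝ)^(1/2:ℝ) := by
          calc Real.log x ^ A = (Real.log x ^ (2*A))^(1/2:ℝ) := by
                rw [← Real.rpow_mul hlpos.le]; congr 1; ring
            _ ≤ _ := Real.rpow_le_rpow (by positivity) hq.le (by norm_num)
        have hqA : Real.log x ^ A ≤ q := by
          refine hsqrt.trans ?_
          calc (q:ℝ)^(1/2:ℝ) ≤ (q:ℝ)^(1:ℝ) := Real.rpow_le_rpow_of_exponent_le hq1 (by norm_num)
            _ = q := Real.rpow_one _
        have b1 : x / q ≤ x / Real.log x ^ A := div_le_div_of_nonneg_left (by linarith) hlA hqA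
        have b2 : 1 ≤ D * (x / Real.log x ^ A) := by
          rw [← mul_div_assoc, le_div_iff₀ hlA, one_mul]
          have hs1 : 1 ≤ Real.sqrt x := Real.one_le_sqrt.2 (by linarith)
          calc _ ≤ _ := hlAc
            _ = 1 * Real.log x ^ ⌈A⌉₊ := (one_mul _).symm
            _ ≤ Real.sqrt x * Real.log x ^ ⌈A⌉₊ :=
              mul_le_mul_of_nonneg_right hs1 (by positivity)
            _ ≤ _ := hsq x (by linarith)
        have b3 : (q.totient:ℝ)⁻¹ * Li ≤ 2/c * (x / Real.log x ^ A) := by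
          have hcl : c * Real.log x ^ A ≤ q.totient :=
            (mul_le_mul_of_nonneg_left hsqrt hc.le).trans (htot q (NeZero.ne q))
          calc _ ≤ (c * Real.log x ^ A)⁻¹ * (2 * x) := by
                refine mul_le_mul (inv_anti₀ (by positivity) hcl) (by linarith) hint.1 (by positivity)
            _ = _ := by field_simp
        linarith
    · right; right
      push Not at hx9
      refine hdiff.trans ?_
      have b1 : x / q ≤ x := div_le_self (by linarith) hq1
      have b3 : (q.totient:ℝ)⁻¹ * Li ≤ 1 * Li := mul_le_mul_of_nonneg_right ht.2 hint.1
      have b4 : Real.log x ^ A ≤ 9 ^ A :=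
        Real.rpow_le_rpow hlpos.le (by linarith [Real.log_le_sub_one_of_pos (by linarith : 0 < x)]) hA.le
      have b5 : 27 ≤ 27 * 9^A * (x / Real.log x ^ A) := by
        rw [← mul_div_assoc, le_div_iff₀ hlA]
        have : (0:ℝ) < 9^A := by positivity
        nlinarith
      linarith
  have p1 : 0 < C₁ * (x / Real.log x ^ A) := by positivity
  have p2 : 0 < (1 + D + 2/c) * (x / Real.log x ^ A) := by positivity
  have p3 : 0 < (27 * 9^A) * (x / Real.log x ^ A) := by positivity
  rw [add_mul, add_mul]
  rcases key with h | h | h <;> linarith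

end SW
end Part15

open Finset in
/-- **Siegel–Walfisz theorem.** For fixed `A > 0` there is `C(A) > 0` such that for all
`q ≥ 1`, integers `a` coprime to `q`, and real `x ≥ 2`,
`|π(x;q,a) - (1/φ(q)) ∫₂ˣ du / log u| ≤ C(A) x / (log x)^A`. -/
theorem siegel_walfisz (A : ℝ) (hA : 0 < A) :
    ∃ C : ℝ, 0 < C ∧
      ∀ (q : ℕ) (a : ℤ), 1 ≤ q → Int.gcd a q = 1 → ∀ x : ℝ, 2 ≤ x →
        |(((Icc 1 ⌊x⌋₊).filter (fun p : ℕ => p.Prime ∧ (p : ℤ) % (q : ℤ) = a % (q : ℤ))).card : ℝ) -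
            (1 / (Nat.totient q : ℝ)) * ∫ u in (2:ℝ)..x, 1 / Real.log u| ≤
          C * x / Real.log x ^ A := by
  obtain ⟨C, hC, h⟩ := SW.final A hA
  refine ⟨C, hC, ?_⟩
  intro q a hq hgcd x hx
  have : NeZero q := ⟨by omega⟩
  have hu : IsUnit (a : ZMod q) := by
    rw [ZMod.coe_int_isUnit_iff_isCoprime, isCoprime_comm]
    exact Int.isCoprime_iff_gcd_eq_one.2 hgcd
  have := h q (a : ZMod q) x hu hx
  rw [SW.pi_cond, mul_div_assoc]
  exact this
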